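/- (Regularity at singular nodal points of eigenfunctions) Let u ∈ C(B₁) be a bounded viscosity solution of the eigenvalue equation |∇u|^γ F(x,D²u) = μ |u|^γ u in B₁ ⊂ ℝⁿ, where μ ∈ ℝ, γ ∈ (0,1), and F is (λ,Λ)-elliptic with ᾱ-Hölder coefficients. Suppose 0 is a singular nodal point, i.e. u(0) = 0 and |∇u(0)| = 0, and suppose |u(x)| ≤ K|x|^{1+α*} near 0 for some K > 0 and α* ∈ (0,1) (which holds by the known interior C^{1,α} regularity). Then the right-hand side satisfies |μ|u(x)|^γ u(x)| ≤ |μ| K^{1+γ} |x|^{(1+γ)(1+α*)} ≤ C̃|x|^{1+γ}, and consequently u is C^{1,α₀⁻} at the origin: for every β ∈ (0,α₀) there is C_β > 0 such that |u(x)| ≤ C_β |x|^{1+β} for all x ∈ B_{1/4}. -/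

import Mathlib

/-!
Near the origin the equation is a small perturbation, at every scale, of a homogeneous equation with
constant coefficients, and decay of order `1 + αs` is improved to order `1 + β` scale by scale.

If `|u x| ≤ K' ‖x‖ ^ (1 + αs)` on a ball, the rescaling `v y = u (r y) / (K' r ^ (1 + αs))` satisfies
`|v y| ≤ ‖y‖ ^ (1 + αs)` and an equation `|∇v|^γ G(D²v) = O(r²)`, where `G` is elliptic with
constant coefficients up to an error of order `r ^ αb`: the right-hand side `μ |u|^γ u` has the same
homogeneity as the left-hand side, so it only contributes `|μ| r²` (`halfSol_rescale`). Since the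
constants `K'` of the iteration decay like `r ^ (β - αs)` with `β < 1`, the Hessian scale
`K' r ^ (αs - 1)` stays bounded below, which keeps the `+ 1` in the coefficient condition harmless.

`improvement_of_decay` shows by compactness that such a `v` with small enough errors satisfies
`|v| ≤ ρ ^ (1 + β)` on a fixed ball of radius `ρ`. It rests on the following facts.

* Equicontinuity (`holder_estimate`): the Ishii–Lions method of doubling variables with the concave
  penalty `L √‖a - b‖`. For `L` large, the slopes at the contact points are large, so the
  degenerate factor `|∇v|^γ` can be divided out. The second order information comes from
  `theorem_on_sums`, applied to sup-convolutions. As these are semiconvex, it follows from the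
  combination of Alexandrov's theorem and Jensen's lemma in `jensen_point`, which in turn uses
  Rademacher's theorem and Lebesgue density points.
* Stability (`limit_jet`): limits of such functions satisfy `G(D²w) = 0` against test functions with
  nonvanishing gradient.
* Removal of the restriction on the gradient (`jet_of_nonzero_slope`), an argument of Imbert and
  Silvestre.
* The interior `C^{1,α₀}` estimate, assumed for solutions of `G(D²w) = 0`, applied to the limit:
  `C₀ (2ρ) ^ (1 + α₀) < ρ ^ (1 + β)` for small `ρ` because `β < α₀`.

`decay_step` is one scale of the iteration, and the theorem follows by induction over the radii
`ρ ^ k * r₁`.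
-/

open Metric Set
open scoped RealInnerProductSpace

noncomputable section

attribute [local instance] Matrix.normedAddCommGroup

/-- Euclidean space ℝⁿ. -/
abbrev En (n : ℕ) := EuclideanSpace ℝ (Fin n)

/-- The Hessian matrix of `ψ` at `x`, given by second iterated Fréchet derivatives
in coordinate directions. -/
def hessMat {n : ℕ} (ψ : En n → ℝ) (x : En n) : Matrix (Fin n) (Fin n) ℝ :=
  Matrix.of fun i j =>
    iteratedFDeriv ℝ 2 ψ x ![EuclideanSpace.single i 1, EuclideanSpace.single j 1]

/-- The Pucci minimal operator `M⁻_{λ,Λ}`. -/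
def pucciMinus {n : ℕ} (lam Lam : ℝ) (M : Matrix (Fin n) (Fin n) ℝ) : ℝ :=
  sInf { t | ∃ A : Matrix (Fin n) (Fin n) ℝ, A.IsSymm ∧
      (A - lam • (1 : Matrix (Fin n) (Fin n) ℝ)).PosSemidef ∧
      (Lam • (1 : Matrix (Fin n) (Fin n) ℝ) - A).PosSemidef ∧ t = (A * M).trace }

/-- The Pucci maximal operator `M⁺_{λ,Λ}`. -/
def pucciPlus {n : ℕ} (lam Lam : ℝ) (M : Matrix (Fin n) (Fin n) ℝ) : ℝ :=
  - pucciMinus lam Lam (-M)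

/-- `(λ,Λ)`-uniform ellipticity for a variable coefficient operator on `B₁`,
normalized so that `F(x,0) = 0`. -/
def IsUnifElliptic {n : ℕ} (lam Lam : ℝ)
    (F : En n → Matrix (Fin n) (Fin n) ℝ → ℝ) : Prop :=
  (∀ x ∈ ball (0 : En n) 1, ∀ M N : Matrix (Fin n) (Fin n) ℝ, M.IsSymm → N.IsSymm →
      pucciMinus lam Lam (M - N) ≤ F x M - F x N ∧
        F x M - F x N ≤ pucciPlus lam Lam (M - N)) ∧
    ∀ x ∈ ball (0 : En n) 1, F x 0 = 0

/-- `(λ,Λ)`-uniform ellipticity for a constant coefficient operator, normalized. -/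
def IsUnifEllipticConst {n : ℕ} (lam Lam : ℝ)
    (G : Matrix (Fin n) (Fin n) ℝ → ℝ) : Prop :=
  (∀ M N : Matrix (Fin n) (Fin n) ℝ, M.IsSymm → N.IsSymm →
      pucciMinus lam Lam (M - N) ≤ G M - G N ∧ G M - G N ≤ pucciPlus lam Lam (M - N)) ∧
    G 0 = 0

/-- A degeneracy law with exponent `γ`: `λ̃|b|^γ ≤ D(x,b) ≤ Λ̃|b|^γ`. -/
def IsDegeneracyLaw {n : ℕ} (tlam tLam γ : ℝ) (Dg : En n → En n → ℝ) : Prop :=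
  ∀ x ∈ ball (0 : En n) 1, ∀ b : En n,
    tlam * ‖b‖ ^ γ ≤ Dg x b ∧ Dg x b ≤ tLam * ‖b‖ ^ γ

/-- Viscosity solution of `G(x, ∇u, D²u) = f(x)` on a set `Ω`. -/
def IsViscositySolutionOn {n : ℕ} (Ω : Set (En n))
    (G : En n → En n → Matrix (Fin n) (Fin n) ℝ → ℝ) (f : En n → ℝ) (u : En n → ℝ) : Prop :=
  (∀ ψ : En n → ℝ, ContDiff ℝ 2 ψ → ∀ x₀ ∈ Ω,
      IsLocalMax (fun x => u x - ψ x) x₀ →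
        f x₀ ≤ G x₀ (gradient ψ x₀) (hessMat ψ x₀)) ∧
  (∀ ψ : En n → ℝ, ContDiff ℝ 2 ψ → ∀ x₀ ∈ Ω,
      IsLocalMin (fun x => u x - ψ x) x₀ →
        G x₀ (gradient ψ x₀) (hessMat ψ x₀) ≤ f x₀)

/-- Interior `C^{1,α₀}` estimate, with constant `C₀`, for viscosity solutions of
constant-coefficient homogeneous `(λ,Λ)`-elliptic equations `G(D²h) = 0` in `B_{3/4}`
that vanish to first order at the origin. -/
def InteriorC1AlphaEstimate (n : ℕ) (lam Lam α₀ C₀ : ℝ) : Prop :=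
  ∀ G : Matrix (Fin n) (Fin n) ℝ → ℝ, IsUnifEllipticConst lam Lam G →
    ∀ h : En n → ℝ, ContinuousOn h (ball (0 : En n) (3/4)) →
      IsViscositySolutionOn (ball (0 : En n) (3/4)) (fun _ _ M => G M) (fun _ => 0) h →
      (∀ x ∈ ball (0 : En n) (3/4), |h x| ≤ 1) →
      h 0 = 0 → gradient h 0 = 0 →
      ∀ r : ℝ, 0 < r → r ≤ 1/2 → ∀ x ∈ ball (0 : En n) r, |h x| ≤ C₀ * r ^ (1 + α₀)

/-! ### Density points and second order expansions -/

open MeasureTheory Filter Topology in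
/-- Almost every point of a set `A` of positive measure is a point where a Lipschitz map on `A`
is differentiable within `A` (Rademacher) and a density point of `A`; near a density point `A`
meets every ball whose radius is a fixed proportion of its distance to the point. -/
theorem exists_density_differentiable_point
    {E : Type*} [NormedAddCommGroup E] [InnerProductSpace ℝ E] [FiniteDimensional ℝ E]
    [MeasurableSpace E] [BorelSpace E] (μ : Measure E) [μ.IsAddHaarMeasure]
    {A : Set E} (hA : μ A ≠ 0) {P : E → E} {C : NNReal} (hP : LipschitzOnWith C P A) :
    ∃ z ∈ A, DifferentiableWithinAt ℝ P A z ∧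
      ∀ σ > 0, ∃ r > 0, ∀ ρ : ℝ, 0 < ρ → ρ < r → ∀ x, ‖x - z‖ ≤ ρ → ∃ a ∈ A, ‖x - a‖ ≤ σ * ρ := by
  have h1 : ∀ᵐ x ∂μ, x ∈ A → DifferentiableWithinAt ℝ P A x :=
    hP.ae_differentiableWithinAt_of_mem
  have h2 := Besicovitch.ae_tendsto_measure_inter_div μ A
  have h2' : μ ({x | ¬ Tendsto (fun r => μ (A ∩ closedBall x r) / μ (closedBall x r)) (𝓝[>] 0)
      (𝓝 1)} ∩ A) = 0 :=
    le_antisymm ((Measure.le_restrict_apply _ _).trans (le_of_eq h2)) zero_le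
  obtain ⟨z, hzA, hz⟩ : ∃ z ∈ A, ¬ ((¬ (z ∈ A → DifferentiableWithinAt ℝ P A z)) ∨
      ((¬ Tendsto (fun r => μ (A ∩ closedBall z r) / μ (closedBall z r)) (𝓝[>] 0)
      (𝓝 1)) ∧ z ∈ A)) := by
    by_contra hcon
    refine hA (measure_mono_null (fun x hx => ?_) (measure_union_null h1 h2'))
    by_contra hx2
    exact hcon ⟨x, hx, hx2⟩
  simp only [not_or, not_not, not_and] at hz
  refine ⟨z, hzA, hz.1 hzA, ?_⟩
  have hdens : Tendsto (fun r => μ (A ∩ closedBall z r) / μ (closedBall z r)) (𝓝[>] 0) (𝓝 1) := by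
    by_contra h
    exact hz.2 h hzA
  intro σ hσ
  -- the proportion of `closedBall z ((1 + σ) ρ)` occupied by a ball of radius `σ ρ`
  set d := Module.finrank ℝ E
  set κ : ℝ := (σ / (1 + σ)) ^ d with hκ
  have hκ0 : 0 < κ := by positivity
  have hev : ∀ᶠ r in 𝓝[>] (0:ℝ),
      ENNReal.ofReal (1 - κ) < μ (A ∩ closedBall z r) / μ (closedBall z r) := by
    apply hdens.eventually_const_lt
    rw [ENNReal.ofReal_lt_one]; linarith
  rw [eventually_nhdsWithin_iff, Metric.eventually_nhds_iff] at hev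
  obtain ⟨r, hr, hev⟩ := hev
  refine ⟨r / (1 + σ), by positivity, ?_⟩
  intro ρ hρ hρr x hx
  by_contra hno
  push Not at hno
  have hR : 0 < (1 + σ) * ρ := by positivity
  have h3 := hev (y := (1 + σ) * ρ) (by
    rw [Real.dist_eq, sub_zero, abs_of_pos hR]
    rw [lt_div_iff₀ (by positivity)] at hρr; linarith) hR
  have hsub : closedBall x (σ * ρ) ⊆ closedBall z ((1 + σ) * ρ) := by
    apply closedBall_subset_closedBall'
    rw [dist_eq_norm]; linarith
  have hsub2 : A ∩ closedBall z ((1 + σ) * ρ) ⊆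
      closedBall z ((1 + σ) * ρ) \ closedBall x (σ * ρ) := by
    rintro a ⟨ha, ha'⟩
    refine ⟨ha', fun hax => ?_⟩
    have := hno a ha
    rw [mem_closedBall, dist_comm, dist_eq_norm] at hax
    linarith
  have hmeas : μ (A ∩ closedBall z ((1 + σ) * ρ)) ≤
      μ (closedBall z ((1 + σ) * ρ)) - μ (closedBall x (σ * ρ)) := by
    refine (measure_mono hsub2).trans (le_of_eq ?_)
    exact measure_sdiff hsub measurableSet_closedBall.nullMeasurableSet
      measure_closedBall_lt_top.ne
  rw [Measure.addHaar_closedBall' μ x (by positivity : 0 ≤ σ * ρ)] at hmeas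
  rw [Measure.addHaar_closedBall' μ z hR.le] at hmeas h3
  set b := μ (closedBall (0:E) 1)
  have hb0 : b ≠ 0 := (measure_closedBall_pos μ _ one_pos).ne'
  have hbt : b ≠ ⊤ := measure_closedBall_lt_top.ne
  have hpow : (σ * ρ) ^ d = κ * ((1 + σ) * ρ) ^ d := by
    rw [hκ, ← mul_pow]; congr 1; field_simp
  have hκ1 : κ ≤ 1 := by
    apply pow_le_one₀ (by positivity)
    rw [div_le_one (by positivity)]; linarith
  have hD : 0 < ((1 + σ) * ρ) ^ d := by positivity
  have h4 : ENNReal.ofReal (((1 + σ) * ρ) ^ d) * b - ENNReal.ofReal ((σ * ρ) ^ d) * b =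
      ENNReal.ofReal (1 - κ) * (ENNReal.ofReal (((1 + σ) * ρ) ^ d) * b) := by
    rw [← ENNReal.sub_mul (fun _ _ => hbt), ← ENNReal.ofReal_sub _ (by positivity), ← mul_assoc,
      ← ENNReal.ofReal_mul (by linarith)]
    congr 2
    rw [hpow]; ring
  rw [h4] at hmeas
  refine absurd h3 (not_lt.mpr ?_)
  apply ENNReal.div_le_of_le_mul
  exact hmeas


open Filter Topology in
/-- Second order expansion at a differentiability and density point `z` of the set `A` on which
`f` is touched from both sides by paraboloids with slopes `P`: the segment from `z` to `z + h` is
cut into `m` pieces, each division point is replaced by a nearby point of `A`, and the increments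
`⟪P a, h / m⟫` add up to a Riemann sum of `⟪T (s h), h⟫`. -/
theorem second_order_expansion
    {E : Type*} [NormedAddCommGroup E] [InnerProductSpace ℝ E]
    {f : E → ℝ} {A : Set E} {P : E → E} {D r : ℝ} {z0 z : E} (hD : 0 ≤ D)
    (hAr : A ⊆ ball z0 r)
    (htwo : ∀ y ∈ A, ∀ ζ ∈ ball z0 r, |f ζ - f y - ⟪P y, ζ - y⟫| ≤ D * ‖ζ - y‖ ^ 2)
    (hz : z ∈ A) {T : E →L[ℝ] E} (hT : HasFDerivWithinAt P T A z)
    (hd : ∀ σ > 0, ∃ r > 0, ∀ ρ : ℝ, 0 < ρ → ρ < r → ∀ x, ‖x - z‖ ≤ ρ →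
      ∃ a ∈ A, ‖x - a‖ ≤ σ * ρ) :
    ∀ σ > 0, ∀ᶠ h in 𝓝 (0 : E),
      |f (z + h) - f z - ⟪P z, h⟫ - 1 / 2 * ⟪T h, h⟫| ≤ σ * ‖h‖ ^ 2 := by
  intro σ hσ
  obtain ⟨m, hm⟩ := exists_nat_gt ((2 * ‖T‖ + 5 * D) * 2 / σ)
  have hm0 : 0 < (m : ℝ) := lt_of_le_of_lt (by positivity) hm
  have hm1 : (1:ℝ) ≤ m := by
    have : 0 < m := by exact_mod_cast hm0
    exact_mod_cast this
  have hmσ : (2 * ‖T‖ + 5 * D) / m ≤ σ / 2 := by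
    rw [div_lt_iff₀ hσ] at hm
    rw [div_le_iff₀ hm0]; linarith
  have hzr : 0 < r - dist z z0 := by have := hAr hz; rw [mem_ball] at this; linarith
  obtain ⟨r1, hr1, hd1⟩ := hd (1 / m) (by positivity)
  have hdiff := (hasFDerivWithinAt_iff_isLittleO.mp hT).def (c := σ / 4) (by positivity)
  rw [eventually_nhdsWithin_iff, Metric.eventually_nhds_iff] at hdiff
  obtain ⟨r2, hr2, hdiff⟩ := hdiff
  rw [Metric.eventually_nhds_iff]
  refine ⟨min (r - dist z z0) (min r1 (r2 / 3)), by positivity, ?_⟩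
  intro h hh
  rw [dist_zero_right, lt_min_iff, lt_min_iff] at hh
  obtain ⟨hh0, hh1, hh2⟩ := hh
  rcases eq_or_ne h 0 with rfl | hne
  · simp
  have hhpos : 0 < ‖h‖ := norm_pos_iff.mpr hne
  set x : ℕ → E := fun i => z + ((i : ℝ) / m) • h with hx
  have hxin : ∀ i ≤ m, ‖x i - z‖ ≤ ‖h‖ := by
    intro i hi
    have h1 : (i : ℝ) / m ≤ 1 := by
      rw [div_le_one hm0]; exact_mod_cast hi
    have h2 : 0 ≤ (i : ℝ) / m := by positivity
    simp only [hx, add_sub_cancel_left, norm_smul, Real.norm_eq_abs, abs_of_nonneg h2]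
    nlinarith
  have hxball : ∀ i ≤ m, x i ∈ ball z0 r := by
    intro i hi
    have h1 := hxin i hi
    have h2 := dist_triangle (x i) z z0
    rw [dist_eq_norm (x i) z] at h2
    rw [mem_ball]; linarith
  have hstep : ∀ i < m, |f (x (i + 1)) - f (x i) - (1 / m * ⟪P z, h⟫ + i / m ^ 2 * ⟪T h, h⟫)| ≤
      (σ / 2 + (‖T‖ + 5 * D) / m) * ‖h‖ ^ 2 / m := by
    intro i hi
    obtain ⟨a, haA, ha⟩ := hd1 ‖h‖ hhpos hh1 (x i) (hxin i hi.le)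
    have e1 := htwo a haA (x (i + 1)) (hxball _ hi)
    have e2 := htwo a haA (x i) (hxball _ hi.le)
    have hstepv : x (i + 1) - x i = (1 / (m : ℝ)) • h := by
      simp only [hx]; push_cast
      rw [add_sub_add_left_eq_sub, ← sub_smul]; congr 1; field_simp; ring
    have ha1 : ‖x (i + 1) - a‖ ≤ 2 * (1 / m * ‖h‖) := by
      have : x (i + 1) - a = (1 / (m : ℝ)) • h + (x i - a) := by rw [← hstepv]; abel
      rw [this]
      refine (norm_add_le _ _).trans ?_
      rw [norm_smul, Real.norm_eq_abs, abs_of_pos (by positivity)]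
      linarith
    have haz : ‖a - z‖ ≤ 2 * ‖h‖ := by
      have h1 : a - z = (x i - z) - (x i - a) := by abel
      rw [h1]
      refine (norm_sub_le _ _).trans ?_
      have h2 : 1 / m * ‖h‖ ≤ ‖h‖ := by
        have : 1 / (m : ℝ) ≤ 1 := by rw [div_le_one hm0]; exact hm1
        nlinarith
      linarith [hxin i hi.le]
    have e3 := hdiff (y := a) (by rw [dist_eq_norm]; linarith) haA
    have e4 : |⟪P a - P z - T (a - z), h⟫| ≤ σ / 4 * (2 * ‖h‖) * ‖h‖ := by
      refine (abs_real_inner_le_norm _ _).trans ?_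
      gcongr
      exact e3.trans (by gcongr)
    have e5 : |⟪T (a - x i), h⟫| ≤ ‖T‖ * (1 / m * ‖h‖) * ‖h‖ := by
      refine (abs_real_inner_le_norm _ _).trans ?_
      gcongr
      refine (T.le_opNorm _).trans ?_
      gcongr
      rwa [norm_sub_rev]
    have e6 : ⟪P a, x (i + 1) - a⟫ - ⟪P a, x i - a⟫ = 1 / m * ⟪P a, h⟫ := by
      rw [← inner_sub_right, sub_sub_sub_cancel_right, hstepv, inner_smul_right]
    have e7 : ⟪P a, h⟫ = ⟪P a - P z - T (a - z), h⟫ + ⟪P z, h⟫ + ⟪T (a - x i), h⟫ +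
        i / m * ⟪T h, h⟫ := by
      have : T (a - z) = T (a - x i) + ((i : ℝ) / m) • T h := by
        rw [← map_smul, ← map_add]; congr 1; simp only [hx]; abel
      rw [this]
      simp only [inner_sub_left, inner_add_left, real_inner_smul_left]
      ring
    have e8 : D * ‖x (i + 1) - a‖ ^ 2 ≤ D * (2 * (1 / m * ‖h‖)) ^ 2 := by gcongr
    have e9 : D * ‖x i - a‖ ^ 2 ≤ D * (1 / m * ‖h‖) ^ 2 := by gcongr
    have key : f (x (i + 1)) - f (x i) - (1 / m * ⟪P z, h⟫ + i / m ^ 2 * ⟪T h, h⟫) =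
        (f (x (i + 1)) - f a - ⟪P a, x (i + 1) - a⟫) - (f (x i) - f a - ⟪P a, x i - a⟫)
        + 1 / m * ⟪P a - P z - T (a - z), h⟫ + 1 / m * ⟪T (a - x i), h⟫ := by
      have : (i : ℝ) / m ^ 2 = 1 / m * (i / m) := by field_simp
      rw [this]
      linear_combination e6 + (1 / (m:ℝ)) * e7
    have hrhs : (σ / 2 + (‖T‖ + 5 * D) / m) * ‖h‖ ^ 2 / m =
        D * (2 * (1 / m * ‖h‖)) ^ 2 + D * (1 / m * ‖h‖) ^ 2
        + 1 / m * (σ / 4 * (2 * ‖h‖) * ‖h‖) + 1 / m * (‖T‖ * (1 / m * ‖h‖) * ‖h‖) := by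
      field_simp; ring
    have hmi : 0 < 1 / (m : ℝ) := by positivity
    have f4 := mul_le_mul_of_nonneg_left e4 hmi.le
    have f5 := mul_le_mul_of_nonneg_left e5 hmi.le
    rw [← abs_of_pos hmi, ← abs_mul, abs_of_pos hmi] at f4 f5
    rw [key, hrhs]
    rw [abs_le] at *
    constructor <;> linarith
  have hsum : |∑ i ∈ Finset.range m,
      (f (x (i + 1)) - f (x i) - (1 / m * ⟪P z, h⟫ + i / m ^ 2 * ⟪T h, h⟫))| ≤
      (σ / 2 + (‖T‖ + 5 * D) / m) * ‖h‖ ^ 2 := by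
    refine (Finset.abs_sum_le_sum_abs _ _).trans ?_
    refine (Finset.sum_le_sum fun i hi => hstep i (Finset.mem_range.mp hi)).trans (le_of_eq ?_)
    rw [Finset.sum_const, Finset.card_range, nsmul_eq_mul]
    field_simp
  have hgauss : ∀ k : ℕ, ∑ i ∈ Finset.range k, (i : ℝ) = k * (k - 1) / 2 := by
    intro k
    induction k with
    | zero => simp
    | succ k ih => rw [Finset.sum_range_succ, ih]; push_cast; ring
  rw [Finset.sum_sub_distrib, Finset.sum_range_sub (fun i => f (x i)), Finset.sum_add_distrib,
    Finset.sum_const, Finset.card_range, nsmul_eq_mul, ← Finset.sum_mul, ← Finset.sum_div,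
    hgauss] at hsum
  have hxm : x m = z + h := by simp only [hx]; rw [div_self hm0.ne', one_smul]
  have hx0 : x 0 = z := by simp [hx]
  rw [hxm, hx0] at hsum
  have e10 : |⟪T h, h⟫| ≤ ‖T‖ * ‖h‖ * ‖h‖ :=
    (abs_real_inner_le_norm _ _).trans (by gcongr; exact T.le_opNorm _)
  have e11 : f (z + h) - f z - ⟪P z, h⟫ - 1 / 2 * ⟪T h, h⟫ =
      (f (z + h) - f z - (m * (1 / m * ⟪P z, h⟫) + (m * (m - 1) / 2) / m ^ 2 * ⟪T h, h⟫))
      - 1 / (2 * m) * ⟪T h, h⟫ := by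
    field_simp; ring
  have e12 : |1 / (2 * m) * ⟪T h, h⟫| ≤ ‖T‖ / m * ‖h‖ ^ 2 := by
    rw [abs_mul, abs_of_pos (by positivity : 0 < 1 / (2 * (m:ℝ)))]
    calc 1 / (2 * (m:ℝ)) * |⟪T h, h⟫| ≤ 1 / (2 * (m:ℝ)) * (‖T‖ * ‖h‖ * ‖h‖) := by gcongr
      _ = (1 / 2) * (‖T‖ / m * ‖h‖ ^ 2) := by field_simp
      _ ≤ ‖T‖ / m * ‖h‖ ^ 2 := by
        have : 0 ≤ ‖T‖ / m * ‖h‖ ^ 2 := by positivity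
        linarith
  rw [e11]
  refine (abs_sub _ _).trans ((add_le_add hsum e12).trans ?_)
  have e13 : (σ / 2 + (‖T‖ + 5 * D) / m) * ‖h‖ ^ 2 + ‖T‖ / m * ‖h‖ ^ 2 =
      (σ / 2 + (2 * ‖T‖ + 5 * D) / m) * ‖h‖ ^ 2 := by ring
  rw [e13]
  gcongr
  linarith

/-! ### Alexandrov's theorem and Jensen's lemma -/

/-- Slopes of two-sided touching paraboloids depend in a Lipschitz way on the base point. -/
theorem touching_slope_lipschitz
    {E : Type*} [NormedAddCommGroup E] [InnerProductSpace ℝ E]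
    {f : E → ℝ} {A : Set E} {P : E → E} {D r : ℝ} {z0 : E} (hD : 0 ≤ D)
    (hAr : A ⊆ ball z0 (r / 3))
    (htwo : ∀ y ∈ A, ∀ ζ ∈ ball z0 r, |f ζ - f y - ⟪P y, ζ - y⟫| ≤ D * ‖ζ - y‖ ^ 2) :
    LipschitzOnWith (6 * D).toNNReal P A := by
  apply LipschitzOnWith.of_dist_le_mul
  intro z hz y hy
  rw [Real.coe_toNNReal _ (by positivity), dist_eq_norm, dist_eq_norm]
  rcases eq_or_ne (P z - P y) 0 with h0 | h0
  · rw [h0, norm_zero]; positivity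
  have hn : 0 < ‖P z - P y‖ := norm_pos_iff.mpr h0
  have hz' := hAr hz
  have hy' := hAr hy
  rw [mem_ball] at hz' hy'
  rcases eq_or_ne z y with rfl | hne
  · simp at h0
  have hd : 0 < ‖z - y‖ := norm_pos_iff.mpr (sub_ne_zero.mpr hne)
  set h : E := (‖z - y‖ / ‖P z - P y‖) • (P z - P y) with hh
  have hnh : ‖h‖ = ‖z - y‖ := by
    rw [hh, norm_smul, Real.norm_eq_abs, abs_of_nonneg (by positivity)]; field_simp
  have hzy : ‖z - y‖ < 2 * (r / 3) := by
    rw [← dist_eq_norm]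
    linarith [dist_triangle_right z y z0]
  have hb1 : y + h ∈ ball z0 r := by
    rw [mem_ball]
    have h1 := dist_triangle (y + h) y z0
    rw [dist_eq_norm (y + h) y, add_sub_cancel_left, hnh] at h1
    linarith
  have hb2 : y ∈ ball z0 r := by rw [mem_ball]; linarith [dist_nonneg (x := y) (y := z0)]
  have e1 := htwo y hy _ hb1
  have e2 := htwo z hz _ hb1
  have e3 := htwo z hz _ hb2
  rw [add_sub_cancel_left, hnh] at e1
  rw [norm_sub_rev y z] at e3
  have e4 : ‖y + h - z‖ ≤ 2 * ‖z - y‖ := by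
    have : y + h - z = h - (z - y) := by abel
    rw [this]
    refine (norm_sub_le _ _).trans ?_
    rw [hnh]; linarith
  have e5 : D * ‖y + h - z‖ ^ 2 ≤ D * (2 * ‖z - y‖) ^ 2 := by gcongr
  have e6 : ⟪P z, y + h - z⟫ = ⟪P z, y - z⟫ + ⟪P z, h⟫ := by
    rw [← inner_add_right]; congr 1; abel
  have e7 : ⟪P z, h⟫ - ⟪P y, h⟫ = ‖z - y‖ * ‖P z - P y‖ := by
    rw [← inner_sub_left, hh, inner_smul_right, real_inner_self_eq_norm_sq]; field_simp
  rw [abs_le] at e1 e2 e3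
  have : ‖z - y‖ * ‖P z - P y‖ ≤ ‖z - y‖ * (6 * D * ‖z - y‖) := by nlinarith
  exact le_of_mul_le_mul_left this hd

/-- If an upper and a lower paraboloid touch at the same point, their slopes agree. -/
theorem slope_unique {E : Type*} [NormedAddCommGroup E] [InnerProductSpace ℝ E]
    {p q : E} {D r : ℝ} (hr : 0 < r) (hD : 0 ≤ D)
    (h : ∀ h : E, ‖h‖ < r → ⟪p, h⟫ ≤ ⟪q, h⟫ + D * ‖h‖ ^ 2) : p = q := by
  by_contra hne
  have hn : 0 < ‖p - q‖ := norm_pos_iff.mpr (sub_ne_zero.mpr hne)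
  set s : ℝ := min (r / (2 * ‖p - q‖)) (1 / (2 * (D + 1))) with hs
  have hs0 : 0 < s := by positivity
  have h1 := h (s • (p - q)) (by
    rw [norm_smul, Real.norm_eq_abs, abs_of_pos hs0]
    have : s * ‖p - q‖ ≤ r / (2 * ‖p - q‖) * ‖p - q‖ := by gcongr; exact min_le_left _ _
    have h2 : r / (2 * ‖p - q‖) * ‖p - q‖ = r / 2 := by field_simp
    linarith)
  have h2 : ⟪p, s • (p - q)⟫ - ⟪q, s • (p - q)⟫ = s * ‖p - q‖ ^ 2 := by
    rw [← inner_sub_left, inner_smul_right, real_inner_self_eq_norm_sq]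
  rw [norm_smul, Real.norm_eq_abs, abs_of_pos hs0] at h1
  have h3 : D * s ≤ 1 / 2 := by
    have h4 : s * (2 * (D + 1)) ≤ 1 := by
      have : s ≤ 1 / (2 * (D + 1)) := min_le_right _ _
      rwa [le_div_iff₀ (by positivity)] at this
    nlinarith
  have h5 : 0 < s * ‖p - q‖ ^ 2 := by positivity
  have h6 : s * ‖p - q‖ ^ 2 ≤ (D * s) * (s * ‖p - q‖ ^ 2) := by nlinarith
  nlinarith

open MeasureTheory Filter Topology in
/-- **Jensen's lemma with Alexandrov's theorem.** Near a local maximum `z0` of a function that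
is supported from below by paraboloids of fixed opening at every point, there is a point with a
second order expansion whose slope is small and whose quadratic part is almost nonpositive.

The slopes of the paraboloids `⟪q, ·⟫ + c ‖·‖²` touching `f` from above cover a ball; since they
are a Lipschitz function of the touching point, the set of touching points is not null. -/
theorem jensen_point
    {E : Type*} [NormedAddCommGroup E] [InnerProductSpace ℝ E] [FiniteDimensional ℝ E]
    {f : E → ℝ} (hf : Continuous f) {C : ℝ} (hC : 0 ≤ C)
    (hlow : ∀ z, ∃ p, ∀ ζ, f z + ⟪p, ζ - z⟫ - C * ‖ζ - z‖ ^ 2 ≤ f ζ)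
    {z0 : E} (hmax : ∀ᶠ z in 𝓝 z0, f z ≤ f z0) {η : ℝ} (hη : 0 < η) :
    ∃ (z p : E) (T : E →L[ℝ] E), ‖z - z0‖ ≤ η ∧ ‖p‖ ≤ η ∧
      (∀ σ > 0, ∀ᶠ h in 𝓝 (0 : E),
        |f (z + h) - f z - ⟪p, h⟫ - 1 / 2 * ⟪T h, h⟫| ≤ σ * ‖h‖ ^ 2) ∧
      ∀ᶠ h in 𝓝 (0 : E), f (z + h) ≤ f z + ⟪p, h⟫ + η * ‖h‖ ^ 2 := by
  let _ : MeasurableSpace E := borel E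
  have : BorelSpace E := ⟨rfl⟩
  rw [Metric.eventually_nhds_iff] at hmax
  obtain ⟨r0, hr0, hmax⟩ := hmax
  set c := min η (1 / 4) with hc
  have hc0 : 0 < c := by positivity
  have hcη : c ≤ η := min_le_left _ _
  have hc4 : c ≤ 1 / 4 := min_le_right _ _
  set r := min (r0 / 2) η with hrdef
  have hr : 0 < r := by positivity
  have hrη : r ≤ η := min_le_right _ _
  have hrr0 : r < r0 := by have : r ≤ r0 / 2 := min_le_left _ _; linarith
  set δ := c * r / 4 with hδdef
  have hδ : 0 < δ := by positivity
  set A : Set E := {z | z ∈ ball z0 (r / 3) ∧ ∃ P : E, ‖P - (2 * c) • (z - z0)‖ ≤ δ ∧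
    ∀ ζ ∈ ball z0 r, f ζ ≤ f z + ⟪P, ζ - z⟫ + c * ‖ζ - z‖ ^ 2} with hA
  choose! P hP using fun z (hz : z ∈ A) => hz.2
  have hAball : A ⊆ ball z0 (r / 3) := fun z hz => hz.1
  have htwo : ∀ y ∈ A, ∀ ζ ∈ ball z0 r, |f ζ - f y - ⟪P y, ζ - y⟫| ≤ (C + c) * ‖ζ - y‖ ^ 2 := by
    intro y hy ζ hζ
    obtain ⟨p, hp⟩ := hlow y
    have hup := (hP y hy).2
    have hyr := hAball hy
    rw [mem_ball] at hyr
    have : p = P y := by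
      apply slope_unique (r := r / 2) (D := C + c) (by positivity) (by positivity)
      intro h hh
      have h1 := hp (y + h)
      have h2 := hup (y + h) (by
        rw [mem_ball]
        have h3 := dist_triangle (y + h) y z0
        rw [dist_eq_norm (y + h) y, add_sub_cancel_left] at h3
        linarith)
      rw [add_sub_cancel_left] at h1 h2
      nlinarith
    subst this
    have h1 := hp ζ
    have h2 := hup ζ hζ
    have h3 : 0 ≤ ‖ζ - y‖ ^ 2 := by positivity
    rw [abs_le]
    constructor <;> nlinarith
  have hLip := touching_slope_lipschitz (by positivity : 0 ≤ C + c) hAball htwo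
  -- every slope in `ball 0 δ` is attained, after removing the slope of `c ‖z - z0‖²`
  have hsurj : ball (0 : E) δ ⊆ (fun z => P z - (2 * c) • (z - z0)) '' A := by
    intro q hq
    rw [mem_ball_zero_iff] at hq
    obtain ⟨z, hz, hzmax⟩ := (isCompact_closedBall z0 r).exists_isMaxOn
      ⟨z0, mem_closedBall_self hr.le⟩
      (f := fun z => f z - c * ‖z - z0‖ ^ 2 - ⟪q, z - z0⟫) (by fun_prop)
    have hz0 := hzmax (mem_closedBall_self hr.le)
    simp only [sub_self, norm_zero, inner_zero_right, mem_ofPred_eq] at hz0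
    have hfz : f z ≤ f z0 := hmax (by rw [mem_closedBall] at hz; linarith)
    have hin : -⟪q, z - z0⟫ ≤ δ * ‖z - z0‖ := by
      have := abs_real_inner_le_norm q (z - z0)
      rw [abs_le] at this
      nlinarith [norm_nonneg (z - z0)]
    have hzr : ‖z - z0‖ < r / 3 := by
      by_contra hcon
      push Not at hcon
      have : 0 < ‖z - z0‖ := by linarith
      have h1 : c * ‖z - z0‖ ^ 2 ≤ δ * ‖z - z0‖ := by nlinarith
      have h2 : c * ‖z - z0‖ ≤ δ := by
        refine le_of_mul_le_mul_right ?_ this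
        nlinarith
      have h3 : c * (r / 3) ≤ c * ‖z - z0‖ := by gcongr
      have : 0 < c * r := by positivity
      rw [hδdef] at h2
      linarith
    have hup : ∀ ζ ∈ ball z0 r,
        f ζ ≤ f z + ⟪q + (2 * c) • (z - z0), ζ - z⟫ + c * ‖ζ - z‖ ^ 2 := by
      intro ζ hζ
      have h1 := hzmax (ball_subset_closedBall hζ)
      simp only [mem_ofPred_eq] at h1
      have h2 : ζ - z0 = (ζ - z) + (z - z0) := by abel
      rw [h2, norm_add_sq_real, inner_add_right] at h1
      rw [inner_add_left, real_inner_smul_left, real_inner_comm (ζ - z) (z - z0)]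
      linarith
    have hzA : z ∈ A := by
      refine ⟨by rw [mem_ball, dist_eq_norm]; exact hzr, q + (2 * c) • (z - z0), ?_, hup⟩
      rw [add_sub_cancel_right]; exact hq.le
    refine ⟨z, hzA, ?_⟩
    -- the chosen slope `P z` has to be the one just found
    have hzb : z ∈ ball z0 (r / 3) := hAball hzA
    rw [mem_ball] at hzb
    have : P z = q + (2 * c) • (z - z0) := by
      apply slope_unique (r := r / 2) (D := (C + c) + c) (by positivity) (by positivity)
      intro h hh
      have hb : z + h ∈ ball z0 r := by
        rw [mem_ball]
        have h3 := dist_triangle (z + h) z z0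
        rw [dist_eq_norm (z + h) z, add_sub_cancel_left] at h3
        linarith
      have h1 := (abs_le.mp (htwo z hzA (z + h) hb)).1
      have h2 := hup _ hb
      rw [add_sub_cancel_left] at h1 h2
      linarith
    simp only [this, add_sub_cancel_right]
  let μ : Measure E := Measure.hausdorffMeasure (Module.finrank ℝ E)
  have : μ.IsAddHaarMeasure := isAddHaarMeasure_hausdorffMeasure
  have hLip2 : LipschitzOnWith ((6 * (C + c)).toNNReal + (2 * c).toNNReal)
      (fun z => P z - (2 * c) • (z - z0)) A := by
    apply LipschitzOnWith.sub hLip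
    apply LipschitzWith.lipschitzOnWith
    apply LipschitzWith.of_dist_le_mul
    intro x y
    rw [Real.coe_toNNReal _ (by positivity), dist_eq_norm, dist_eq_norm, ← smul_sub, norm_smul,
      Real.norm_eq_abs, abs_of_pos (by positivity), sub_sub_sub_cancel_right]
  have hApos : μ A ≠ 0 := by
    intro h0
    have h1 := hLip2.hausdorffMeasure_image_le (d := Module.finrank ℝ E) (by positivity)
    change μ _ ≤ _ * μ A at h1
    rw [h0, mul_zero] at h1
    have h2 : 0 < μ (ball (0 : E) δ) := measure_ball_pos μ _ hδ
    exact absurd (h2.trans_le ((measure_mono hsurj).trans h1)) (lt_irrefl _)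
  obtain ⟨z, hzA, hzd, hdens⟩ := exists_density_differentiable_point μ hApos hLip
  have hAball' : A ⊆ ball z0 r := hAball.trans (ball_subset_ball (by linarith))
  have hz := hAball hzA
  rw [mem_ball, dist_eq_norm] at hz
  refine ⟨z, P z, fderivWithin ℝ P A z, by linarith, ?_,
    second_order_expansion (by positivity : 0 ≤ C + c) hAball' htwo hzA
      hzd.hasFDerivWithinAt hdens, ?_⟩
  · have h1 := (hP z hzA).1
    have h2 : ‖P z‖ ≤ ‖P z - (2 * c) • (z - z0)‖ + ‖(2 * c) • (z - z0)‖ := by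
      have := norm_add_le (P z - (2 * c) • (z - z0)) ((2 * c) • (z - z0))
      rwa [sub_add_cancel] at this
    rw [norm_smul, Real.norm_eq_abs, abs_of_pos (by positivity : 0 < 2 * c)] at h2
    have h3 : 2 * c * ‖z - z0‖ ≤ 2 * (1 / 4) * (r / 3) := by gcongr
    have h4 : δ ≤ r / 16 := by rw [hδdef]; nlinarith
    linarith
  · rw [Metric.eventually_nhds_iff]
    refine ⟨r / 2, by positivity, fun h hh => ?_⟩
    rw [dist_zero_right] at hh
    have h2 := (hP z hzA).2 (z + h) (by
      rw [mem_ball]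
      have h3 := dist_triangle (z + h) z z0
      rw [dist_eq_norm (z + h) z, add_sub_cancel_left, dist_eq_norm z z0] at h3
      linarith)
    rw [add_sub_cancel_left] at h2
    have : c * ‖h‖ ^ 2 ≤ η * ‖h‖ ^ 2 := by gcongr
    linarith

open Filter Topology in
/-- A bound `q h ≤ c ‖h‖²` near the origin for a 2-homogeneous `q` holds everywhere. -/
theorem homogeneous_le_of_eventually {E : Type*} [NormedAddCommGroup E] [NormedSpace ℝ E]
    {q : E → ℝ} (hq : ∀ (t : ℝ) (h : E), q (t • h) = t ^ 2 * q h) {c : ℝ}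
    (hev : ∀ᶠ h in 𝓝 (0 : E), q h ≤ c * ‖h‖ ^ 2) (h : E) : q h ≤ c * ‖h‖ ^ 2 := by
  have h1 : Tendsto (fun t : ℝ => t • h) (𝓝[>] 0) (𝓝 0) := by
    have : Tendsto (fun t : ℝ => t • h) (𝓝 0) (𝓝 ((0 : ℝ) • h)) :=
      (continuous_id.smul continuous_const).tendsto 0
    rw [zero_smul] at this
    exact this.mono_left nhdsWithin_le_nhds
  obtain ⟨t, ht, ht0⟩ := ((h1.eventually hev).and self_mem_nhdsWithin).exists
  have ht0 : 0 < t := ht0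
  rw [hq, norm_smul, Real.norm_eq_abs, mul_pow, sq_abs] at ht
  have : 0 < t ^ 2 := by positivity
  nlinarith

open Filter Topology in
/-- The version of `jensen_point` for a function touched from above at `z0` by a quadratic
polynomial. -/
theorem jensen_quadratic
    {E : Type*} [NormedAddCommGroup E] [InnerProductSpace ℝ E] [FiniteDimensional ℝ E]
    {f : E → ℝ} (hf : Continuous f) {C : ℝ} (hC : 0 ≤ C)
    (hlow : ∀ z, ∃ p, ∀ ζ, f z + ⟪p, ζ - z⟫ - C * ‖ζ - z‖ ^ 2 ≤ f ζ)
    {z0 P0 : E} (B : E →L[ℝ] E)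
    (hmax : ∀ᶠ h in 𝓝 (0 : E), f (z0 + h) ≤ f z0 + ⟪P0, h⟫ + 1 / 2 * ⟪B h, h⟫)
    {η : ℝ} (hη : 0 < η) :
    ∃ (z p : E) (T : E →L[ℝ] E), ‖z - z0‖ ≤ η ∧ ‖p - P0‖ ≤ η ∧
      (∀ σ > 0, ∀ᶠ h in 𝓝 (0 : E),
        |f (z + h) - f z - ⟪p, h⟫ - 1 / 2 * ⟪T h, h⟫| ≤ σ * ‖h‖ ^ 2) ∧
      ∀ h, ⟪T h, h⟫ ≤ ⟪B h, h⟫ + η * ‖h‖ ^ 2 := by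
  have : CompleteSpace E := FiniteDimensional.complete ℝ E
  set Bs : E →L[ℝ] E := (1 / 2 : ℝ) • (B + ContinuousLinearMap.adjoint B) with hBs
  have hBsn : ‖Bs‖ ≤ ‖B‖ := by
    rw [hBs, norm_smul]
    have := norm_add_le B (ContinuousLinearMap.adjoint B)
    rw [LinearIsometryEquiv.norm_map] at this
    norm_num
    linarith
  have hquad : ∀ y h : E, 1 / 2 * ⟪B (y + h), y + h⟫ =
      1 / 2 * ⟪B y, y⟫ + ⟪Bs y, h⟫ + 1 / 2 * ⟪B h, h⟫ := by
    intro y h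
    have h1 : ⟪ContinuousLinearMap.adjoint B y, h⟫ = ⟪B h, y⟫ := by
      rw [ContinuousLinearMap.adjoint_inner_left, real_inner_comm]
    simp only [hBs, map_add, inner_add_left, inner_add_right, smul_apply,
      add_apply, real_inner_smul_left, h1]
    ring
  have hBle : ∀ h : E, |⟪B h, h⟫| ≤ ‖B‖ * ‖h‖ ^ 2 := fun h =>
    (abs_real_inner_le_norm _ _).trans (by nlinarith [B.le_opNorm h, norm_nonneg h])
  set w : E → ℝ := fun x => f x - ⟪P0, x - z0⟫ - 1 / 2 * ⟪B (x - z0), x - z0⟫ with hw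
  have hwadd : ∀ z h : E, w (z + h) - w z =
      f (z + h) - f z - ⟪P0 + Bs (z - z0), h⟫ - 1 / 2 * ⟪B h, h⟫ := by
    intro z h
    have h1 : z + h - z0 = (z - z0) + h := by abel
    simp only [hw, h1]
    rw [hquad, inner_add_right, inner_add_left]
    ring
  set η' := η / (3 + ‖B‖) with hη'
  have hη'0 : 0 < η' := by positivity
  have hη'1 : η' * (3 + ‖B‖) = η := by rw [hη']; field_simp
  obtain ⟨z, p, T, hz, hp, hexp, hup⟩ := jensen_point (f := w) (by fun_prop)
    (by positivity : 0 ≤ C + ‖B‖ / 2)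
    (fun z => by
      obtain ⟨p, hp⟩ := hlow z
      refine ⟨p - (P0 + Bs (z - z0)), fun ζ => ?_⟩
      have h1 := hp ζ
      have h2 := hwadd z (ζ - z)
      have h3 := abs_le.mp (hBle (ζ - z))
      rw [add_sub_cancel] at h2
      rw [inner_sub_left]
      linarith)
    (z0 := z0) (by
      have h1 : Tendsto (fun z => z - z0) (𝓝 z0) (𝓝 0) := by
        have : Tendsto (fun z => z - z0) (𝓝 z0) (𝓝 (z0 - z0)) :=
          (continuous_id.sub continuous_const).tendsto z0
        rwa [sub_self] at this
      filter_upwards [h1.eventually hmax] with z hz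
      rw [add_sub_cancel] at hz
      simp only [hw, sub_self, inner_zero_right, map_zero]
      linarith) hη'0
  have hηle : η' ≤ η := by nlinarith [norm_nonneg B]
  refine ⟨z, p + (P0 + Bs (z - z0)), T + B, hz.trans hηle, ?_, ?_, ?_⟩
  · have h1 : p + (P0 + Bs (z - z0)) - P0 = p + Bs (z - z0) := by abel
    rw [h1]
    have h2 : ‖Bs (z - z0)‖ ≤ ‖B‖ * η' := (Bs.le_opNorm _).trans (by gcongr)
    refine (norm_add_le _ _).trans ?_
    nlinarith
  · intro σ hσ
    filter_upwards [hexp σ hσ] with h hh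
    rw [hwadd] at hh
    simp only [add_apply, inner_add_left] at hh ⊢
    convert hh using 2
    ring
  · intro h
    have h1 : ∀ᶠ h in 𝓝 (0 : E), ⟪T h, h⟫ ≤ (3 * η') * ‖h‖ ^ 2 := by
      filter_upwards [hexp (η' / 2) (by positivity), hup] with h h1 h2
      have := (abs_le.mp h1).1
      linarith
    have h2 := homogeneous_le_of_eventually (q := fun h => ⟪T h, h⟫) (fun t h => by
      simp only [map_smul, real_inner_smul_left, real_inner_smul_right]; ring) h1 h
    have h3 : 3 * η' ≤ η := by nlinarith [norm_nonneg B]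
    have h4 : 3 * η' * ‖h‖ ^ 2 ≤ η * ‖h‖ ^ 2 := by gcongr
    simp only [add_apply, inner_add_left]
    linarith

/-! ### The theorem on sums -/

open Filter Topology in
/-- **Theorem on sums** for two functions with paraboloids of fixed opening below, whose sum is
touched from above at `(a0, b0)` by a quadratic polynomial with second order part half of
`c₁ ‖h - k‖² - c₂ ⟪e, h - k⟫² + c₃ ‖h‖²`. It follows from `jensen_quadratic` in the product. -/
theorem theorem_on_sums
    {V : Type*} [NormedAddCommGroup V] [InnerProductSpace ℝ V] [FiniteDimensional ℝ V]
    {S1 S2 : V → ℝ} (hS1 : Continuous S1) (hS2 : Continuous S2) {C : ℝ} (hC : 0 ≤ C)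
    (hlow1 : ∀ z, ∃ p, ∀ ζ, S1 z + ⟪p, ζ - z⟫ - C * ‖ζ - z‖ ^ 2 ≤ S1 ζ)
    (hlow2 : ∀ z, ∃ p, ∀ ζ, S2 z + ⟪p, ζ - z⟫ - C * ‖ζ - z‖ ^ 2 ≤ S2 ζ)
    {a0 b0 P1 P2 e : V} {c1 c2 c3 r : ℝ} (hr : 0 < r)
    (hmax : ∀ h k : V, ‖h‖ < r → ‖k‖ < r → S1 (a0 + h) + S2 (b0 + k) ≤
      S1 a0 + S2 b0 + ⟪P1, h⟫ + ⟪P2, k⟫ +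
        1 / 2 * (c1 * ‖h - k‖ ^ 2 - c2 * ⟪e, h - k⟫ ^ 2 + c3 * ‖h‖ ^ 2))
    {η : ℝ} (hη : 0 < η) :
    ∃ (a b p1 p2 : V) (X Y : V →L[ℝ] V), ‖a - a0‖ ≤ η ∧ ‖b - b0‖ ≤ η ∧
      ‖p1 - P1‖ ≤ η ∧ ‖p2 - P2‖ ≤ η ∧
      (∀ σ > 0, ∀ᶠ h in 𝓝 (0 : V),
        |S1 (a + h) - S1 a - ⟪p1, h⟫ - 1 / 2 * ⟪X h, h⟫| ≤ σ * ‖h‖ ^ 2) ∧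
      (∀ σ > 0, ∀ᶠ h in 𝓝 (0 : V),
        |S2 (b + h) - S2 b - ⟪p2, h⟫ - 1 / 2 * ⟪Y h, h⟫| ≤ σ * ‖h‖ ^ 2) ∧
      ∀ h k, ⟪X h, h⟫ + ⟪Y k, k⟫ ≤ c1 * ‖h - k‖ ^ 2 - c2 * ⟪e, h - k⟫ ^ 2 + c3 * ‖h‖ ^ 2 +
        η * (‖h‖ ^ 2 + ‖k‖ ^ 2) := by
  have : CompleteSpace V := FiniteDimensional.complete ℝ V
  let E := WithLp 2 (V × V)
  let fs : E →L[ℝ] V := WithLp.fstL 2 ℝ V V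
  let sn : E →L[ℝ] V := WithLp.sndL 2 ℝ V V
  have hfs : ∀ H : E, fs H = H.fst := fun _ => rfl
  have hsn : ∀ H : E, sn H = H.snd := fun _ => rfl
  let i1 : V →L[ℝ] E := ContinuousLinearMap.adjoint fs
  let i2 : V →L[ℝ] E := ContinuousLinearMap.adjoint sn
  let D : E →L[ℝ] V := fs - sn
  have hinner : ∀ x y : E, ⟪x, y⟫ = ⟪fs x, fs y⟫ + ⟪sn x, sn y⟫ := fun x y =>
    WithLp.prod_inner_apply x y
  have hnorm : ∀ x : E, ‖x‖ ^ 2 = ‖fs x‖ ^ 2 + ‖sn x‖ ^ 2 := fun x =>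
    WithLp.prod_norm_sq_eq_of_L2 x
  have hi1 : ∀ h, i1 h = WithLp.toLp 2 (h, 0) := by
    intro h
    refine ext_inner_right ℝ fun H => ?_
    rw [ContinuousLinearMap.adjoint_inner_left, hinner]
    simp [hfs, hsn]
  have hi2 : ∀ h, i2 h = WithLp.toLp 2 (0, h) := by
    intro h
    refine ext_inner_right ℝ fun H => ?_
    rw [ContinuousLinearMap.adjoint_inner_left, hinner]
    simp [hfs, hsn]
  have hf1 : ∀ h, fs (i1 h) = h := fun h => by rw [hi1]; rfl
  have hf2 : ∀ h, fs (i2 h) = 0 := fun h => by rw [hi2]; rfl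
  have hs1 : ∀ h, sn (i1 h) = 0 := fun h => by rw [hi1]; rfl
  have hs2 : ∀ h, sn (i2 h) = h := fun h => by rw [hi2]; rfl
  have hn1 : ∀ h, ‖i1 h‖ ^ 2 = ‖h‖ ^ 2 := fun h => by rw [hnorm, hf1, hs1]; simp
  have hn2 : ∀ h, ‖i2 h‖ ^ 2 = ‖h‖ ^ 2 := fun h => by rw [hnorm, hf2, hs2]; simp
  let R : V →L[ℝ] V := (innerSL ℝ e).smulRight e
  let B : E →L[ℝ] E := c1 • (ContinuousLinearMap.adjoint D ∘L D) -
    c2 • (ContinuousLinearMap.adjoint D ∘L R ∘L D) + c3 • (i1 ∘L fs)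
  have hB : ∀ H : E, ⟪B H, H⟫ = c1 * ‖fs H - sn H‖ ^ 2 - c2 * ⟪e, fs H - sn H⟫ ^ 2 +
      c3 * ‖fs H‖ ^ 2 := by
    intro H
    have hD : D H = fs H - sn H := rfl
    have hR : ∀ v, ⟪R v, v⟫ = ⟪e, v⟫ ^ 2 := fun v => by
      change ⟪⟪e, v⟫ • e, v⟫ = _
      rw [real_inner_smul_left]; ring
    simp only [B, i1, add_apply, sub_apply, smul_apply, inner_add_left,
      inner_sub_left, real_inner_smul_left, ContinuousLinearMap.comp_apply,
      ContinuousLinearMap.adjoint_inner_left, hR]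
    simp only [hD, ← inner_sub_left, real_inner_self_eq_norm_sq]
  have hfle : ∀ x, ‖fs x‖ ≤ ‖x‖ := fun x => WithLp.norm_fst_le _ x
  have hsle : ∀ x, ‖sn x‖ ≤ ‖x‖ := fun x => WithLp.norm_snd_le _ x
  let f : E → ℝ := fun H => S1 (fs H) + S2 (sn H)
  obtain ⟨z, p, T, hz, hp, hexp, hT⟩ := jensen_quadratic (f := f)
    ((hS1.comp fs.continuous).add (hS2.comp sn.continuous)) hC
    (fun z => by
      obtain ⟨p, hp⟩ := hlow1 (fs z)
      obtain ⟨q, hq⟩ := hlow2 (sn z)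
      refine ⟨i1 p + i2 q, fun ζ => ?_⟩
      have h1 := hp (fs ζ)
      have h2 := hq (sn ζ)
      rw [inner_add_left, ContinuousLinearMap.adjoint_inner_left,
        ContinuousLinearMap.adjoint_inner_left, hnorm]
      simp only [map_sub, f]
      linarith)
    (z0 := i1 a0 + i2 b0) (P0 := i1 P1 + i2 P2) B
    (by
      have h1 : ∀ᶠ H in 𝓝 (0 : E), H ∈ ball (0 : E) r := ball_mem_nhds _ hr
      filter_upwards [h1] with H hH
      rw [mem_ball_zero_iff] at hH
      have h2 : ‖fs H‖ < r := (hfle H).trans_lt hH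
      have h3 : ‖sn H‖ < r := (hsle H).trans_lt hH
      have := hmax _ _ h2 h3
      rw [hB, inner_add_left, ContinuousLinearMap.adjoint_inner_left,
        ContinuousLinearMap.adjoint_inner_left]
      simp only [map_add, f, hf1, hf2, hs1, hs2, add_zero, zero_add]
      linarith)
    (η := η / 2) (by positivity)
  have hle : ∀ (g : E →L[ℝ] V), (∀ x, ‖g x‖ ≤ ‖x‖) → ∀ {x y : E} {v : V}, ‖x - y‖ ≤ η / 2 →
      g y = v → ‖g x - v‖ ≤ η := by
    intro g hg x y v hxy hv
    rw [← hv, ← map_sub]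
    exact (hg _).trans (by linarith)
  have ht1 : Tendsto i1 (𝓝 0) (𝓝 0) := by simpa using i1.continuous.tendsto 0
  have ht2 : Tendsto i2 (𝓝 0) (𝓝 0) := by simpa using i2.continuous.tendsto 0
  let X : V →L[ℝ] V := fs ∘L T ∘L i1
  let Y : V →L[ℝ] V := sn ∘L T ∘L i2
  have hX : ∀ h, ⟪X h, h⟫ = ⟪T (i1 h), i1 h⟫ := fun h => by
    rw [hinner, hf1, hs1, inner_zero_right, add_zero]; rfl
  have hY : ∀ h, ⟪Y h, h⟫ = ⟪T (i2 h), i2 h⟫ := fun h => by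
    rw [hinner, hf2, hs2, inner_zero_right, zero_add]; rfl
  have hexp1 : ∀ σ > 0, ∀ᶠ h in 𝓝 (0 : V),
      |S1 (fs z + h) - S1 (fs z) - ⟪fs p, h⟫ - 1 / 2 * ⟪X h, h⟫| ≤ σ * ‖h‖ ^ 2 := by
    intro σ hσ
    filter_upwards [ht1.eventually (hexp σ hσ)] with h hh
    rw [hn1, ← hX, hinner] at hh
    simp only [f, map_add, hf1, hs1, add_zero, inner_zero_right] at hh
    convert hh using 2
    ring
  have hexp2 : ∀ σ > 0, ∀ᶠ h in 𝓝 (0 : V),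
      |S2 (sn z + h) - S2 (sn z) - ⟪sn p, h⟫ - 1 / 2 * ⟪Y h, h⟫| ≤ σ * ‖h‖ ^ 2 := by
    intro σ hσ
    filter_upwards [ht2.eventually (hexp σ hσ)] with h hh
    rw [hn2, ← hY, hinner] at hh
    simp only [f, map_add, hf2, hs2, add_zero, zero_add, inner_zero_right] at hh
    convert hh using 2
    ring
  refine ⟨fs z, sn z, fs p, sn p, X, Y, hle fs hfle hz (by simp [hf1, hf2]),
    hle sn hsle hz (by simp [hs1, hs2]), hle fs hfle hp (by simp [hf1, hf2]),
    hle sn hsle hp (by simp [hs1, hs2]), hexp1, hexp2, ?_⟩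
  -- the quadratic form of `T` is the sum of its diagonal blocks, as `f` is a sum
  have hblock : ∀ᶠ H in 𝓝 (0 : E), ⟪X (fs H), fs H⟫ + ⟪Y (sn H), sn H⟫ - ⟪T H, H⟫ ≤
      (η / 2) * ‖H‖ ^ 2 := by
    have t1 : Tendsto fs (𝓝 0) (𝓝 0) := by simpa using fs.continuous.tendsto 0
    have t2 : Tendsto sn (𝓝 0) (𝓝 0) := by simpa using sn.continuous.tendsto 0
    have hσ : 0 < η / 8 := by positivity
    filter_upwards [t1.eventually (hexp1 _ hσ), t2.eventually (hexp2 _ hσ), hexp _ hσ]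
      with H h1 h2 h3
    have h1 := (abs_le.mp h1).1
    have h2 := (abs_le.mp h2).1
    have h3 := (abs_le.mp h3).2
    rw [hinner] at h3
    simp only [f, map_add] at h3
    have h4 := hnorm H
    nlinarith
  intro h k
  have h1 := homogeneous_le_of_eventually
    (q := fun H : E => ⟪X (fs H), fs H⟫ + ⟪Y (sn H), sn H⟫ - ⟪T H, H⟫) (fun t h => by
      simp only [map_smul, real_inner_smul_left, real_inner_smul_right]; ring) hblock (i1 h + i2 k)
  have h2 := hT (i1 h + i2 k)
  rw [hB] at h2
  rw [hnorm] at h1 h2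
  simp only [map_add, hf1, hf2, hs1, hs2, add_zero, zero_add] at h1 h2 ⊢
  have h3 : ⟪T (i1 h) + T (i2 k), i1 h + i2 k⟫ = ⟪T (i1 h + i2 k), i1 h + i2 k⟫ := by
    rw [map_add]
  linarith

/-! ### Ellipticity in terms of quadratic forms -/

/-- The linear operator on `ℝⁿ` with matrix `M`. -/
abbrev opM {n : ℕ} (M : Matrix (Fin n) (Fin n) ℝ) : En n →L[ℝ] En n :=
  Matrix.toEuclideanCLM (n := Fin n) (𝕜 := ℝ) M

theorem opM_symm {n : ℕ} {M : Matrix (Fin n) (Fin n) ℝ} (hM : M.IsSymm) (x y : En n) :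
    ⟪opM M x, y⟫ = ⟪x, opM M y⟫ := by
  have h1 : star M = M := by
    rw [Matrix.star_eq_conjTranspose, Matrix.conjTranspose_eq_transpose_of_trivial]; exact hM
  have h2 : ContinuousLinearMap.adjoint (opM M) = opM M := by
    rw [← ContinuousLinearMap.star_eq_adjoint, ← map_star, h1]
  conv_rhs => rw [← h2, ContinuousLinearMap.adjoint_inner_right]

/-- A quadratic form on `ℝⁿ` is represented by a symmetric matrix. -/
theorem exists_symm_matrix {n : ℕ} (T : En n →L[ℝ] En n) :
    ∃ M : Matrix (Fin n) (Fin n) ℝ, M.IsSymm ∧ ∀ h, ⟪opM M h, h⟫ = ⟪T h, h⟫ := by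
  set S : En n →L[ℝ] En n := (1 / 2 : ℝ) • (T + ContinuousLinearMap.adjoint T) with hS
  obtain ⟨M, hM⟩ : ∃ M, opM M = S := (Matrix.toEuclideanCLM (n := Fin n) (𝕜 := ℝ)).surjective S
  refine ⟨M, ?_, fun h => ?_⟩
  · have h1 : star S = S := by
      simp [hS, ContinuousLinearMap.star_eq_adjoint, add_comm]
    rw [← hM, opM, ← map_star] at h1
    have h2 := (Matrix.toEuclideanCLM (n := Fin n) (𝕜 := ℝ)).injective h1
    rwa [Matrix.star_eq_conjTranspose, Matrix.conjTranspose_eq_transpose_of_trivial] at h2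
  · rw [hM]
    simp only [hS, smul_apply, add_apply, real_inner_smul_left, inner_add_left,
      ContinuousLinearMap.adjoint_inner_left]
    rw [real_inner_comm h (T h)]
    ring

theorem opM_inner_eq {n : ℕ} (M : Matrix (Fin n) (Fin n) ℝ) (x y : En n) :
    ⟪opM M x, y⟫ = y.ofLp ⬝ᵥ M.mulVec x.ofLp := by
  rw [EuclideanSpace.inner_eq_star_dotProduct]
  simp [opM]

theorem opM_single {n : ℕ} (M : Matrix (Fin n) (Fin n) ℝ) (i j : Fin n) :
    ⟪opM M (EuclideanSpace.single j 1), EuclideanSpace.single i 1⟫ = M i j := by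
  rw [opM_inner_eq]; simp

theorem posSemidef_iff_opM {n : ℕ} {M : Matrix (Fin n) (Fin n) ℝ} :
    M.PosSemidef ↔ M.IsSymm ∧ ∀ h : En n, 0 ≤ ⟪opM M h, h⟫ := by
  rw [Matrix.posSemidef_iff_dotProduct_mulVec]
  refine and_congr ?_ ⟨fun H h => ?_, fun H h => ?_⟩
  · rw [Matrix.IsHermitian, Matrix.conjTranspose_eq_transpose_of_trivial, Matrix.IsSymm]
  · rw [opM_inner_eq]; simpa using H h.ofLp
  · have := H (WithLp.toLp 2 h)
    rw [opM_inner_eq] at this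
    simpa using this

theorem trace_mul_nonneg_of_posSemidef {n : ℕ} {A W : Matrix (Fin n) (Fin n) ℝ}
    (hA : A.PosSemidef) (hW : W.PosSemidef) : 0 ≤ (A * W).trace := by
  obtain ⟨m, v, rfl⟩ := Matrix.posSemidef_iff_eq_sum_vecMulVec.mp hW
  rw [Matrix.mul_sum, Matrix.trace_sum]
  refine Finset.sum_nonneg fun i _ => ?_
  rw [Matrix.mul_vecMulVec, Matrix.trace_vecMulVec, dotProduct_comm]
  exact hA.dotProduct_mulVec_nonneg (v i)

theorem inner_le_trace_of_posSemidef {n : ℕ} {W : Matrix (Fin n) (Fin n) ℝ}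
    (hW : W.PosSemidef) {e : En n} (he : ‖e‖ = 1) : ⟪opM W e, e⟫ ≤ W.trace := by
  have hA : (1 - Matrix.vecMulVec e.ofLp e.ofLp : Matrix (Fin n) (Fin n) ℝ).PosSemidef := by
    rw [posSemidef_iff_opM]
    constructor
    · rw [Matrix.IsSymm, Matrix.transpose_sub, Matrix.transpose_one, Matrix.transpose_vecMulVec]
    · intro h
      have h1 : ⟪opM (Matrix.vecMulVec e.ofLp e.ofLp) h, h⟫ = ⟪e, h⟫ ^ 2 := by
        rw [opM_inner_eq, Matrix.vecMulVec_mulVec, EuclideanSpace.inner_eq_star_dotProduct]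
        simp [dotProduct_comm, sq]
      rw [opM, map_sub, map_one, sub_apply, inner_sub_left, h1]
      have h2 := abs_real_inner_le_norm e h
      rw [he, one_mul] at h2
      have h3 : ⟪e, h⟫ ^ 2 ≤ ‖h‖ ^ 2 := sq_le_sq' (by linarith [neg_abs_le ⟪e, h⟫])
        (by linarith [le_abs_self ⟪e, h⟫])
      have h4 : ⟪(1 : En n →L[ℝ] En n) h, h⟫ = ‖h‖ ^ 2 := real_inner_self_eq_norm_sq h
      linarith
  have h1 := trace_mul_nonneg_of_posSemidef hA hW
  rw [Matrix.sub_mul, Matrix.one_mul, Matrix.trace_sub, Matrix.vecMulVec_mul,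
    Matrix.trace_vecMulVec] at h1
  rw [opM_inner_eq, Matrix.dotProduct_mulVec]
  rw [dotProduct_comm] at h1
  linarith

theorem norm_le_trace_of_posSemidef {n : ℕ} {W : Matrix (Fin n) (Fin n) ℝ}
    (hW : W.PosSemidef) : ‖W‖ ≤ W.trace := by
  rw [Matrix.norm_le_iff hW.trace_nonneg]
  intro i j
  have hpos := (posSemidef_iff_opM.mp hW).2
  have hsymm : W j i = W i j := (posSemidef_iff_opM.mp hW).1.apply i j
  have h1 := hpos (EuclideanSpace.single i 1 + EuclideanSpace.single j 1)
  have h2 := hpos (EuclideanSpace.single i 1 - EuclideanSpace.single j 1)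
  simp only [map_add, map_sub, inner_add_left, inner_add_right, inner_sub_left, inner_sub_right,
    opM_single] at h1 h2
  have h3 : ∀ k, W k k ≤ W.trace := fun k => by
    have := inner_le_trace_of_posSemidef hW (e := EuclideanSpace.single k 1) (by simp)
    rwa [opM_single] at this
  have := h3 i
  have := h3 j
  rw [Real.norm_eq_abs, abs_le]
  constructor <;> linarith

/-- The maximum of `tr (A Z)` is controlled by writing `Z = B I - W` with `W ≥ 0`. -/
theorem pucciPlus_le {n : ℕ} {lam Lam B : ℝ} (hlamLam : lam ≤ Lam) (hB : 0 ≤ B)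
    {Z : Matrix (Fin n) (Fin n) ℝ} (hW : (B • (1 : Matrix (Fin n) (Fin n) ℝ) - Z).PosSemidef) :
    pucciPlus lam Lam Z ≤
      n * Lam * B - lam * (B • (1 : Matrix (Fin n) (Fin n) ℝ) - Z).trace := by
  set W := B • (1 : Matrix (Fin n) (Fin n) ℝ) - Z with hWdef
  have hpsd0 : ∀ c : ℝ, 0 ≤ c → (c • (1 : Matrix (Fin n) (Fin n) ℝ)).PosSemidef := fun c hc =>
    Matrix.PosSemidef.one.smul hc
  suffices lam * W.trace - n * Lam * B ≤ pucciMinus lam Lam (-Z) by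
    unfold pucciPlus; linarith
  refine le_csInf ⟨_, lam • 1, ?_, ?_, ?_, rfl⟩ ?_
  · exact Matrix.isSymm_one.smul lam
  · rw [sub_self]; exact Matrix.PosSemidef.zero
  · rw [← sub_smul]; exact hpsd0 _ (by linarith)
  · rintro t ⟨A, -, h1, h2, rfl⟩
    have h3 := trace_mul_nonneg_of_posSemidef h1 hW
    have h4 := h2.trace_nonneg
    have h5 : -Z = W - B • (1 : Matrix (Fin n) (Fin n) ℝ) := by rw [hWdef]; abel
    rw [h5]
    simp only [Matrix.sub_mul, Matrix.mul_sub, Matrix.trace_sub, Matrix.smul_mul, Matrix.one_mul,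
      Matrix.trace_smul, smul_eq_mul, Matrix.mul_smul, Matrix.mul_one, Matrix.trace_one,
      Fintype.card_fin] at h3 h4 ⊢
    nlinarith

theorem opM_smul_one_sub {n : ℕ} (B : ℝ) (Z : Matrix (Fin n) (Fin n) ℝ) (h : En n) :
    ⟪opM (B • (1 : Matrix (Fin n) (Fin n) ℝ) - Z) h, h⟫ = B * ‖h‖ ^ 2 - ⟪opM Z h, h⟫ := by
  rw [opM, map_sub, map_smul, map_one, sub_apply, inner_sub_left, smul_apply,
    real_inner_smul_left]
  have h4 : ⟪(1 : En n →L[ℝ] En n) h, h⟫ = ‖h‖ ^ 2 := real_inner_self_eq_norm_sq h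
  rw [h4]

/-- The form of ellipticity used throughout: an upper bound `M - N ≤ B I` controls `G M - G N`,
with a gain proportional to the trace of the defect. -/
theorem elliptic_le {n : ℕ} {lam Lam B : ℝ} (hlamLam : lam ≤ Lam) (hB : 0 ≤ B)
    {G : Matrix (Fin n) (Fin n) ℝ → ℝ} (hG : IsUnifEllipticConst lam Lam G)
    {M N : Matrix (Fin n) (Fin n) ℝ} (hM : M.IsSymm) (hN : N.IsSymm)
    (hle : ∀ h, ⟪opM (M - N) h, h⟫ ≤ B * ‖h‖ ^ 2) :
    (B • (1 : Matrix (Fin n) (Fin n) ℝ) - (M - N)).PosSemidef ∧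
    G M - G N ≤ n * Lam * B - lam * (B • (1 : Matrix (Fin n) (Fin n) ℝ) - (M - N)).trace := by
  have h1 : (B • (1 : Matrix (Fin n) (Fin n) ℝ) - (M - N)).PosSemidef := by
    rw [posSemidef_iff_opM]
    refine ⟨(Matrix.isSymm_one.smul B).sub (hM.sub hN), fun h => ?_⟩
    rw [opM_smul_one_sub]
    linarith [hle h]
  exact ⟨h1, ((hG.1 M N hM hN).2).trans (pucciPlus_le hlamLam hB h1)⟩

theorem elliptic_le_mul {n : ℕ} {lam Lam B : ℝ} (hlam : 0 < lam) (hlamLam : lam ≤ Lam) (hB : 0 ≤ B)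
    {G : Matrix (Fin n) (Fin n) ℝ → ℝ} (hG : IsUnifEllipticConst lam Lam G)
    {M N : Matrix (Fin n) (Fin n) ℝ} (hM : M.IsSymm) (hN : N.IsSymm)
    (hle : ∀ h, ⟪opM (M - N) h, h⟫ ≤ B * ‖h‖ ^ 2) : G M - G N ≤ n * Lam * B := by
  obtain ⟨h1, h2⟩ := elliptic_le hlamLam hB hG hM hN hle
  nlinarith [h1.trace_nonneg]

theorem elliptic_lipschitz {n : ℕ} {lam Lam : ℝ} (hlam : 0 < lam) (hlamLam : lam ≤ Lam)
    {G : Matrix (Fin n) (Fin n) ℝ → ℝ} (hG : IsUnifEllipticConst lam Lam G)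
    {M N : Matrix (Fin n) (Fin n) ℝ} (hM : M.IsSymm) (hN : N.IsSymm) :
    |G M - G N| ≤ n * Lam * ‖opM (M - N)‖ := by
  have hop : ∀ Z : Matrix (Fin n) (Fin n) ℝ, ∀ h, ⟪opM Z h, h⟫ ≤ ‖opM Z‖ * ‖h‖ ^ 2 := fun Z h =>
    (real_inner_le_norm _ _).trans (by nlinarith [(opM Z).le_opNorm h, norm_nonneg h])
  rw [abs_le]
  constructor
  · have h2 := elliptic_le_mul hlam hlamLam (norm_nonneg _) hG hN hM (hop (N - M))
    have : ‖opM (N - M)‖ = ‖opM (M - N)‖ := by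
      rw [opM, opM, ← norm_neg, ← map_neg, neg_sub]
    rw [this] at h2
    linarith
  · exact elliptic_le_mul hlam hlamLam (norm_nonneg _) hG hM hN (hop _)

/-- The dual operator `M ↦ -G(-M)`, satisfied by `-v` when `v` satisfies `G`. -/
def dualOp {n : ℕ} (G : Matrix (Fin n) (Fin n) ℝ → ℝ) : Matrix (Fin n) (Fin n) ℝ → ℝ :=
  fun M => -G (-M)

theorem dualOp_elliptic {n : ℕ} {lam Lam : ℝ} {G : Matrix (Fin n) (Fin n) ℝ → ℝ}
    (hG : IsUnifEllipticConst lam Lam G) : IsUnifEllipticConst lam Lam (dualOp G) := by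
  refine ⟨fun M N hM hN => ?_, by simp [dualOp, hG.2]⟩
  have h1 := hG.1 (-N) (-M) hN.neg hM.neg
  have h2 : -N - -M = M - N := by abel
  rw [h2] at h1
  unfold dualOp
  constructor <;> linarith [h1.1, h1.2]

/-! ### Superjets and viscosity solutions -/

open Filter Topology in
/-- `(p, M)` is a second order superjet of `v` at `x`, that is,
`v (x + h) ≤ v x + ⟪p, h⟫ + ⟪M h, h⟫ / 2 + o(‖h‖²)`. -/
def SupJet {n : ℕ} (v : En n → ℝ) (x p : En n) (M : Matrix (Fin n) (Fin n) ℝ) : Prop :=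
  ∀ σ > 0, ∀ᶠ h in 𝓝 (0 : En n),
    v (x + h) ≤ v x + ⟪p, h⟫ + 1 / 2 * ⟪opM M h, h⟫ + σ * ‖h‖ ^ 2

/-- `v` is a viscosity subsolution of `|∇v|^γ G(D²v) = 0` in the unit ball up to an error `δ`,
both in the right-hand side and in the oscillation of `G`, which may grow linearly in the
Hessian. The condition for the subsolution property of `-v` is formulated with `dualOp G`. -/
def HalfSol {n : ℕ} (G : Matrix (Fin n) (Fin n) ℝ → ℝ) (δ γ : ℝ) (v : En n → ℝ) : Prop :=
  ∀ x ∈ ball (0 : En n) 1, ∀ (p : En n) (M : Matrix (Fin n) (Fin n) ℝ), M.IsSymm →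
    SupJet v x p M → -δ ≤ ‖p‖ ^ γ * (G M + δ * (‖M‖ + 1))

theorem HalfSol.mono {n : ℕ} {G : Matrix (Fin n) (Fin n) ℝ → ℝ} {δ δ' γ : ℝ} {v : En n → ℝ}
    (h : HalfSol G δ γ v) (hδ : δ ≤ δ') : HalfSol G δ' γ v := by
  intro x hx p M hM hj
  have h1 := h x hx p M hM hj
  have h2 : ‖p‖ ^ γ * (G M + δ * (‖M‖ + 1)) ≤ ‖p‖ ^ γ * (G M + δ' * (‖M‖ + 1)) := by gcongr
  linarith

theorem opM_add_smul_one {n : ℕ} (M : Matrix (Fin n) (Fin n) ℝ) (c : ℝ) (h : En n) :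
    opM (M + c • (1 : Matrix (Fin n) (Fin n) ℝ)) h = opM M h + c • h := by
  rw [opM, map_add, map_smul, map_one]; rfl

theorem isSymm_add_smul_one {n : ℕ} {M : Matrix (Fin n) (Fin n) ℝ} (hM : M.IsSymm) (c : ℝ) :
    (M + c • (1 : Matrix (Fin n) (Fin n) ℝ)).IsSymm := hM.add (Matrix.isSymm_one.smul c)

/-- The quadratic polynomial centred at `x₀` with slope `p` and Hessian `M`. -/
def quadTest {n : ℕ} (x₀ p : En n) (M : Matrix (Fin n) (Fin n) ℝ) : En n → ℝ :=
  fun x => ⟪p, x - x₀⟫ + 1 / 2 * ⟪opM M (x - x₀), x - x₀⟫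

theorem quadTest_hasFDerivAt {n : ℕ} (x₀ p : En n) {M : Matrix (Fin n) (Fin n) ℝ}
    (hM : M.IsSymm) (x : En n) :
    HasFDerivAt (quadTest x₀ p M) (innerSL ℝ (p + opM M (x - x₀))) x := by
  have h0 : HasFDerivAt (fun x : En n => x - x₀) (ContinuousLinearMap.id ℝ (En n)) x :=
    (hasFDerivAt_id x).sub_const x₀
  have h1 : HasFDerivAt (fun x : En n => opM M (x - x₀)) (opM M ∘L ContinuousLinearMap.id ℝ (En n)) x :=
    (opM M).hasFDerivAt.comp x h0
  have h2 := (hasFDerivAt_const p x).inner ℝ h0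
  have h3 := (h1.inner ℝ h0).const_mul (1 / 2)
  refine (h2.add h3).congr_fderiv ?_
  ext h
  simp only [add_apply, smul_apply, ContinuousLinearMap.comp_apply, fderivInnerCLM_apply,
    ContinuousLinearMap.prod_apply, ContinuousLinearMap.id_apply, innerSL_apply_apply, smul_eq_mul,
    inner_add_left, zero_apply, inner_zero_left, add_zero]
  rw [opM_symm hM h, real_inner_comm (opM M (x - x₀)) h]
  ring

theorem quadTest_contDiff {n : ℕ} (x₀ p : En n) (M : Matrix (Fin n) (Fin n) ℝ) :
    ContDiff ℝ 2 (quadTest x₀ p M) := by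
  unfold quadTest
  have h0 : ContDiff ℝ 2 (fun x : En n => x - x₀) := contDiff_id.sub contDiff_const
  exact (contDiff_const.inner ℝ h0).add
    (contDiff_const.mul (((opM M).contDiff.comp h0).inner ℝ h0))

theorem quadTest_gradient {n : ℕ} (x₀ p : En n) {M : Matrix (Fin n) (Fin n) ℝ} (hM : M.IsSymm) :
    gradient (quadTest x₀ p M) x₀ = p := by
  have h1 := quadTest_hasFDerivAt x₀ p hM x₀
  rw [sub_self, map_zero, add_zero] at h1
  have h2 : HasGradientAt (quadTest x₀ p M) p x₀ := by
    rw [hasGradientAt_iff_hasFDerivAt]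
    refine h1.congr_fderiv ?_
    ext h; simp
  exact h2.gradient

theorem quadTest_hessMat {n : ℕ} (x₀ p : En n) {M : Matrix (Fin n) (Fin n) ℝ} (hM : M.IsSymm) :
    hessMat (quadTest x₀ p M) x₀ = M := by
  have h1 : fderiv ℝ (quadTest x₀ p M) = fun x => innerSL ℝ (p + opM M (x - x₀)) :=
    funext fun x => (quadTest_hasFDerivAt x₀ p hM x).fderiv
  have h0 : HasFDerivAt (fun x : En n => p + opM M (x - x₀)) (opM M) x₀ :=
    (((opM M).hasFDerivAt.comp x₀ ((hasFDerivAt_id x₀).sub_const x₀)).const_add p)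
  have h2 : HasFDerivAt (fun x : En n => innerSL ℝ (p + opM M (x - x₀)))
      ((innerSL ℝ : En n →L[ℝ] _) ∘L opM M) x₀ :=
    (innerSL ℝ : En n →L[ℝ] En n →L[ℝ] ℝ).hasFDerivAt.comp x₀ h0
  ext i j
  rw [hessMat, Matrix.of_apply, iteratedFDeriv_two_apply, h1, h2.fderiv]
  simp only [Matrix.cons_val_zero, Matrix.cons_val_one, ContinuousLinearMap.comp_apply]
  have h3 := opM_single M j i
  rw [hM.apply] at h3
  exact h3

open Filter Topology in
theorem tendsto_sub_self_nhds {n : ℕ} (x₀ : En n) : Tendsto (fun x => x - x₀) (𝓝 x₀) (𝓝 0) := by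
  have : Tendsto (fun x => x - x₀) (𝓝 x₀) (𝓝 (x₀ - x₀)) :=
    (continuous_id.sub continuous_const).tendsto x₀
  rwa [sub_self] at this

/-- A superjet, fattened by `σ`, is realized by a quadratic test function touching from above. -/
theorem SupJet.isLocalMax {n : ℕ} {v : En n → ℝ} {x p : En n} {M : Matrix (Fin n) (Fin n) ℝ}
    (h : SupJet v x p M) {σ : ℝ} (hσ : 0 < σ) :
    IsLocalMax (fun y => v y - quadTest x p (M + (2 * σ) • 1) y) x := by
  have h1 := (tendsto_sub_self_nhds x).eventually (h σ hσ)
  filter_upwards [h1] with y hy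
  rw [add_sub_cancel] at hy
  simp only [quadTest, sub_self, inner_zero_right, map_zero, opM_add_smul_one, inner_add_left,
    real_inner_smul_left, real_inner_self_eq_norm_sq]
  linarith

/-- A test function touching from above gives a superjet, by its second order Taylor expansion. -/
theorem supJet_of_isLocalMax {n : ℕ} {v ψ : En n → ℝ} (hψ : ContDiff ℝ 2 ψ) {x : En n}
    (hmax : IsLocalMax (fun y => v y - ψ y) x) :
    (hessMat ψ x).IsSymm ∧ SupJet v x (gradient ψ x) (hessMat ψ x) := by
  have hd : ∀ y, HasFDerivAt ψ (fderiv ℝ ψ y) y := fun y =>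
    ((hψ.differentiable (by norm_num)) y).hasFDerivAt
  have hd2 : HasFDerivAt (fderiv ℝ ψ) (fderiv ℝ (fderiv ℝ ψ) x) x :=
    (((hψ.fderiv_right (m := 1) (by norm_num)).differentiable (by norm_num)) x).hasFDerivAt
  set D := fderiv ℝ (fderiv ℝ ψ) x with hD
  have hsym : ∀ a b, D a b = D b a := fun a b =>
    (hψ.contDiffAt.isSymmSndFDerivAt (by simp)) a b
  have hH : ∀ i j, hessMat ψ x i j = D (EuclideanSpace.single i 1) (EuclideanSpace.single j 1) := by
    intro i j
    rw [hessMat, Matrix.of_apply, iteratedFDeriv_two_apply]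
    simp [hD]
  let T : En n →L[ℝ] En n := LinearMap.toContinuousLinearMap
    { toFun := fun a => (InnerProductSpace.toDual ℝ (En n)).symm (D a)
      map_add' := fun a b => by rw [map_add, map_add]
      map_smul' := fun c a => by rw [map_smul, map_smulₛₗ]; rfl }
  have hT : ∀ a b, ⟪T a, b⟫ = D a b := fun a b => InnerProductSpace.toDual_symm_apply
  obtain ⟨M, hM⟩ : ∃ M, opM M = T := (Matrix.toEuclideanCLM (n := Fin n) (𝕜 := ℝ)).surjective T
  have hMH : hessMat ψ x = M := by
    ext i j
    rw [hH, ← opM_single M i j, hM, hT, hsym]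
  refine ⟨Matrix.IsSymm.ext fun i j => by rw [hH, hH, hsym], fun σ hσ => ?_⟩
  have hgrad : ∀ h, ⟪gradient ψ x, h⟫ = fderiv ℝ ψ x h := fun h =>
    InnerProductSpace.toDual_symm_apply
  simp only [hgrad, hMH, hM, hT]
  have h1 := hd2.isLittleO.def hσ
  obtain ⟨r, hr, h1⟩ := Metric.eventually_nhds_iff.mp h1
  have h2 := (tendsto_sub_self_nhds x)
  have hmax' : ∀ᶠ h in nhds (0 : En n), v (x + h) - ψ (x + h) ≤ v x - ψ x := by
    have : Filter.Tendsto (fun h => x + h) (nhds (0 : En n)) (nhds x) := by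
      have : Filter.Tendsto (fun h => x + h) (nhds (0 : En n)) (nhds (x + 0)) :=
        (continuous_const.add continuous_id).tendsto 0
      rwa [add_zero] at this
    exact this.eventually hmax
  filter_upwards [hmax', ball_mem_nhds (0 : En n) hr] with h hh hhr
  rw [mem_ball_zero_iff] at hhr
  set R : En n → ℝ := fun k => ψ (x + k) - fderiv ℝ ψ x k - 1 / 2 * D k k with hR
  have hRd : ∀ k, HasFDerivAt R (fderiv ℝ ψ (x + k) - fderiv ℝ ψ x - D k) k := by
    intro k
    have e1 : HasFDerivAt (fun k => ψ (x + k)) (fderiv ℝ ψ (x + k)) k := by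
      exact (hd (x + k)).comp k ((hasFDerivAt_id k).const_add x)
    have e2 : HasFDerivAt (fun k => D k k) _ k := D.hasFDerivAt.clm_apply (hasFDerivAt_id k)
    refine ((e1.sub (fderiv ℝ ψ x).hasFDerivAt).sub (e2.const_mul (1 / 2))).congr_fderiv ?_
    ext a
    simp [hsym a k]
    ring
  have hmv := (convex_segment (0 : En n) h).norm_image_sub_le_of_norm_hasFDerivWithin_le
    (f := R) (C := σ * ‖h‖) (fun k _ => (hRd k).hasFDerivWithinAt) (fun k hk => by
      have hkn : ‖k‖ ≤ ‖h‖ := by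
        obtain ⟨a, b, ha, hb, hab, rfl⟩ := hk
        rw [smul_zero, zero_add, norm_smul, Real.norm_eq_abs, abs_of_nonneg hb]
        nlinarith [norm_nonneg h]
      have := h1 (y := x + k) (by rw [dist_eq_norm, add_sub_cancel_left]; linarith)
      rw [add_sub_cancel_left] at this
      exact this.trans (by gcongr))
    (left_mem_segment ℝ 0 h) (right_mem_segment ℝ 0 h)
  rw [Real.norm_eq_abs, sub_zero] at hmv
  have h3 := (abs_le.mp hmv).2
  simp only [hR, add_zero, map_zero, sub_zero, mul_zero] at h3
  nlinarith

/-- The fattening of a superjet by `σ` disappears in the limit, as `G` is Lipschitz. -/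
theorem visc_sub_jet {n : ℕ} {lam Lam γ : ℝ} (hlam : 0 < lam) (hlamLam : lam ≤ Lam)
    {G : Matrix (Fin n) (Fin n) ℝ → ℝ} (hG : IsUnifEllipticConst lam Lam G)
    {p : En n} {M : Matrix (Fin n) (Fin n) ℝ} (hM : M.IsSymm) {c : ℝ}
    (h : ∀ σ : ℝ, 0 < σ → c ≤ ‖p‖ ^ γ * G (M + (2 * σ) • (1 : Matrix (Fin n) (Fin n) ℝ))) :
    c ≤ ‖p‖ ^ γ * G M := by
  refine le_of_forall_pos_le_add fun ε hε => ?_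
  have hp : 0 ≤ ‖p‖ ^ γ := by positivity
  have hL : 0 < Lam := by linarith
  set σ := ε / (‖p‖ ^ γ * n * Lam * 2 + 1) with hσ
  have hσ0 : 0 < σ := by positivity
  have h1 := h σ hσ0
  have h2 := elliptic_le_mul hlam hlamLam (by positivity : 0 ≤ 2 * σ) hG
    (isSymm_add_smul_one hM (2 * σ)) hM (fun h => by
      rw [add_sub_cancel_left, opM, map_smul, map_one, smul_apply, real_inner_smul_left]
      exact (congrArg _ (real_inner_self_eq_norm_sq h)).le)
  have h3 : ‖p‖ ^ γ * G (M + (2 * σ) • 1) ≤ ‖p‖ ^ γ * (G M + n * Lam * (2 * σ)) := by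
    gcongr; linarith
  have h4 : σ * (‖p‖ ^ γ * n * Lam * 2 + 1) = ε := by rw [hσ]; field_simp
  nlinarith

/-- A viscosity solution satisfies the jet inequalities, as a subsolution for `F x` and, after a
change of sign, as a subsolution for the dual operator. -/
theorem visc_jets {n : ℕ} {lam Lam γ : ℝ} (hlam : 0 < lam) (hlamLam : lam ≤ Lam)
    {F : En n → Matrix (Fin n) (Fin n) ℝ → ℝ} (hF : IsUnifElliptic lam Lam F) {f u : En n → ℝ}
    (hu : IsViscositySolutionOn (ball (0 : En n) 1) (fun x p M => ‖p‖ ^ γ * F x M) f u)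
    {x : En n} (hx : x ∈ ball (0 : En n) 1) {p : En n} {M : Matrix (Fin n) (Fin n) ℝ}
    (hM : M.IsSymm) :
    (SupJet u x p M → f x ≤ ‖p‖ ^ γ * F x M) ∧
    (SupJet (-u) x p M → -f x ≤ ‖p‖ ^ γ * dualOp (F x) M) := by
  have hG : IsUnifEllipticConst lam Lam (F x) := ⟨hF.1 x hx, hF.2 x hx⟩
  constructor
  · intro hj
    refine visc_sub_jet hlam hlamLam hG hM fun σ hσ => ?_
    have h1 := hu.1 _ (quadTest_contDiff x p (M + (2 * σ) • 1)) x hx (hj.isLocalMax hσ)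
    rwa [quadTest_gradient _ _ (isSymm_add_smul_one hM _),
      quadTest_hessMat _ _ (isSymm_add_smul_one hM _)] at h1
  · intro hj
    refine visc_sub_jet hlam hlamLam (dualOp_elliptic hG) hM fun σ hσ => ?_
    have hM' := (isSymm_add_smul_one hM (2 * σ)).neg
    have h1 := hu.2 _ (quadTest_contDiff x (-p) (-(M + (2 * σ) • 1))) x hx (by
      have := (hj.isLocalMax hσ).neg
      refine this.congr (Filter.Eventually.of_forall fun y => ?_)
      simp only [quadTest, Pi.neg_apply, inner_neg_left, opM, map_neg, neg_apply]
      ring)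
    rw [quadTest_gradient _ _ hM', quadTest_hessMat _ _ hM'] at h1
    simp only [norm_neg] at h1
    unfold dualOp
    linarith

theorem viscositySolution_of_jets {n : ℕ} {G : Matrix (Fin n) (Fin n) ℝ → ℝ} {v : En n → ℝ}
    {Ω : Set (En n)}
    (h1 : ∀ x ∈ Ω, ∀ p M, Matrix.IsSymm M → SupJet v x p M → 0 ≤ G M)
    (h2 : ∀ x ∈ Ω, ∀ p M, Matrix.IsSymm M → SupJet (-v) x p M → 0 ≤ dualOp G M) :
    IsViscositySolutionOn Ω (fun _ _ M => G M) (fun _ => 0) v := by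
  constructor
  · intro ψ hψ x hx hmax
    obtain ⟨h3, h4⟩ := supJet_of_isLocalMax hψ hmax
    exact h1 x hx _ _ h3 h4
  · intro ψ hψ x hx hmin
    have hmax : IsLocalMax (fun y => (-v) y - (-ψ) y) x := by
      refine hmin.neg.congr (Filter.Eventually.of_forall fun y => ?_)
      simp only [Pi.neg_apply]; ring
    obtain ⟨h3, h4⟩ := supJet_of_isLocalMax (ψ := -ψ) hψ.neg hmax
    have h5 := h2 x hx _ _ h3 h4
    have h6 : hessMat (-ψ) x = -hessMat ψ x := by
      ext i j
      simp [hessMat, iteratedFDeriv_neg_apply]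
    rw [h6, dualOp, neg_neg] at h5
    simpa using h5

/-! ### Sup-convolutions and estimates for the doubling argument -/

/-- Sup-convolution of a continuous function on a compact set: it is supported from below by
paraboloids of opening `N / 2` everywhere. -/
theorem exists_supConv {E : Type*} [NormedAddCommGroup E] [InnerProductSpace ℝ E]
    {K : Set E} (hK : IsCompact K) (hKne : K.Nonempty) {g : E → ℝ} (hg : ContinuousOn g K)
    {N : ℝ} (hN : 0 < N) :
    ∃ S : E → ℝ, Continuous S ∧
      (∀ a, ∃ x ∈ K, S a = g x - N / 2 * ‖x - a‖ ^ 2) ∧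
      (∀ a, ∀ x ∈ K, g x - N / 2 * ‖x - a‖ ^ 2 ≤ S a) ∧
      ∀ z, ∃ p, ∀ ζ, S z + ⟪p, ζ - z⟫ - N / 2 * ‖ζ - z‖ ^ 2 ≤ S ζ := by
  have h1 : ∀ a, ∃ x ∈ K, ∀ y ∈ K, g y - N / 2 * ‖y - a‖ ^ 2 ≤ g x - N / 2 * ‖x - a‖ ^ 2 := by
    intro a
    obtain ⟨x, hx, hmax⟩ := hK.exists_isMaxOn hKne
      (f := fun x => g x - N / 2 * ‖x - a‖ ^ 2) (hg.sub (by fun_prop))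
    exact ⟨x, hx, fun y hy => hmax hy⟩
  choose m hmK hm using h1
  set S : E → ℝ := fun a => g (m a) - N / 2 * ‖m a - a‖ ^ 2 with hS
  have hsupp : ∀ z ζ, S z + N * ⟪m z - z, ζ - z⟫ - N / 2 * ‖ζ - z‖ ^ 2 ≤ S ζ := by
    intro z ζ
    have h2 := hm ζ (m z) (hmK z)
    have h3 : m z - ζ = (m z - z) - (ζ - z) := by abel
    rw [h3, norm_sub_sq_real] at h2
    simp only [hS]
    linarith
  refine ⟨S, ?_, fun a => ⟨m a, hmK a, rfl⟩, fun a x hx => hm a x hx, fun z =>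
    ⟨N • (m z - z), fun ζ => by rw [real_inner_smul_left]; exact hsupp z ζ⟩⟩
  obtain ⟨R, hR⟩ := hK.isBounded.exists_norm_le
  rw [continuous_iff_continuousAt]
  intro z
  have hbound : ∀ ζ, |S ζ - S z| ≤
      N * (R + ‖z‖ + ‖ζ - z‖) * ‖ζ - z‖ + N / 2 * ‖ζ - z‖ ^ 2 := by
    intro ζ
    have hd := norm_nonneg (ζ - z)
    have e1 := hsupp z ζ
    have e2 := hsupp ζ z
    have a1 := (abs_le.mp (abs_real_inner_le_norm (m z - z) (ζ - z))).1
    have a2 := (abs_le.mp (abs_real_inner_le_norm (m ζ - ζ) (z - ζ))).1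
    have b1 : ‖m z - z‖ ≤ R + ‖z‖ := (norm_sub_le _ _).trans (by linarith [hR _ (hmK z)])
    have b2 : ‖m ζ - ζ‖ ≤ R + ‖z‖ + ‖ζ - z‖ := by
      have b3 : ‖ζ‖ ≤ ‖ζ - z‖ + ‖z‖ := by simpa using norm_add_le (ζ - z) z
      exact (norm_sub_le _ _).trans (by linarith [hR _ (hmK ζ)])
    rw [norm_sub_rev z ζ] at e2 a2
    have c1 : ‖m z - z‖ * ‖ζ - z‖ ≤ (R + ‖z‖ + ‖ζ - z‖) * ‖ζ - z‖ := by gcongr; linarith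
    have c2 : ‖m ζ - ζ‖ * ‖ζ - z‖ ≤ (R + ‖z‖ + ‖ζ - z‖) * ‖ζ - z‖ := by gcongr
    have d1 : N * (-((R + ‖z‖ + ‖ζ - z‖) * ‖ζ - z‖)) ≤ N * ⟪m z - z, ζ - z⟫ := by
      gcongr; linarith
    have d2 : N * (-((R + ‖z‖ + ‖ζ - z‖) * ‖ζ - z‖)) ≤ N * ⟪m ζ - ζ, z - ζ⟫ := by
      gcongr; linarith
    rw [abs_le]
    constructor <;> linarith
  rw [ContinuousAt, tendsto_iff_norm_sub_tendsto_zero]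
  have hlim : Filter.Tendsto (fun ζ => N * (R + ‖z‖ + ‖ζ - z‖) * ‖ζ - z‖ + N / 2 * ‖ζ - z‖ ^ 2)
      (nhds z) (nhds 0) := by
    have hc : Continuous (fun ζ => N * (R + ‖z‖ + ‖ζ - z‖) * ‖ζ - z‖ + N / 2 * ‖ζ - z‖ ^ 2) := by
      fun_prop
    simpa using hc.tendsto z
  exact squeeze_zero (fun _ => norm_nonneg _) hbound hlim

open Filter Topology in
/-- Superjets of the sup-convolution at `a` are superjets of the original function at the
maximizing point. -/
theorem supJet_of_supConv {n : ℕ} {K : Set (En n)} {g S : En n → ℝ} {N : ℝ}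
    (hS : ∀ a, ∀ x ∈ K, g x - N / 2 * ‖x - a‖ ^ 2 ≤ S a) {a x p : En n} (hx : K ∈ 𝓝 x)
    (hSa : S a = g x - N / 2 * ‖x - a‖ ^ 2) {M : Matrix (Fin n) (Fin n) ℝ}
    (hj : SupJet S a p M) : SupJet g x p M := by
  intro σ hσ
  have h1 : Tendsto (fun h => x + h) (𝓝 (0 : En n)) (𝓝 x) := by
    have : Tendsto (fun h => x + h) (𝓝 (0 : En n)) (𝓝 (x + 0)) :=
      (continuous_const.add continuous_id).tendsto 0
    rwa [add_zero] at this
  filter_upwards [hj σ hσ, h1.eventually hx] with h h2 h3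
  have h4 := hS (a + h) (x + h) h3
  rw [add_sub_add_right_eq_sub] at h4
  linarith

/-- A strictly concave (in the radial direction) quadratic bound for `√‖·‖` away from zero. -/
theorem sqrt_norm_bound {E : Type*} [NormedAddCommGroup E] [InnerProductSpace ℝ E]
    {ξ ζ : E} {t : ℝ} (ht : 0 < t) (hξ : ‖ξ‖ = t) (hζ : ‖ζ‖ ≤ t / 100) :
    √‖ξ + ζ‖ ≤ √t + ⟪t⁻¹ • ξ, ζ⟫ / (2 * √t) +
      √t / t ^ 2 * ((33 * ‖ζ‖ ^ 2 - 36 * ⟪t⁻¹ • ξ, ζ⟫ ^ 2) / 128) := by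
  set s := √t with hs
  have hs0 : 0 < s := Real.sqrt_pos.mpr ht
  have hst : s ^ 2 = t := Real.sq_sqrt ht.le
  set q := √‖ξ + ζ‖ / s with hq
  have hq0 : 0 ≤ q := by positivity
  set c := ⟪t⁻¹ • ξ, ζ⟫ with hc
  set α := c / t with hα
  set w := ‖ζ‖ ^ 2 / t ^ 2 with hw
  have hcle : |c| ≤ ‖ζ‖ := by
    refine (abs_real_inner_le_norm _ _).trans ?_
    rw [norm_smul, hξ, norm_inv, Real.norm_eq_abs, abs_of_pos ht, inv_mul_cancel₀ ht.ne', one_mul]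
  have hαle : |α| ≤ 1 / 100 := by
    rw [hα, abs_div, abs_of_pos ht, div_le_iff₀ ht]; linarith
  have hw0 : 0 ≤ w := by positivity
  have hwle : w ≤ 1 / 10000 := by
    rw [hw, div_le_iff₀ (by positivity)]
    nlinarith [norm_nonneg ζ]
  have hq4 : q ^ 4 = 1 + 2 * α + w := by
    have h1 : √‖ξ + ζ‖ ^ 2 = ‖ξ + ζ‖ := Real.sq_sqrt (norm_nonneg _)
    have h2 : ⟪ξ, ζ⟫ = t * c := by
      rw [hc, real_inner_smul_left, mul_inv_cancel_left₀ ht.ne']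
    have h3 : ‖ξ + ζ‖ ^ 2 = t ^ 2 + 2 * (t * c) + ‖ζ‖ ^ 2 := by
      rw [norm_add_sq_real, hξ, h2]
    have h4 : q ^ 4 = (√‖ξ + ζ‖ ^ 2) ^ 2 / (s ^ 2) ^ 2 := by rw [hq]; ring
    rw [h4, h1, hst, h3, hα, hw]
    field_simp
  have hqle : q ≤ 1.03 := by
    by_contra hlt
    push Not at hlt
    have : (1.03 : ℝ) ^ 4 < q ^ 4 := by gcongr
    norm_num at this
    have := (abs_le.mp hαle).2
    linarith
  have hmain : q ≤ 1 + (q ^ 4 - 1) / 4 - 5 / 64 * (q ^ 4 - 1) ^ 2 := by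
    have h1 : 0 ≤ (q ^ 2 + 2 * q + 3) / 4 - 5 / 64 * (q ^ 3 + q ^ 2 + q + 1) ^ 2 := by
      have a1 : q ^ 2 ≤ 1.03 * q := by nlinarith
      have a2 : q ^ 3 ≤ 1.0609 * q := by nlinarith
      have a3 : q ^ 3 + q ^ 2 + q + 1 ≤ 4.19 := by nlinarith
      have a4 : 0 ≤ q ^ 3 + q ^ 2 + q + 1 := by positivity
      have a5 : (q ^ 3 + q ^ 2 + q + 1) ^ 2 ≤ 4.19 * (q ^ 3 + q ^ 2 + q + 1) := by nlinarith
      nlinarith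
    nlinarith [mul_nonneg (sq_nonneg (q - 1)) h1]
  have hfin : q ≤ 1 + α / 2 + (33 * w - 36 * α ^ 2) / 128 := by
    rw [hq4] at hmain
    have h1 : w ^ 2 ≤ w / 10000 := by nlinarith
    nlinarith [sq_nonneg (α + 10 * w), sq_nonneg (2 * α + 10 * w)]
  have h5 : √‖ξ + ζ‖ = s * q := by rw [hq]; field_simp
  rw [h5]
  calc s * q ≤ s * (1 + α / 2 + (33 * w - 36 * α ^ 2) / 128) := by gcongr
    _ = _ := by
      rw [hα, hw]
      have : t = s ^ 2 := hst.symm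
      rw [this]
      field_simp

/-- A Hessian bounded above, and satisfying the equation from one side, is bounded: the equation
controls the trace of `B I - X ≥ 0`. -/
theorem elliptic_norm_bound {n : ℕ} {lam Lam B δ : ℝ} (hlam : 0 < lam) (hlamLam : lam ≤ Lam)
    (hB : 1 ≤ B) (hδ0 : 0 ≤ δ) (hδ1 : δ ≤ 1) (hδ2 : δ ≤ lam / 2)
    {G : Matrix (Fin n) (Fin n) ℝ → ℝ} (hG : IsUnifEllipticConst lam Lam G)
    {X : Matrix (Fin n) (Fin n) ℝ} (hX : X.IsSymm)
    (hle : ∀ h, ⟪opM X h, h⟫ ≤ B * ‖h‖ ^ 2) (hGX : -(δ * (‖X‖ + 2)) ≤ G X) :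
    ‖X‖ ≤ (1 + 2 / lam * (n * Lam + 3)) * B := by
  obtain ⟨h1, h2⟩ := elliptic_le hlamLam (by linarith : 0 ≤ B) hG hX Matrix.isSymm_zero
    (fun h => by rw [sub_zero]; exact hle h)
  rw [sub_zero] at h1 h2
  rw [hG.2, sub_zero] at h2
  set W := B • (1 : Matrix (Fin n) (Fin n) ℝ) - X with hW
  have h3 := norm_le_trace_of_posSemidef h1
  have h4 : ‖X‖ ≤ B + W.trace := by
    rw [Matrix.norm_le_iff (by linarith [h1.trace_nonneg])]
    intro i j
    have h5 : X i j = (B • (1 : Matrix (Fin n) (Fin n) ℝ)) i j - W i j := by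
      rw [hW, Matrix.sub_apply, sub_sub_cancel]
    have h6 := (Matrix.norm_entry_le_entrywise_sup_norm W (i := i) (j := j)).trans h3
    have h7 : ‖(B • (1 : Matrix (Fin n) (Fin n) ℝ)) i j‖ ≤ B := by
      rw [Matrix.smul_apply, Matrix.one_apply]
      split_ifs <;> simp <;> first | linarith | rw [abs_of_nonneg] ; linarith
    rw [h5]
    exact (norm_sub_le _ _).trans (by linarith)
  have h8 := h1.trace_nonneg
  have h9 : δ * (‖X‖ + 2) ≤ δ * (B + W.trace + 2) := by gcongr
  have h10 : δ * W.trace ≤ lam / 2 * W.trace := by gcongr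
  have h11 : δ * (B + 2) ≤ B + 2 := by nlinarith
  have h12 : lam / 2 * W.trace ≤ (n * Lam + 3) * B := by nlinarith
  have h13 : W.trace ≤ 2 / lam * (n * Lam + 3) * B := by
    have : W.trace = 2 / lam * (lam / 2 * W.trace) := by field_simp
    rw [this, mul_assoc]
    gcongr
  linarith

/-! ### The Hölder estimate -/

/-- The matrix inequality of the theorem on sums is incompatible with the equation if the
concavity parameter `m` of the doubling function is large. -/
theorem doubling_matrix_bound {n : ℕ} {lam Lam A m δ : ℝ} (hlam : 0 < lam) (hlamLam : lam ≤ Lam)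
    (hA : 1 ≤ A) (hm : 0 ≤ m) (hδ0 : 0 ≤ δ) (hδ1 : δ ≤ 1) (hδ2 : δ ≤ lam / 2)
    (hδ3 : δ * (32 * (1 + 2 / lam * (n * Lam + 3))) ≤ lam)
    {G : Matrix (Fin n) (Fin n) ℝ → ℝ} (hG : IsUnifEllipticConst lam Lam G)
    {X Y : Matrix (Fin n) (Fin n) ℝ} (hX : X.IsSymm) (hY : Y.IsSymm)
    (hXB : ∀ h, ⟪opM X h, h⟫ ≤ (m + A) * ‖h‖ ^ 2) (hYB : ∀ h, ⟪opM Y h, h⟫ ≤ (m + A) * ‖h‖ ^ 2)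
    (hXY : ∀ h, ⟪opM X h, h⟫ + ⟪opM Y h, h⟫ ≤ A * ‖h‖ ^ 2) {e : En n} (he : ‖e‖ = 1)
    (hee : ⟪opM X e, e⟫ + ⟪opM Y e, e⟫ ≤ A - 3 / 16 * m)
    (hGX : -(δ * (‖X‖ + 2)) ≤ G X) (hGY : -(δ * (‖Y‖ + 2)) ≤ dualOp G Y) :
    lam * m ≤ 8 * (n * Lam * A + lam * A + 4) := by
  have hadd : ∀ h, ⟪opM (X - -Y) h, h⟫ = ⟪opM X h, h⟫ + ⟪opM Y h, h⟫ := by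
    intro h
    rw [sub_neg_eq_add, opM, map_add, add_apply, inner_add_left]
  obtain ⟨h1, h2⟩ := elliptic_le hlamLam (by linarith : 0 ≤ A) hG hX hY.neg
    (fun h => by rw [hadd]; exact hXY h)
  have h3 := inner_le_trace_of_posSemidef h1 he
  rw [opM_smul_one_sub, hadd, he] at h3
  have h4 := elliptic_norm_bound hlam hlamLam (by linarith) hδ0 hδ1 hδ2 hG hX hXB hGX
  have h5 := elliptic_norm_bound hlam hlamLam (by linarith) hδ0 hδ1 hδ2 (dualOp_elliptic hG) hY
    hYB hGY
  set C := 1 + 2 / lam * (n * Lam + 3) with hC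
  have h6 : δ * (‖X‖ + 2) ≤ δ * (C * (m + A) + 2) := by gcongr
  have h7 : δ * (‖Y‖ + 2) ≤ δ * (C * (m + A) + 2) := by gcongr
  have h8 : δ * (32 * C) * (m + A) ≤ lam * (m + A) := by gcongr
  have h9 : lam * (3 / 16 * m) ≤
      lam * (A • (1 : Matrix (Fin n) (Fin n) ℝ) - (X - -Y)).trace := by gcongr; linarith
  unfold dualOp at hGY
  have h10 : 0 ≤ lam * A := by positivity
  nlinarith

/-- At slopes of norm at least one the degenerate factor can be dropped. -/
theorem HalfSol.le_of_one_le {n : ℕ} {G : Matrix (Fin n) (Fin n) ℝ → ℝ} {δ γ : ℝ} {v : En n → ℝ}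
    (hv : HalfSol G δ γ v) (hγ : 0 < γ) {x p : En n} (hx : x ∈ ball (0 : En n) 1)
    {M : Matrix (Fin n) (Fin n) ℝ} (hM : M.IsSymm) (hj : SupJet v x p M) (hp : 1 ≤ ‖p‖) (hδ : 0 ≤ δ) :
    -(δ * (‖M‖ + 2)) ≤ G M := by
  have h1 := hv x hx p M hM hj
  have h2 : 1 ≤ ‖p‖ ^ γ := Real.one_le_rpow hp hγ.le
  nlinarith

set_option maxHeartbeats 2000000 in
open Filter Topology in
/-- The Ishii–Lions doubling argument: if `v z - v y` exceeds `L √‖z - y‖`, the theorem on sums,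
applied to sup-convolutions, produces jets violating `doubling_matrix_bound`. -/
theorem holder_estimate {n : ℕ} {lam Lam γ δ L : ℝ} (hlam : 0 < lam) (hlamLam : lam ≤ Lam)
    (hγ : 0 < γ) (hδ0 : 0 ≤ δ) (hδ1 : δ ≤ 1) (hδ2 : δ ≤ lam / 2)
    (hδ3 : δ * (32 * (1 + 2 / lam * (n * Lam + 3))) ≤ lam)
    (hL : L = 100 + 8 * (n * Lam * 4098 + lam * 4098 + 4) / lam)
    {G : Matrix (Fin n) (Fin n) ℝ → ℝ} (hG : IsUnifEllipticConst lam Lam G)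
    {v : En n → ℝ} (hv : ContinuousOn v (ball 0 1)) (hv1 : ∀ x ∈ ball (0 : En n) 1, |v x| ≤ 1)
    (hs1 : HalfSol G δ γ v) (hs2 : HalfSol (dualOp G) δ γ (-v))
    {y z : En n} (hz : z ∈ ball (0 : En n) (3 / 4)) (hyz : ‖y - z‖ ≤ 1 / 8) :
    v z - v y ≤ L * √‖z - y‖ := by
  by_contra hcon
  push Not at hcon
  have hLam : 0 < Lam := by linarith
  have hL100 : 100 ≤ L := by
    rw [hL]
    have : 0 ≤ 8 * (n * Lam * 4098 + lam * 4098 + 4) / lam := by positivity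
    linarith
  set θ := v z - v y - L * √‖z - y‖ with hθ
  have hθ0 : 0 < θ := by linarith
  set K := closedBall z (1 / 8) with hKdef
  have hK : IsCompact K := isCompact_closedBall z _
  have hzK : z ∈ K := mem_closedBall_self (by norm_num)
  have hyK : y ∈ K := by rw [hKdef, mem_closedBall, dist_eq_norm]; exact hyz
  have hKB : K ⊆ ball 0 1 := by
    intro x hx
    rw [hKdef, mem_closedBall, dist_eq_norm] at hx
    rw [mem_ball_zero_iff] at hz ⊢
    have := norm_add_le (x - z) z
    rw [sub_add_cancel] at this
    linarith
  have hvK : ContinuousOn v K := hv.mono hKB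
  have hbd : ∀ x ∈ K, |v x| ≤ 1 := fun x hx => hv1 x (hKB hx)
  -- scale of uniform continuity of `v` at height `θ`
  obtain ⟨d, hd0, hd⟩ := Metric.uniformContinuousOn_iff.mp
    (hK.uniformContinuousOn_of_continuous hvK) θ hθ0
  -- `N` is the parameter of the sup-convolutions: maximizing points stay within `1 / 32` and `d / 4`
  obtain ⟨N, hN1, hN2⟩ : ∃ N : ℝ, 4096 ≤ N ∧ 64 / d ^ 2 ≤ N :=
    ⟨max 4096 (64 / d ^ 2), le_max_left _ _, le_max_right _ _⟩
  have hN : 0 < N := by linarith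
  obtain ⟨S1, hS1c, hS1m, hS1le, hS1low⟩ := exists_supConv hK ⟨z, hzK⟩ hvK hN
  obtain ⟨S2, hS2c, hS2m, hS2le, hS2low⟩ := exists_supConv hK ⟨z, hzK⟩ hvK.neg hN
  have close1 : ∀ a ∈ K, ∀ x ∈ K, S1 a = v x - N / 2 * ‖x - a‖ ^ 2 → N * ‖x - a‖ ^ 2 ≤ 4 := by
    intro a ha x hx he
    have h1 := hS1le a a ha
    rw [sub_self, norm_zero] at h1
    have := abs_le.mp (hbd a ha)
    have := abs_le.mp (hbd x hx)
    linarith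
  have close2 : ∀ a ∈ K, ∀ x ∈ K, S2 a = (-v) x - N / 2 * ‖x - a‖ ^ 2 → N * ‖x - a‖ ^ 2 ≤ 4 := by
    intro a ha x hx he
    have h1 := hS2le a a ha
    rw [sub_self, norm_zero] at h1
    have := abs_le.mp (hbd a ha)
    have := abs_le.mp (hbd x hx)
    simp only [Pi.neg_apply] at he h1
    linarith
  have close32 : ∀ s : ℝ, N * s ^ 2 ≤ 4 → s ≤ 1 / 32 := by
    intro s hs
    by_contra h
    push Not at h
    nlinarith
  have closed : ∀ s : ℝ, N * s ^ 2 ≤ 4 → s ≤ d / 4 := by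
    intro s hs
    by_contra h
    push Not at h
    rw [div_le_iff₀ (by positivity)] at hN2
    have : (d / 4) ^ 2 < s ^ 2 := by gcongr
    nlinarith
  -- the localization term `2048 ‖a - z‖²` keeps the maximum in the interior of `K × K`
  obtain ⟨⟨a0, b0⟩, hab, habmax⟩ := (hK.prod hK).exists_isMaxOn (⟨(z, z), hzK, hzK⟩)
    (f := fun q : En n × En n => S1 q.1 + S2 q.2 - L * √‖q.1 - q.2‖ - 2048 * ‖q.1 - z‖ ^ 2)
    (by fun_prop)
  obtain ⟨ha0, hb0⟩ : a0 ∈ K ∧ b0 ∈ K := hab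
  have hΦ : ∀ a ∈ K, ∀ b ∈ K, S1 a + S2 b - L * √‖a - b‖ - 2048 * ‖a - z‖ ^ 2 ≤
      S1 a0 + S2 b0 - L * √‖a0 - b0‖ - 2048 * ‖a0 - z‖ ^ 2 := fun a ha b hb =>
    habmax (show (a, b) ∈ K ×ˢ K from ⟨ha, hb⟩)
  have hΦθ : θ ≤ S1 a0 + S2 b0 - L * √‖a0 - b0‖ - 2048 * ‖a0 - z‖ ^ 2 := by
    have h1 := hΦ z hzK y hyK
    have h2 := hS1le z z hzK
    have h3 := hS2le y y hyK
    simp only [sub_self, norm_zero, Pi.neg_apply] at h1 h2 h3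
    linarith
  obtain ⟨x1, hx1K, hx1⟩ := hS1m a0
  obtain ⟨x2, hx2K, hx2⟩ := hS2m b0
  have hS1one : S1 a0 ≤ 1 := by
    have := abs_le.mp (hbd x1 hx1K)
    have : 0 ≤ N / 2 * ‖x1 - a0‖ ^ 2 := by positivity
    linarith
  have hS2one : S2 b0 ≤ 1 := by
    have := abs_le.mp (hbd x2 hx2K)
    have : 0 ≤ N / 2 * ‖x2 - b0‖ ^ 2 := by positivity
    simp only [Pi.neg_apply] at hx2
    linarith
  set t := ‖a0 - b0‖ with ht
  have hst0 : 0 ≤ √t := Real.sqrt_nonneg _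
  have hst : √t ≤ 1 / 50 := by
    have := sq_nonneg ‖a0 - z‖
    nlinarith
  have htsq : √t ^ 2 = t := Real.sq_sqrt (norm_nonneg _)
  have htle : t ≤ 1 / 2500 := by nlinarith
  have haz : ‖a0 - z‖ < 1 / 32 := by
    by_contra h
    push Not at h
    have : 0 ≤ L * √t := by positivity
    nlinarith
  have hbz : ‖b0 - z‖ < 1 / 16 := by
    have h1 : b0 - z = (a0 - z) - (a0 - b0) := by abel
    have := norm_sub_le (a0 - z) (a0 - b0)
    rw [← h1] at this
    linarith
  -- `a0 ≠ b0`: otherwise the maximizing points are `d`-close and `v` varies there by less than `θ`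
  have ht0 : 0 < t := by
    rw [ht, norm_pos_iff, sub_ne_zero]
    intro heq
    have h1 := closed _ (close1 a0 ha0 x1 hx1K hx1)
    have h2 := closed _ (close2 b0 hb0 x2 hx2K hx2)
    have h3 : dist x1 x2 < d := by
      have h4 : x1 - x2 = (x1 - a0) - (x2 - b0) := by rw [heq]; abel
      rw [dist_eq_norm, h4]
      have := norm_sub_le (x1 - a0) (x2 - b0)
      linarith
    have h5 := (abs_lt.mp (Real.dist_eq (v x1) (v x2) ▸ hd x1 hx1K x2 hx2K h3)).2
    have h6 : 0 ≤ N / 2 * ‖x1 - a0‖ ^ 2 := by positivity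
    have h7 : 0 ≤ N / 2 * ‖x2 - b0‖ ^ 2 := by positivity
    have h8 : 0 ≤ L * √t := by positivity
    have h9 := sq_nonneg ‖a0 - z‖
    simp only [Pi.neg_apply] at hx2
    linarith
  have hspos : 0 < √t := Real.sqrt_pos.mpr ht0
  set e := t⁻¹ • (a0 - b0) with he
  have hen : ‖e‖ = 1 := by
    rw [he, norm_smul, ← ht, norm_inv, Real.norm_eq_abs, abs_of_pos ht0, inv_mul_cancel₀ ht0.ne']
  set m := L * (√t / t ^ 2) with hm
  have hmL : L ≤ m := by
    have : 1 ≤ √t / t ^ 2 := by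
      rw [le_div_iff₀ (by positivity)]
      nlinarith
    nlinarith
  set g0 := L / (2 * √t) with hg0
  have hg0le : 2500 ≤ g0 := by
    rw [hg0, le_div_iff₀ (by positivity)]
    nlinarith
  clear_value m g0 e t
  have hr : 0 < min (1 / 16) (t / 200) := lt_min (by norm_num) (by positivity)
  have hmaxq : ∀ h k : En n, ‖h‖ < min (1 / 16) (t / 200) → ‖k‖ < min (1 / 16) (t / 200) →
      S1 (a0 + h) + S2 (b0 + k) ≤ S1 a0 + S2 b0 + ⟪g0 • e + (4096 : ℝ) • (a0 - z), h⟫ +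
        ⟪-(g0 • e), k⟫ + 1 / 2 * (66 / 128 * m * ‖h - k‖ ^ 2 - 72 / 128 * m * ⟪e, h - k⟫ ^ 2 +
          4096 * ‖h‖ ^ 2) := by
    intro h k hh hk
    have hh' := lt_min_iff.mp hh
    have hk' := lt_min_iff.mp hk
    have q1 : a0 + h - z = (a0 - z) + h := by abel
    have q2 : b0 + k - z = (b0 - z) + k := by abel
    have q3 : (a0 + h) - (b0 + k) = (a0 - b0) + (h - k) := by abel
    have m1 : a0 + h ∈ K := by
      rw [hKdef, mem_closedBall, dist_eq_norm, q1]
      linarith [norm_add_le (a0 - z) h, hh'.1]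
    have m2 : b0 + k ∈ K := by
      rw [hKdef, mem_closedBall, dist_eq_norm, q2]
      linarith [norm_add_le (b0 - z) k, hk'.1]
    have h1 := hΦ _ m1 _ m2
    rw [q1, q3, norm_add_sq_real] at h1
    have h2 := sqrt_norm_bound ht0 ht.symm
      (show ‖h - k‖ ≤ t / 100 by linarith [norm_sub_le h k, hh'.2, hk'.2])
    rw [← he] at h2
    have h3 := mul_le_mul_of_nonneg_left h2 (by linarith : 0 ≤ L)
    have h4 : L * (√t + ⟪e, h - k⟫ / (2 * √t) +
        √t / t ^ 2 * ((33 * ‖h - k‖ ^ 2 - 36 * ⟪e, h - k⟫ ^ 2) / 128)) =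
        L * √t + g0 * ⟪e, h - k⟫ + m * ((33 * ‖h - k‖ ^ 2 - 36 * ⟪e, h - k⟫ ^ 2) / 128) := by
      rw [hg0, hm]; ring
    rw [h4] at h3
    have h5 : ⟪g0 • e + (4096 : ℝ) • (a0 - z), h⟫ + ⟪-(g0 • e), k⟫ =
        g0 * ⟪e, h - k⟫ + 4096 * ⟪a0 - z, h⟫ := by
      simp only [inner_add_left, inner_neg_left, real_inner_smul_left, inner_sub_right]
      ring
    linarith
  obtain ⟨a, b, p1, p2, X, Y, haa, hbb, hp1, hp2, hjX, hjY, hXYm⟩ :=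
    theorem_on_sums hS1c hS2c (by positivity) hS1low hS2low hr hmaxq (η := 1 / 64) (by norm_num)
  obtain ⟨MX, hMX, hMXe⟩ := exists_symm_matrix X
  obtain ⟨MY, hMY, hMYe⟩ := exists_symm_matrix Y
  have jX : SupJet S1 a p1 MX := by
    intro σ hσ
    filter_upwards [hjX σ hσ] with h hh
    rw [hMXe]
    linarith [(abs_le.mp hh).2]
  have jY : SupJet S2 b p2 MY := by
    intro σ hσ
    filter_upwards [hjY σ hσ] with h hh
    rw [hMYe]
    linarith [(abs_le.mp hh).2]
  have hKnhds : ∀ x, ‖x - z‖ < 1 / 8 → K ∈ 𝓝 x := fun x hx =>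
    Filter.mem_of_superset (isOpen_ball.mem_nhds (show x ∈ ball z (1 / 8) by
      rwa [mem_ball, dist_eq_norm])) ball_subset_closedBall
  have haz' : ‖a - z‖ ≤ 1 / 64 + 1 / 32 := by
    have h1 : a - z = (a - a0) + (a0 - z) := by abel
    rw [h1]; linarith [norm_add_le (a - a0) (a0 - z)]
  have hbz' : ‖b - z‖ ≤ 1 / 64 + 1 / 16 := by
    have h1 : b - z = (b - b0) + (b0 - z) := by abel
    rw [h1]; linarith [norm_add_le (b - b0) (b0 - z)]
  have haK : a ∈ K := by rw [hKdef, mem_closedBall, dist_eq_norm]; linarith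
  have hbK : b ∈ K := by rw [hKdef, mem_closedBall, dist_eq_norm]; linarith
  obtain ⟨x, hxK, hx⟩ := hS1m a
  obtain ⟨w, hwK, hw⟩ := hS2m b
  have hxn : K ∈ 𝓝 x := by
    refine hKnhds x ?_
    have h1 : x - z = (x - a) + (a - z) := by abel
    rw [h1]; linarith [norm_add_le (x - a) (a - z), close32 _ (close1 a haK x hxK hx)]
  have hwn : K ∈ 𝓝 w := by
    refine hKnhds w ?_
    have h1 : w - z = (w - b) + (b - z) := by abel
    rw [h1]; linarith [norm_add_le (w - b) (b - z), close32 _ (close2 b hbK w hwK hw)]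
  have jX' : SupJet v x p1 MX := supJet_of_supConv hS1le hxn hx jX
  have jY' : SupJet (-v) w p2 MY := supJet_of_supConv hS2le hwn hw jY
  have hge : ‖g0 • e‖ = g0 := by
    rw [norm_smul, hen, mul_one, Real.norm_eq_abs, abs_of_nonneg (by linarith)]
  -- the slopes are dominated by `g0 • e`, the gradient of the penalty, with `g0 ≥ 2500`
  have hp1n : 1 ≤ ‖p1‖ := by
    have h1 : g0 • e = p1 - (p1 - (g0 • e + (4096 : ℝ) • (a0 - z))) - (4096 : ℝ) • (a0 - z) := by
      abel
    have h2 : ‖(4096 : ℝ) • (a0 - z)‖ ≤ 128 := by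
      rw [norm_smul, Real.norm_eq_abs, abs_of_pos (by norm_num)]; linarith
    have h3 := norm_sub_le (p1 - (p1 - (g0 • e + (4096 : ℝ) • (a0 - z)))) ((4096 : ℝ) • (a0 - z))
    have h4 := norm_sub_le p1 (p1 - (g0 • e + (4096 : ℝ) • (a0 - z)))
    rw [← h1, hge] at h3
    linarith
  have hp2n : 1 ≤ ‖p2‖ := by
    have h1 : g0 • e = (p2 - -(g0 • e)) - p2 := by abel
    have h3 := norm_sub_le (p2 - -(g0 • e)) p2
    rw [← h1, hge] at h3
    linarith
  have gX := hs1.le_of_one_le hγ (hKB hxK) hMX jX' hp1n hδ0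
  have gY := hs2.le_of_one_le hγ (hKB hwK) hMY jY' hp2n hδ0
  have hcomb : ∀ h k, ⟪opM MX h, h⟫ + ⟪opM MY k, k⟫ ≤ 66 / 128 * m * ‖h - k‖ ^ 2 -
      72 / 128 * m * ⟪e, h - k⟫ ^ 2 + 4096 * ‖h‖ ^ 2 + 1 / 64 * (‖h‖ ^ 2 + ‖k‖ ^ 2) := by
    intro h k
    rw [hMXe, hMYe]
    exact hXYm h k
  have hm0 : 0 ≤ m := by linarith
  clear hXYm hΦ hmaxq hS1low hS2low hS1le hS2le close1 close2 close32 closed hjX hjY jX jY hd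
  have hfin := doubling_matrix_bound (A := 4098) (m := m) hlam hlamLam (by norm_num) hm0 hδ0 hδ1 hδ2
    hδ3 hG hMX hMY
    (by
      intro h
      have h1 := hcomb h 0
      rw [sub_zero, map_zero, inner_zero_left, norm_zero] at h1
      linarith [mul_nonneg hm0 (sq_nonneg ‖h‖), mul_nonneg hm0 (sq_nonneg ⟪e, h⟫), sq_nonneg ‖h‖,
        add_mul m 4098 (‖h‖ ^ 2)])
    (by
      intro h
      have h1 := hcomb 0 h
      rw [zero_sub, map_zero, inner_zero_left, norm_zero, norm_neg] at h1
      linarith [mul_nonneg hm0 (sq_nonneg ‖h‖), mul_nonneg hm0 (sq_nonneg ⟪e, -h⟫),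
        sq_nonneg ‖h‖, add_mul m 4098 (‖h‖ ^ 2)])
    (by
      intro h
      have h1 := hcomb h h
      rw [sub_self, inner_zero_right, norm_zero] at h1
      linarith [sq_nonneg ‖h‖])
    hen
    (by
      have h1 := hcomb e (-e)
      have h2 : e - -e = (2 : ℝ) • e := by rw [two_smul]; abel
      rw [h2, norm_smul, real_inner_smul_right e e 2, real_inner_self_eq_norm_sq, norm_neg, hen, map_neg,
        inner_neg_neg, Real.norm_eq_abs, abs_of_pos (by norm_num : (0 : ℝ) < 2)] at h1
      linarith)
    gX gY
  have h1 : lam * L = lam * 100 + 8 * (n * Lam * 4098 + lam * 4098 + 4) := by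
    rw [hL]; field_simp
  linarith [mul_le_mul_of_nonneg_left hmL hlam.le]

/-! ### Stability and critical points of test functions -/

theorem opM_le_opNorm {n : ℕ} (M : Matrix (Fin n) (Fin n) ℝ) (h : En n) :
    ⟪opM M h, h⟫ ≤ ‖opM M‖ * ‖h‖ ^ 2 :=
  (real_inner_le_norm _ _).trans (by nlinarith [(opM M).le_opNorm h, norm_nonneg h])

theorem opM_quad_add {n : ℕ} {M : Matrix (Fin n) (Fin n) ℝ} (hM : M.IsSymm) (h k : En n) :
    ⟪opM M (h + k), h + k⟫ = ⟪opM M h, h⟫ + 2 * ⟪opM M h, k⟫ + ⟪opM M k, k⟫ := by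
  rw [map_add, inner_add_left, inner_add_right, inner_add_right, opM_symm hM k h,
    real_inner_comm (opM M h) k]
  ring

theorem elliptic_add_smul_one_le {n : ℕ} {lam Lam c : ℝ} (hlam : 0 < lam) (hlamLam : lam ≤ Lam)
    (hc : 0 ≤ c) {G : Matrix (Fin n) (Fin n) ℝ → ℝ} (hG : IsUnifEllipticConst lam Lam G)
    {M : Matrix (Fin n) (Fin n) ℝ} (hM : M.IsSymm) :
    G (M + c • (1 : Matrix (Fin n) (Fin n) ℝ)) ≤ G M + n * Lam * c := by
  have h1 := elliptic_le_mul hlam hlamLam hc hG (isSymm_add_smul_one hM c) hM (fun h => by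
    have : M + c • (1 : Matrix (Fin n) (Fin n) ℝ) - M = 0 + c • 1 := by abel
    rw [this, opM_add_smul_one, opM, map_zero, zero_apply, zero_add, real_inner_smul_left,
      real_inner_self_eq_norm_sq])
  linarith

open Filter Topology in
/-- Pointwise limits of equi-Hölder functions may be evaluated along convergent points. -/
theorem tendsto_eval_of_holder {n : ℕ} {L : ℝ} {l : Filter ℕ} {v : ℕ → En n → ℝ} {w : En n → ℝ}
    (hhol : ∀ j, ∀ y ∈ ball (0 : En n) (3 / 4), ∀ z ∈ ball (0 : En n) (3 / 4), ‖y - z‖ ≤ 1 / 8 →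
      |v j z - v j y| ≤ L * √‖z - y‖)
    (hw : ∀ x ∈ ball (0 : En n) 1, Tendsto (fun j => v j x) l (𝓝 (w x)))
    {x : ℕ → En n} {y : En n} (hy : y ∈ ball (0 : En n) (3 / 4))
    (hx : ∀ j, x j ∈ ball (0 : En n) (3 / 4)) (hlim : Tendsto x l (𝓝 y)) :
    Tendsto (fun j => v j (x j)) l (𝓝 (w y)) := by
  have h1 := hw y (ball_subset_ball (by norm_num) hy)
  have h2 : Tendsto (fun j => v j (x j) - v j y) l (𝓝 0) := by
    have h3 : Tendsto (fun j => L * √‖x j - y‖) l (𝓝 0) := by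
      have h4 : Tendsto (fun h : En n => L * √‖h - y‖) (𝓝 y) (𝓝 (L * √‖y - y‖)) :=
        (by fun_prop : Continuous (fun h : En n => L * √‖h - y‖)).tendsto _
      rw [sub_self, norm_zero, Real.sqrt_zero, mul_zero] at h4
      exact h4.comp hlim
    refine squeeze_zero_norm' ?_ h3
    have h5 : ∀ᶠ j in l, dist (x j) y < 1 / 8 := hlim.eventually (ball_mem_nhds _ (by norm_num))
    filter_upwards [h5] with j hj
    rw [dist_eq_norm] at hj
    exact hhol j y hy (x j) (hx j) (by rw [norm_sub_rev]; exact hj.le)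
  simpa using h2.add h1

open Filter Topology in
/-- Stability of the degenerate equation under limits, away from critical points of the test
function. -/
theorem limit_jet {n : ℕ} {lam Lam γ L : ℝ} (hlam : 0 < lam) (hlamLam : lam ≤ Lam)
    {U : Ultrafilter ℕ} {v : ℕ → En n → ℝ} {w : En n → ℝ}
    {G : ℕ → Matrix (Fin n) (Fin n) ℝ → ℝ} {G0 : Matrix (Fin n) (Fin n) ℝ → ℝ} {δ : ℕ → ℝ}
    (hG0 : IsUnifEllipticConst lam Lam G0)
    (hvc : ∀ j, ContinuousOn (v j) (ball 0 1)) (hs : ∀ j, HalfSol (G j) (δ j) γ (v j))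
    (hhol : ∀ j, ∀ y ∈ ball (0 : En n) (3 / 4), ∀ z ∈ ball (0 : En n) (3 / 4), ‖y - z‖ ≤ 1 / 8 →
      |v j z - v j y| ≤ L * √‖z - y‖)
    (hw : ∀ x ∈ ball (0 : En n) 1, Tendsto (fun j => v j x) U (𝓝 (w x)))
    (hG : ∀ M : Matrix (Fin n) (Fin n) ℝ, M.IsSymm → Tendsto (fun j => G j M) U (𝓝 (G0 M)))
    (hδ : Tendsto δ U (𝓝 0)) {x p : En n} (hx : x ∈ ball (0 : En n) (3 / 4)) (hp : p ≠ 0)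
    {M : Matrix (Fin n) (Fin n) ℝ} (hM : M.IsSymm) (hj : SupJet w x p M) : 0 ≤ G0 M := by
  -- fattening by `4 σ` makes the contact at `x` strict, so contact points of `v j` converge to `x`
  have key : ∀ σ : ℝ, 0 < σ → 0 ≤ G0 (M + (4 * σ) • (1 : Matrix (Fin n) (Fin n) ℝ)) := by
    intro σ hσ
    set Mσ := M + (4 * σ) • (1 : Matrix (Fin n) (Fin n) ℝ) with hMσ
    have hMσs : Mσ.IsSymm := isSymm_add_smul_one hM _
    have hquad : ∀ h, ⟪opM Mσ h, h⟫ = ⟪opM M h, h⟫ + 4 * σ * ‖h‖ ^ 2 := by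
      intro h
      rw [hMσ, opM_add_smul_one, inner_add_left, real_inner_smul_left, real_inner_self_eq_norm_sq]
    obtain ⟨r1, hr1, hball⟩ := Metric.eventually_nhds_iff_ball.mp (hj σ hσ)
    obtain ⟨r, hr0, hrr1, hr16, hrx⟩ : ∃ r : ℝ, 0 < r ∧ r < r1 ∧ r ≤ 1 / 8 ∧ r < 3 / 4 - ‖x‖ := by
      rw [mem_ball_zero_iff] at hx
      have : 0 < min r1 (min (1 / 8) (3 / 4 - ‖x‖)) :=
        lt_min hr1 (lt_min (by norm_num) (by linarith))
      refine ⟨min r1 (min (1 / 8) (3 / 4 - ‖x‖)) / 2, by linarith, ?_, ?_, ?_⟩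
      · linarith [min_le_left r1 (min (1 / 8) (3 / 4 - ‖x‖))]
      · linarith [(min_le_right r1 _).trans (min_le_left (1 / 8) (3 / 4 - ‖x‖))]
      · linarith [(min_le_right r1 _).trans (min_le_right (1 / 8) (3 / 4 - ‖x‖))]
    have hin : ∀ h ∈ closedBall (0 : En n) r, x + h ∈ ball (0 : En n) (3 / 4) := by
      intro h hh
      rw [mem_closedBall_zero_iff] at hh
      rw [mem_ball_zero_iff]
      linarith [norm_add_le x h]
    have hin1 : ∀ h ∈ closedBall (0 : En n) r, x + h ∈ ball (0 : En n) 1 := fun h hh =>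
      ball_subset_ball (by norm_num) (hin h hh)
    have h0mem : (0 : En n) ∈ closedBall (0 : En n) r := mem_closedBall_self hr0.le
    have hex : ∀ j, ∃ h ∈ closedBall (0 : En n) r, ∀ k ∈ closedBall (0 : En n) r,
        v j (x + k) - ⟪p, k⟫ - 1 / 2 * ⟪opM Mσ k, k⟫ ≤
        v j (x + h) - ⟪p, h⟫ - 1 / 2 * ⟪opM Mσ h, h⟫ := by
      intro j
      have hcont : ContinuousOn (fun h => v j (x + h) - ⟪p, h⟫ - 1 / 2 * ⟪opM Mσ h, h⟫)
          (closedBall (0 : En n) r) := by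
        have : ContinuousOn (fun h => v j (x + h)) (closedBall (0 : En n) r) :=
          (hvc j).comp (by fun_prop) (fun h hh => hin1 h hh)
        exact (this.sub (by fun_prop)).sub (by fun_prop)
      obtain ⟨h, hh, hmax⟩ := (isCompact_closedBall (0 : En n) r).exists_isMaxOn ⟨0, h0mem⟩ hcont
      exact ⟨h, hh, fun k hk => hmax hk⟩
    choose hm hmem hmax using hex
    obtain ⟨hb, hbmem, hlim⟩ := (isCompact_closedBall (0 : En n) r).ultrafilter_le_nhds'
      (U.map hm) (Ultrafilter.mem_map.mpr (Filter.univ_mem' hmem))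
    have hlim : Tendsto hm U (𝓝 hb) := hlim
    have hconv : Tendsto (fun j => v j (x + hm j)) U (𝓝 (w (x + hb))) :=
      tendsto_eval_of_holder hhol hw (hin _ hbmem) (fun j => hin _ (hmem j))
        (tendsto_const_nhds.add hlim)
    have hb0 : hb = 0 := by
      have h1 : Tendsto (fun j => v j (x + hm j) - ⟪p, hm j⟫ - 1 / 2 * ⟪opM Mσ (hm j), hm j⟫) U
          (𝓝 (w (x + hb) - ⟪p, hb⟫ - 1 / 2 * ⟪opM Mσ hb, hb⟫)) := by
        refine (hconv.sub (tendsto_const_nhds.inner hlim)).sub (Tendsto.const_mul _ ?_)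
        exact (((opM Mσ).continuous.tendsto _).comp hlim).inner hlim
      have h2 := hw x (ball_subset_ball (by norm_num) hx)
      have h3 : w x ≤ w (x + hb) - ⟪p, hb⟫ - 1 / 2 * ⟪opM Mσ hb, hb⟫ := by
        refine le_of_tendsto_of_tendsto' h2 h1 (fun j => ?_)
        have := hmax j 0 h0mem
        simpa using this
      have h4 := hball hb (closedBall_subset_ball hrr1 hbmem)
      rw [hquad] at h3
      have h5 : ‖hb‖ ^ 2 ≤ 0 := by
        have : σ * ‖hb‖ ^ 2 ≤ 0 := by linarith
        exact nonpos_of_mul_nonpos_right this hσ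
      have h6 : ‖hb‖ = 0 := by nlinarith [norm_nonneg hb]
      exact norm_eq_zero.mp h6
    rw [hb0] at hlim
    have hpj : Tendsto (fun j => ‖p + opM Mσ (hm j)‖ ^ γ) U (𝓝 (‖p‖ ^ γ)) := by
      have h1 : Tendsto (fun j => p + opM Mσ (hm j)) U (𝓝 (p + opM Mσ 0)) :=
        tendsto_const_nhds.add (((opM Mσ).continuous.tendsto _).comp hlim)
      rw [map_zero, add_zero] at h1
      exact h1.norm.rpow_const (Or.inl (norm_ne_zero_iff.mpr hp))
    have hrhs : Tendsto (fun j => ‖p + opM Mσ (hm j)‖ ^ γ * (G j Mσ + δ j * (‖Mσ‖ + 1))) U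
        (𝓝 (‖p‖ ^ γ * (G0 Mσ + 0 * (‖Mσ‖ + 1)))) :=
      hpj.mul ((hG Mσ hMσs).add (hδ.mul_const _))
    have hineq : ∀ᶠ j in (U : Filter ℕ),
        -δ j ≤ ‖p + opM Mσ (hm j)‖ ^ γ * (G j Mσ + δ j * (‖Mσ‖ + 1)) := by
      have h5 : ∀ᶠ j in (U : Filter ℕ), dist (hm j) 0 < r :=
        hlim.eventually (ball_mem_nhds _ hr0)
      filter_upwards [h5] with j hjr
      refine hs j (x + hm j) (hin1 _ (hmem j)) _ _ hMσs ?_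
      intro τ hτ
      rw [dist_zero_right] at hjr
      filter_upwards [ball_mem_nhds (0 : En n) (sub_pos.mpr hjr)] with k hk
      rw [mem_ball_zero_iff] at hk
      have h6 := hmax j (hm j + k) (by
        rw [mem_closedBall_zero_iff]; linarith [norm_add_le (hm j) k])
      rw [← add_assoc, opM_quad_add hMσs, inner_add_right] at h6
      rw [inner_add_left]
      have : 0 ≤ τ * ‖k‖ ^ 2 := by positivity
      linarith
    have hfin := le_of_tendsto_of_tendsto hδ.neg hrhs hineq
    rw [neg_zero, zero_mul, add_zero] at hfin
    have : 0 < ‖p‖ ^ γ := Real.rpow_pos_of_pos (norm_pos_iff.mpr hp) _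
    exact nonneg_of_mul_nonneg_right hfin this
  by_contra hneg
  push Not at hneg
  have hnL : (0 : ℝ) ≤ n * Lam := by have : 0 < Lam := by linarith
                                     positivity
  set σ := -G0 M / (8 * (n * Lam + 1)) with hσ
  have hσ0 : 0 < σ := div_pos (by linarith) (by positivity)
  have h1 := key σ hσ0
  have h2 := elliptic_add_smul_one_le hlam hlamLam (by positivity : 0 ≤ 4 * σ) hG0 hM
  have h3 : 8 * (n * Lam + 1) * σ = -G0 M := by rw [hσ]; field_simp
  nlinarith

/-- If all eigenvalues of `M` were nonnegative, ellipticity and `G 0 = 0` would give `G M ≥ 0`. -/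
theorem exists_neg_eigenvector {n : ℕ} {lam Lam : ℝ} (hlam : 0 < lam) (hlamLam : lam ≤ Lam)
    {G : Matrix (Fin n) (Fin n) ℝ → ℝ} (hG : IsUnifEllipticConst lam Lam G)
    {M : Matrix (Fin n) (Fin n) ℝ} (hM : M.IsSymm) (hneg : G M < 0) :
    ∃ (e : En n) (ν : ℝ), ‖e‖ = 1 ∧ ν < 0 ∧ opM M e = ν • e := by
  have hH : M.IsHermitian := by
    rw [Matrix.IsHermitian, Matrix.conjTranspose_eq_transpose_of_trivial]; exact hM
  by_contra hcon
  push Not at hcon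
  have hpsd : M.PosSemidef := by
    rw [hH.posSemidef_iff_eigenvalues_nonneg]
    intro i
    by_contra hi
    push Not at hi
    refine hcon (hH.eigenvectorBasis i) (hH.eigenvalues i) (hH.eigenvectorBasis.orthonormal.1 i)
      (by simpa using hi) ?_
    ext k
    have := congrFun (hH.mulVec_eigenvectorBasis i) k
    simpa [opM] using this
  have h1 := elliptic_le_mul hlam hlamLam le_rfl hG Matrix.isSymm_zero hM (fun h => by
    rw [zero_sub, opM, map_neg, neg_apply, inner_neg_left, zero_mul]
    linarith [(posSemidef_iff_opM.mp hpsd).2 h])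
  rw [hG.2] at h1
  linarith

open Filter Topology in
/-- A function satisfying `G(D²w) ≥ 0` against test functions with nonvanishing gradient satisfies
it against all test functions. If the test function has a critical point, perturbing it by
`ε |⟪e, ·⟫|`, `e` an eigenvector of the Hessian for a negative eigenvalue, moves the contact point to
one where the slope is nonzero. -/
theorem jet_of_nonzero_slope {n : ℕ} {lam Lam : ℝ} (hlam : 0 < lam) (hlamLam : lam ≤ Lam)
    {G : Matrix (Fin n) (Fin n) ℝ → ℝ} (hG : IsUnifEllipticConst lam Lam G) {w : En n → ℝ}
    (hwc : ContinuousOn w (ball 0 (3 / 4)))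
    (hw : ∀ x ∈ ball (0 : En n) (3 / 4), ∀ (p : En n) (M : Matrix (Fin n) (Fin n) ℝ), p ≠ 0 →
      M.IsSymm → SupJet w x p M → 0 ≤ G M)
    {x p : En n} (hx : x ∈ ball (0 : En n) (3 / 4))
    {M : Matrix (Fin n) (Fin n) ℝ} (hM : M.IsSymm) (hj : SupJet w x p M) : 0 ≤ G M := by
  by_cases hp : p ≠ 0
  · exact hw x hx p M hp hM hj
  push Not at hp
  subst hp
  by_contra hneg
  push Not at hneg
  have hnL : (0 : ℝ) ≤ n * Lam := by have : 0 < Lam := by linarith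
                                     positivity
  obtain ⟨σ, hσ0, hσ⟩ : ∃ σ : ℝ, 0 < σ ∧
      G (M + (4 * σ) • (1 : Matrix (Fin n) (Fin n) ℝ)) < 0 := by
    refine ⟨-G M / (8 * (n * Lam + 1)), div_pos (by linarith) (by positivity), ?_⟩
    set σ := -G M / (8 * (n * Lam + 1)) with hσ
    have hσ0 : 0 < σ := div_pos (by linarith) (by positivity)
    have h2 := elliptic_add_smul_one_le hlam hlamLam (by positivity : 0 ≤ 4 * σ) hG hM
    have h3 : 8 * (n * Lam + 1) * σ = -G M := by rw [hσ]; field_simp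
    nlinarith
  set Mσ := M + (4 * σ) • (1 : Matrix (Fin n) (Fin n) ℝ) with hMσ
  have hMσs : Mσ.IsSymm := isSymm_add_smul_one hM _
  have hquad : ∀ h, ⟪opM Mσ h, h⟫ = ⟪opM M h, h⟫ + 4 * σ * ‖h‖ ^ 2 := by
    intro h
    rw [hMσ, opM_add_smul_one, inner_add_left, real_inner_smul_left, real_inner_self_eq_norm_sq]
  obtain ⟨e, ν, he, hν, hev⟩ := exists_neg_eigenvector hlam hlamLam hG hMσs hσ
  obtain ⟨r1, hr1, hball⟩ := Metric.eventually_nhds_iff_ball.mp (hj σ hσ0)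
  obtain ⟨r, hr0, hrr1, hrx⟩ : ∃ r : ℝ, 0 < r ∧ r < r1 ∧ r < 3 / 4 - ‖x‖ := by
    rw [mem_ball_zero_iff] at hx
    have : 0 < min r1 (3 / 4 - ‖x‖) := lt_min hr1 (by linarith)
    refine ⟨min r1 (3 / 4 - ‖x‖) / 2, by linarith, ?_, ?_⟩
    · linarith [min_le_left r1 (3 / 4 - ‖x‖)]
    · linarith [min_le_right r1 (3 / 4 - ‖x‖)]
  have hin : ∀ h ∈ closedBall (0 : En n) r, x + h ∈ ball (0 : En n) (3 / 4) := by
    intro h hh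
    rw [mem_closedBall_zero_iff] at hh
    rw [mem_ball_zero_iff]
    linarith [norm_add_le x h]
  have h0mem : (0 : En n) ∈ closedBall (0 : En n) r := mem_closedBall_self hr0.le
  set ε := σ * r / 2 with hε
  have hε0 : 0 < ε := by positivity
  have hcont : ContinuousOn (fun h => w (x + h) - 1 / 2 * ⟪opM Mσ h, h⟫ + ε * |⟪e, h⟫|)
      (closedBall (0 : En n) r) := by
    have : ContinuousOn (fun h => w (x + h)) (closedBall (0 : En n) r) :=
      hwc.comp (by fun_prop) (fun h hh => hin h hh)
    exact (this.sub (by fun_prop)).add (by fun_prop)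
  obtain ⟨h, hh, hmax'⟩ := (isCompact_closedBall (0 : En n) r).exists_isMaxOn ⟨0, h0mem⟩ hcont
  have hmax : ∀ k ∈ closedBall (0 : En n) r, w (x + k) - 1 / 2 * ⟪opM Mσ k, k⟫ + ε * |⟪e, k⟫| ≤
      w (x + h) - 1 / 2 * ⟪opM Mσ h, h⟫ + ε * |⟪e, h⟫| := fun k hk => hmax' hk
  have hhr : ‖h‖ < r := by
    have h1 := hmax 0 h0mem
    have h2 := hball h (closedBall_subset_ball hrr1 hh)
    simp only [add_zero, map_zero, inner_zero_left, inner_zero_right, abs_zero, mul_zero,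
      sub_zero] at h1 h2
    rw [hquad] at h1
    have h3 : |⟪e, h⟫| ≤ ‖h‖ := by simpa [he] using abs_real_inner_le_norm e h
    have h4 : ε * |⟪e, h⟫| ≤ ε * ‖h‖ := by gcongr
    have h5 : σ * ‖h‖ ^ 2 ≤ σ * r / 2 * ‖h‖ := by rw [← hε]; linarith
    by_contra hcon
    push Not at hcon
    have h6 : ‖h‖ * (σ * (‖h‖ - r / 2)) ≤ 0 := by linarith
    have h7 : 0 < ‖h‖ * (σ * (‖h‖ - r / 2)) := by
      have : 0 < ‖h‖ - r / 2 := by linarith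
      have : 0 < ‖h‖ := by linarith
      positivity
    linarith
  -- `s` is the sign of `⟪e, h⟫`, so that `|⟪e, ·⟫|` is touched from below by `s ⟪e, ·⟫` at `h`
  obtain ⟨s, hs1, hs2, hs3⟩ : ∃ s : ℝ, s * s = 1 ∧ s * ⟪e, h⟫ = |⟪e, h⟫| ∧
      ∀ c : ℝ, s * c ≤ |c| := by
    rcases le_total 0 ⟪e, h⟫ with hc | hc
    · exact ⟨1, by norm_num, by rw [abs_of_nonneg hc, one_mul], fun c => by
        rw [one_mul]; exact le_abs_self c⟩
    · exact ⟨-1, by norm_num, by rw [abs_of_nonpos hc]; ring, fun c => by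
        rw [neg_one_mul]; exact neg_le_abs c⟩
  -- pairing with `e` would give `ν |⟪e, h⟫| = ε`, impossible as `ν < 0 < ε`
  have hslope : opM Mσ h - (ε * s) • e ≠ 0 := by
    intro h0
    have h1 : ⟪opM Mσ h, e⟫ = ε * s := by
      rw [sub_eq_zero.mp h0, real_inner_smul_left, real_inner_self_eq_norm_sq, he]; ring
    rw [opM_symm hMσs, hev, real_inner_smul_right, real_inner_comm] at h1
    have h2 : ν * |⟪e, h⟫| = ε := by
      rw [← hs2]
      calc ν * (s * ⟪e, h⟫) = s * (ν * ⟪e, h⟫) := by ring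
        _ = ε * (s * s) := by rw [h1]; ring
        _ = ε := by rw [hs1, mul_one]
    nlinarith [abs_nonneg ⟪e, h⟫]
  refine absurd (hw (x + h) (hin h hh) _ Mσ hslope hMσs ?_) (not_le.mpr hσ)
  intro τ hτ
  filter_upwards [ball_mem_nhds (0 : En n) (sub_pos.mpr hhr)] with k hk
  rw [mem_ball_zero_iff] at hk
  have h6 := hmax (h + k) (by rw [mem_closedBall_zero_iff]; linarith [norm_add_le h k])
  rw [← add_assoc, opM_quad_add hMσs] at h6
  have h7 := mul_le_mul_of_nonneg_left (hs3 ⟪e, h + k⟫) hε0.le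
  rw [inner_add_right, mul_add s, hs2] at h7
  rw [inner_add_right] at h6
  rw [inner_sub_left, real_inner_smul_left]
  have : 0 ≤ τ * ‖k‖ ^ 2 := by positivity
  linarith

/-! ### Improvement of decay by compactness -/

open Filter Topology in
theorem ultrafilter_limit {U : Ultrafilter ℕ} {f : ℕ → ℝ} {B : ℝ} (hf : ∀ j, |f j| ≤ B) :
    ∃ l, Tendsto f U (𝓝 l) := by
  obtain ⟨l, -, hl⟩ := (isCompact_Icc (a := -B) (b := B)).ultrafilter_le_nhds' (U.map f)
    (Ultrafilter.mem_map.mpr (Filter.univ_mem' fun j => abs_le.mp (hf j)))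
  exact ⟨l, hl⟩

open Filter Topology in
theorem exists_small_radius {C₀ α₀ β : ℝ} (hβ : β < α₀) :
    ∃ ρ : ℝ, 0 < ρ ∧ ρ < 1 / 4 ∧ C₀ * (2 * ρ) ^ (1 + α₀) < ρ ^ (1 + β) := by
  have h1 : Tendsto (fun ρ : ℝ => C₀ * 2 ^ (1 + α₀) * ρ ^ (α₀ - β)) (𝓝[>] 0) (𝓝 0) := by
    have h2 : Tendsto (fun ρ : ℝ => C₀ * 2 ^ (1 + α₀) * ρ ^ (α₀ - β)) (𝓝 0)
        (𝓝 (C₀ * 2 ^ (1 + α₀) * 0 ^ (α₀ - β))) :=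
      (Real.continuousAt_rpow_const 0 _ (Or.inr (by linarith))).tendsto.const_mul _
    rw [Real.zero_rpow (by linarith), mul_zero] at h2
    exact h2.mono_left nhdsWithin_le_nhds
  have h3 : ∀ᶠ ρ : ℝ in 𝓝[>] 0, ρ < 1 / 4 :=
    nhdsWithin_le_nhds (gt_mem_nhds (by norm_num))
  have h4 : ∀ᶠ ρ : ℝ in 𝓝[>] 0, 0 < ρ := self_mem_nhdsWithin
  obtain ⟨ρ, ⟨h5, h6⟩, h7⟩ := ((h4.and h3).and (h1.eventually (gt_mem_nhds one_pos))).exists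
  refine ⟨ρ, h5, h6, ?_⟩
  have e1 : ρ ^ (1 + α₀) = ρ ^ (α₀ - β) * ρ ^ (1 + β) := by
    rw [← Real.rpow_add h5]; ring_nf
  rw [Real.mul_rpow (by norm_num) h5.le, e1]
  have h8 : 0 < ρ ^ (1 + β) := Real.rpow_pos_of_pos h5 _
  calc C₀ * (2 ^ (1 + α₀) * (ρ ^ (α₀ - β) * ρ ^ (1 + β)))
      = C₀ * 2 ^ (1 + α₀) * ρ ^ (α₀ - β) * ρ ^ (1 + β) := by ring
    _ < 1 * ρ ^ (1 + β) := by gcongr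
    _ = _ := one_mul _

open Filter Topology in
theorem gradient_eq_zero_of_growth {n : ℕ} {w : En n → ℝ} {α : ℝ} (hα : 0 < α)
    (hw : ∀ x ∈ ball (0 : En n) 1, |w x| ≤ ‖x‖ ^ (1 + α)) : w 0 = 0 ∧ gradient w 0 = 0 := by
  have h0 : w 0 = 0 := by
    have := hw 0 (mem_ball_self one_pos)
    rw [norm_zero, Real.zero_rpow (by linarith)] at this
    exact abs_nonpos_iff.mp this
  refine ⟨h0, HasGradientAt.gradient ?_⟩
  rw [hasGradientAt_iff_isLittleO]
  rw [Asymptotics.isLittleO_iff]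
  intro c hc
  have h1 : Tendsto (fun x : En n => ‖x‖ ^ α) (𝓝 0) (𝓝 0) := by
    have h2 : Tendsto (fun x : En n => ‖x‖ ^ α) (𝓝 0) (𝓝 (‖(0 : En n)‖ ^ α)) :=
      (continuous_norm.tendsto _).rpow_const (Or.inr hα.le)
    rwa [norm_zero, Real.zero_rpow hα.ne'] at h2
  filter_upwards [h1.eventually (gt_mem_nhds hc), ball_mem_nhds (0 : En n) one_pos] with x hx1 hx2
  rw [h0, sub_zero, sub_zero, inner_zero_left, sub_zero, Real.norm_eq_abs]
  refine (hw x hx2).trans ?_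
  rcases eq_or_lt_of_le (norm_nonneg x) with hx | hx
  · rw [← hx, Real.zero_rpow (by linarith), mul_zero]
  · rw [Real.rpow_add hx, Real.rpow_one, mul_comm]
    gcongr

open Filter Topology in
/-- Improvement of decay by compactness: a sequence of counterexamples with errors tending to zero is
equi-Hölder and converges to a solution of a homogeneous equation, for which the interior
`C^{1,α₀}` estimate gives decay faster than `ρ^{1+β}`. -/
theorem improvement_of_decay {n : ℕ} {lam Lam γ α α₀ β C₀ : ℝ} (hlam : 0 < lam)
    (hlamLam : lam ≤ Lam) (hγ : 0 < γ) (hα : 0 < α) (hβ : β < α₀)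
    (hapriori : InteriorC1AlphaEstimate n lam Lam α₀ C₀) :
    ∃ ρ δ : ℝ, 0 < ρ ∧ ρ < 1 / 4 ∧ 0 < δ ∧
      ∀ G : Matrix (Fin n) (Fin n) ℝ → ℝ, IsUnifEllipticConst lam Lam G →
      ∀ v : En n → ℝ, ContinuousOn v (ball 0 1) →
      (∀ x ∈ ball (0 : En n) 1, |v x| ≤ ‖x‖ ^ (1 + α)) →
      HalfSol G δ γ v → HalfSol (dualOp G) δ γ (-v) →
      ∀ x ∈ closedBall (0 : En n) ρ, |v x| ≤ ρ ^ (1 + β) := by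
  obtain ⟨ρ, hρ0, hρ4, hρ⟩ := exists_small_radius (C₀ := C₀) hβ
  have hLam : 0 < Lam := by linarith
  set C := 32 * (1 + 2 / lam * (n * Lam + 3)) with hC
  have hC0 : 0 < C := by positivity
  obtain ⟨δ0, hδ0, hδ1, hδ2, hδ3⟩ : ∃ δ0 : ℝ, 0 < δ0 ∧ δ0 ≤ 1 ∧ δ0 ≤ lam / 2 ∧ δ0 * C ≤ lam := by
    refine ⟨min 1 (min (lam / 2) (lam / C)), by positivity, min_le_left _ _,
      (min_le_right _ _).trans (min_le_left _ _), ?_⟩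
    rw [← le_div_iff₀ hC0]
    exact (min_le_right _ _).trans (min_le_right _ _)
  by_contra hcon
  push Not at hcon
  have hcon' : ∀ j : ℕ, ∃ G : Matrix (Fin n) (Fin n) ℝ → ℝ, IsUnifEllipticConst lam Lam G ∧
      ∃ v : En n → ℝ, ContinuousOn v (ball 0 1) ∧
      (∀ x ∈ ball (0 : En n) 1, |v x| ≤ ‖x‖ ^ (1 + α)) ∧
      HalfSol G (δ0 / (j + 1)) γ v ∧ HalfSol (dualOp G) (δ0 / (j + 1)) γ (-v) ∧
      ∃ x ∈ closedBall (0 : En n) ρ, ρ ^ (1 + β) < |v x| := fun j =>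
    hcon ρ (δ0 / (j + 1)) hρ0 hρ4 (by positivity)
  choose G hG v hvc hvg hs1 hs2 x hxm hxv using hcon'
  have hv1 : ∀ j, ∀ y ∈ ball (0 : En n) 1, |v j y| ≤ 1 := fun j y hy => by
    rw [mem_ball_zero_iff] at hy
    exact (hvg j y (by rwa [mem_ball_zero_iff])).trans
      (Real.rpow_le_one (norm_nonneg _) hy.le (by linarith))
  set L := 100 + 8 * (n * Lam * 4098 + lam * 4098 + 4) / lam with hL
  have hδle : ∀ j : ℕ, δ0 / ((j : ℝ) + 1) ≤ δ0 := fun j =>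
    div_le_self hδ0.le (by linarith [(Nat.cast_nonneg j : (0 : ℝ) ≤ j)])
  have hhol1 : ∀ j, ∀ z ∈ ball (0 : En n) (3 / 4), ∀ y, ‖y - z‖ ≤ 1 / 8 →
      v j z - v j y ≤ L * √‖z - y‖ := fun j z hz y hyz =>
    holder_estimate hlam hlamLam hγ hδ0.le hδ1 hδ2 hδ3 hL (hG j) (hvc j) (hv1 j)
      ((hs1 j).mono (hδle j)) ((hs2 j).mono (hδle j)) hz hyz
  have hhol : ∀ j, ∀ y ∈ ball (0 : En n) (3 / 4), ∀ z ∈ ball (0 : En n) (3 / 4), ‖y - z‖ ≤ 1 / 8 →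
      |v j z - v j y| ≤ L * √‖z - y‖ := by
    intro j y hy z hz hyz
    have h1 := hhol1 j z hz y hyz
    have h2 := hhol1 j y hy z (by rwa [norm_sub_rev])
    rw [norm_sub_rev] at h2
    rw [abs_le]
    constructor <;> linarith
  -- limits along an ultrafilter replace the extraction of subsequences
  let U : Ultrafilter ℕ := hyperfilter ℕ
  have hU : (U : Filter ℕ) ≤ atTop := Nat.hyperfilter_le_atTop
  have hwex : ∀ y : En n, ∃ l, y ∈ ball (0 : En n) 1 → Tendsto (fun j => v j y) U (𝓝 l) := by
    intro y
    by_cases hy : y ∈ ball (0 : En n) 1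
    · obtain ⟨l, hl⟩ := ultrafilter_limit (U := U) (fun j => hv1 j y hy)
      exact ⟨l, fun _ => hl⟩
    · exact ⟨0, fun h => absurd h hy⟩
  choose w hw using hwex
  have hGex : ∀ M : Matrix (Fin n) (Fin n) ℝ, ∃ l, M.IsSymm →
      Tendsto (fun j => G j M) U (𝓝 l) := by
    intro M
    by_cases hM : M.IsSymm
    · obtain ⟨l, hl⟩ := ultrafilter_limit (U := U) (f := fun j => G j M) (fun j => by
        have := elliptic_lipschitz hlam hlamLam (hG j) hM Matrix.isSymm_zero
        rwa [(hG j).2, sub_zero] at this)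
      exact ⟨l, fun _ => hl⟩
    · exact ⟨0, fun h => absurd h hM⟩
  choose G0 hGlim using hGex
  have hG0 : IsUnifEllipticConst lam Lam G0 := by
    refine ⟨fun M N hM hN => ⟨?_, ?_⟩, ?_⟩
    · exact ge_of_tendsto' ((hGlim M hM).sub (hGlim N hN)) (fun j => ((hG j).1 M N hM hN).1)
    · exact le_of_tendsto' ((hGlim M hM).sub (hGlim N hN)) (fun j => ((hG j).1 M N hM hN).2)
    · refine tendsto_nhds_unique (hGlim 0 Matrix.isSymm_zero) ?_
      simp only [(hG _).2]
      exact tendsto_const_nhds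
  have hdual : ∀ M : Matrix (Fin n) (Fin n) ℝ, M.IsSymm →
      Tendsto (fun j => dualOp (G j) M) U (𝓝 (dualOp G0 M)) := fun M hM => (hGlim (-M) hM.neg).neg
  have hδlim : Tendsto (fun j : ℕ => δ0 / ((j : ℝ) + 1)) U (𝓝 0) :=
    (tendsto_const_div_atTop_nhds_zero_nat δ0 |>.comp (tendsto_add_atTop_nat 1)
      |>.congr (fun j => by simp)).mono_left hU
  have hwg : ∀ y ∈ ball (0 : En n) 1, |w y| ≤ ‖y‖ ^ (1 + α) := fun y hy =>
    le_of_tendsto' (hw y hy).abs (fun j => hvg j y hy)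
  have hwhol : ∀ y ∈ ball (0 : En n) (3 / 4), ∀ z ∈ ball (0 : En n) (3 / 4), ‖y - z‖ ≤ 1 / 8 →
      |w z - w y| ≤ L * √‖z - y‖ := by
    intro y hy z hz hyz
    exact le_of_tendsto' ((hw z (ball_subset_ball (by norm_num) hz)).sub
      (hw y (ball_subset_ball (by norm_num) hy))).abs (fun j => hhol j y hy z hz hyz)
  have hwc : ContinuousOn w (ball 0 (3 / 4)) := by
    intro y hy
    refine ContinuousAt.continuousWithinAt ?_
    rw [ContinuousAt, tendsto_iff_norm_sub_tendsto_zero]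
    have h4 : Tendsto (fun h : En n => L * √‖h - y‖) (𝓝 y) (𝓝 (L * √‖y - y‖)) :=
      (by fun_prop : Continuous (fun h : En n => L * √‖h - y‖)).tendsto _
    rw [sub_self, norm_zero, Real.sqrt_zero, mul_zero] at h4
    refine squeeze_zero' (Eventually.of_forall fun _ => norm_nonneg _) ?_ h4
    filter_upwards [isOpen_ball.mem_nhds hy, ball_mem_nhds y (by norm_num : (0 : ℝ) < 1 / 8)]
      with z hz hzy
    rw [mem_ball, dist_eq_norm, norm_sub_rev] at hzy
    exact hwhol y hy z hz hzy.le
  have hvisc : IsViscositySolutionOn (ball (0 : En n) (3 / 4)) (fun _ _ M => G0 M) (fun _ => 0) w := by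
    refine viscositySolution_of_jets ?_ ?_
    · intro y hy p M hM hj
      exact jet_of_nonzero_slope hlam hlamLam hG0 hwc (fun y hy p M hp hM hj =>
        limit_jet hlam hlamLam hG0 hvc hs1 hhol hw hGlim hδlim hy hp hM hj) hy hM hj
    · intro y hy p M hM hj
      refine jet_of_nonzero_slope hlam hlamLam (dualOp_elliptic hG0) (w := -w) hwc.neg
        (fun y hy p M hp hM hj =>
        limit_jet hlam hlamLam (v := fun j => -v j) (w := -w) (dualOp_elliptic hG0)
          (fun j => (hvc j).neg) hs2
          (L := L) ?_ (fun y hy => (hw y hy).neg) hdual hδlim hy hp hM hj) hy hM hj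
      intro j y hy z hz hyz
      have := hhol j y hy z hz hyz
      rw [← abs_neg] at this
      simp only [Pi.neg_apply]
      convert this using 2
      ring
  obtain ⟨hw0, hwgrad⟩ := gradient_eq_zero_of_growth hα hwg
  have hest := hapriori G0 hG0 w hwc hvisc (fun y hy => by
    have hy1 : y ∈ ball (0 : En n) 1 := ball_subset_ball (by norm_num) hy
    exact le_of_tendsto' (hw y hy1).abs (fun j => hv1 j y hy1)) hw0 hwgrad (2 * ρ) (by linarith)
    (by linarith)
  obtain ⟨xb, hxb, hxlim⟩ := (isCompact_closedBall (0 : En n) ρ).ultrafilter_le_nhds' (U.map x)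
    (Ultrafilter.mem_map.mpr (Filter.univ_mem' hxm))
  have hsub : closedBall (0 : En n) ρ ⊆ ball 0 (3 / 4) := closedBall_subset_ball (by linarith)
  have h1 := tendsto_eval_of_holder hhol hw (hsub hxb) (fun j => hsub (hxm j)) hxlim
  have h2 : ρ ^ (1 + β) ≤ |w xb| := ge_of_tendsto' h1.abs (fun j => (hxv j).le)
  have h3 := hest xb (closedBall_subset_ball (by linarith) hxb)
  linarith

/-! ### Rescaling -/

theorem pucciMinus_smul {n : ℕ} {lam Lam c : ℝ} (hc : 0 ≤ c) (Z : Matrix (Fin n) (Fin n) ℝ) :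
    pucciMinus lam Lam (c • Z) = c * pucciMinus lam Lam Z := by
  unfold pucciMinus
  rw [← smul_eq_mul, ← Real.sInf_smul_of_nonneg hc]
  congr 1
  ext t
  rw [Set.mem_smul_set]
  constructor
  · rintro ⟨A, h1, h2, h3, rfl⟩
    exact ⟨_, ⟨A, h1, h2, h3, rfl⟩, by rw [Matrix.mul_smul, Matrix.trace_smul]⟩
  · rintro ⟨s, ⟨A, h1, h2, h3, rfl⟩, rfl⟩
    exact ⟨A, h1, h2, h3, by rw [Matrix.mul_smul, Matrix.trace_smul]⟩

theorem elliptic_rescale {n : ℕ} {lam Lam c : ℝ} (hc : 0 < c)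
    {G : Matrix (Fin n) (Fin n) ℝ → ℝ} (hG : IsUnifEllipticConst lam Lam G) :
    IsUnifEllipticConst lam Lam (fun M => G (c • M) / c) := by
  refine ⟨fun M N hM hN => ?_, by simp [hG.2]⟩
  have h1 := hG.1 (c • M) (c • N) (hM.smul c) (hN.smul c)
  rw [← smul_sub] at h1
  unfold pucciPlus at h1 ⊢
  rw [← smul_neg, pucciMinus_smul hc.le, pucciMinus_smul hc.le] at h1
  simp only [← sub_div]
  rw [le_div_iff₀ hc, div_le_iff₀ hc]
  constructor <;> linarith [h1.1, h1.2]

open Filter Topology in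
theorem supJet_rescale {n : ℕ} {u : En n → ℝ} {r N : ℝ} (hr : 0 < r) (hN : 0 < N)
    {y p : En n} {M : Matrix (Fin n) (Fin n) ℝ}
    (hj : SupJet (fun y => u (r • y) / N) y p M) :
    SupJet u (r • y) ((N / r) • p) ((N / r ^ 2) • M) := by
  intro σ hσ
  have h1 : Tendsto (fun h : En n => r⁻¹ • h) (𝓝 0) (𝓝 0) := by
    have : Tendsto (fun h : En n => r⁻¹ • h) (𝓝 0) (𝓝 (r⁻¹ • (0 : En n))) :=
      (continuous_const_smul _).tendsto _
    rwa [smul_zero] at this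
  filter_upwards [h1.eventually (hj (σ * r ^ 2 / N) (by positivity))] with h hh
  rw [smul_add, smul_inv_smul₀ hr.ne', map_smul, real_inner_smul_left, real_inner_smul_right,
    real_inner_smul_right, norm_smul, norm_inv, Real.norm_eq_abs, abs_of_pos hr,
    div_le_iff₀ hN] at hh
  rw [real_inner_smul_left, opM, map_smul, smul_apply, real_inner_smul_left]
  refine hh.trans (le_of_eq ?_)
  field_simp

/-- The equation for the rescaled function `u (r y) / N`: the error is small if `r` is small and the
Hessian scale `N / r²` is bounded below. -/
theorem halfSol_rescale {n : ℕ} {γ K₁ αb μ c₀ r N δ : ℝ} (hK₁ : 0 < K₁) (hαb : 0 < αb)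
    (hγ : 0 < γ)
    {F : En n → Matrix (Fin n) (Fin n) ℝ → ℝ} {f u : En n → ℝ}
    (hF : ∀ x ∈ ball (0 : En n) 1, ∀ M : Matrix (Fin n) (Fin n) ℝ, M.IsSymm →
      F x M - F 0 M ≤ K₁ * ‖x‖ ^ αb * (‖M‖ + 1))
    (hu : ∀ x ∈ ball (0 : En n) 1, ∀ (p : En n) (M : Matrix (Fin n) (Fin n) ℝ), M.IsSymm →
      SupJet u x p M → f x ≤ ‖p‖ ^ γ * F x M)
    (hr : 0 < r) (hr1 : r ≤ 1) (hN : 0 < N) (hc₀ : 0 < c₀) (hc : c₀ ≤ N / r ^ 2)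
    (hf : ∀ y ∈ ball (0 : En n) 1, -(|μ| * N ^ (1 + γ)) ≤ f (r • y))
    (hδ1 : |μ| * r ^ 2 ≤ δ) (hδ2 : K₁ * r ^ αb * max 1 (1 / c₀) ≤ δ) :
    HalfSol (fun M => F 0 ((N / r ^ 2) • M) / (N / r ^ 2)) δ γ (fun y => u (r • y) / N) := by
  intro y hy p M hM hj
  set c := N / r ^ 2 with hcdef
  have hc0 : 0 < c := by positivity
  have hj' := supJet_rescale hr hN hj
  rw [← hcdef] at hj'
  have hy1 : ‖y‖ < 1 := by rwa [mem_ball_zero_iff] at hy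
  have hry : ‖r • y‖ ≤ r := by
    rw [norm_smul, Real.norm_eq_abs, abs_of_pos hr]; nlinarith [norm_nonneg y]
  have hryb : r • y ∈ ball (0 : En n) 1 := by
    rw [mem_ball_zero_iff, norm_smul, Real.norm_eq_abs, abs_of_pos hr]
    nlinarith [norm_nonneg y]
  have h1 := hu _ hryb _ _ (hM.smul c) hj'
  have h2 := hF _ hryb _ (hM.smul c)
  have h3 := hf y hy
  have hnc : ‖c • M‖ = c * ‖M‖ := by
    let _ : NormedSpace ℝ (Matrix (Fin n) (Fin n) ℝ) := Matrix.normedSpace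
    rw [norm_smul, Real.norm_eq_abs, abs_of_pos hc0]
  rw [hnc] at h2
  have hpn : ‖(N / r) • p‖ ^ γ = (N / r) ^ γ * ‖p‖ ^ γ := by
    rw [norm_smul, Real.norm_eq_abs, abs_of_pos (by positivity), Real.mul_rpow (by positivity)
      (norm_nonneg _)]
  rw [hpn] at h1
  have hmax1 : (1 : ℝ) ≤ max 1 (1 / c₀) := le_max_left _ _
  have hmaxc : 1 ≤ c * max 1 (1 / c₀) := by
    calc (1 : ℝ) = c₀ * (1 / c₀) := by field_simp
      _ ≤ c * max 1 (1 / c₀) := by gcongr; exact le_max_right _ _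
  have h4 : K₁ * ‖r • y‖ ^ αb * (c * ‖M‖ + 1) ≤ c * (δ * (‖M‖ + 1)) := by
    calc K₁ * ‖r • y‖ ^ αb * (c * ‖M‖ + 1) ≤ K₁ * r ^ αb * (c * ‖M‖ + 1) := by gcongr
      _ ≤ K₁ * r ^ αb * (c * max 1 (1 / c₀) * (‖M‖ + 1)) := by
        gcongr
        have : c * ‖M‖ ≤ c * max 1 (1 / c₀) * ‖M‖ := by
          gcongr
          exact le_mul_of_one_le_right hc0.le hmax1
        linarith
      _ = c * (K₁ * r ^ αb * max 1 (1 / c₀) * (‖M‖ + 1)) := by ring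
      _ ≤ c * (δ * (‖M‖ + 1)) := by gcongr
  have h5 : F (r • y) (c • M) ≤ c * (F 0 (c • M) / c + δ * (‖M‖ + 1)) := by
    have : c * (F 0 (c • M) / c) = F 0 (c • M) := by field_simp
    rw [mul_add, this]
    linarith
  have hA : 0 < (N / r) ^ γ * c := by positivity
  have h6 : -(|μ| * N ^ (1 + γ)) ≤
      (N / r) ^ γ * c * (‖p‖ ^ γ * (F 0 (c • M) / c + δ * (‖M‖ + 1))) := by
    calc -(|μ| * N ^ (1 + γ)) ≤ (N / r) ^ γ * ‖p‖ ^ γ * F (r • y) (c • M) := h3.trans h1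
      _ ≤ (N / r) ^ γ * ‖p‖ ^ γ * (c * (F 0 (c • M) / c + δ * (‖M‖ + 1))) := by gcongr
      _ = _ := by ring
  have h7 : |μ| * N ^ (1 + γ) ≤ (N / r) ^ γ * c * δ := by
    have e1 : N ^ (1 + γ) = N ^ γ * N := by rw [add_comm, Real.rpow_add_one hN.ne']
    have e2 : (N / r) ^ γ = N ^ γ / r ^ γ := Real.div_rpow hN.le hr.le _
    have e3 : r ^ γ ≤ 1 := Real.rpow_le_one hr.le hr1 hγ.le
    have e4 : 0 < r ^ γ := Real.rpow_pos_of_pos hr _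
    have e5 : 0 < N ^ γ := Real.rpow_pos_of_pos hN _
    have e6 : (N / r) ^ γ * c * (|μ| * r ^ 2) = |μ| * N ^ (1 + γ) / r ^ γ := by
      rw [e1, e2, hcdef]; field_simp
    calc |μ| * N ^ (1 + γ) ≤ |μ| * N ^ (1 + γ) / r ^ γ := by
          rw [le_div_iff₀ e4]
          exact mul_le_of_le_one_right (by positivity) e3
      _ = (N / r) ^ γ * c * (|μ| * r ^ 2) := e6.symm
      _ ≤ _ := by gcongr
  have h8 : (N / r) ^ γ * c * (-δ) ≤
      (N / r) ^ γ * c * (‖p‖ ^ γ * (F 0 (c • M) / c + δ * (‖M‖ + 1))) := by linarith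
  exact le_of_mul_le_mul_left h8 hA

/-! ### The iteration -/

open Filter Topology in
theorem exists_start_radius {K₁ αb μ r₀ δ κ : ℝ} (hαb : 0 < αb) (hr₀ : 0 < r₀) (hδ : 0 < δ) :
    ∃ r₁ : ℝ, 0 < r₁ ∧ r₁ ≤ r₀ ∧ |μ| * r₁ ^ 2 ≤ δ ∧ K₁ * r₁ ^ αb * κ ≤ δ := by
  have h1 : Tendsto (fun r : ℝ => |μ| * r ^ 2) (𝓝[>] 0) (𝓝 0) := by
    have h : Tendsto (fun r : ℝ => |μ| * r ^ 2) (𝓝 0) (𝓝 (|μ| * 0 ^ 2)) :=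
      (by fun_prop : Continuous fun r : ℝ => |μ| * r ^ 2).tendsto _
    rw [zero_pow two_ne_zero, mul_zero] at h
    exact h.mono_left nhdsWithin_le_nhds
  have h2 : Tendsto (fun r : ℝ => K₁ * r ^ αb * κ) (𝓝[>] 0) (𝓝 0) := by
    have h : Tendsto (fun r : ℝ => K₁ * r ^ αb * κ) (𝓝 0) (𝓝 (K₁ * 0 ^ αb * κ)) :=
      ((Real.continuousAt_rpow_const 0 _ (Or.inr hαb.le)).tendsto.const_mul _).mul_const _
    rw [Real.zero_rpow hαb.ne', mul_zero, zero_mul] at h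
    exact h.mono_left nhdsWithin_le_nhds
  have h3 : ∀ᶠ r : ℝ in 𝓝[>] 0, r < r₀ := nhdsWithin_le_nhds (gt_mem_nhds hr₀)
  have h4 : ∀ᶠ r : ℝ in 𝓝[>] 0, 0 < r := self_mem_nhdsWithin
  obtain ⟨r, ⟨h5, h6⟩, h7, h8⟩ := ((h4.and h3).and
    ((h1.eventually (gt_mem_nhds hδ)).and (h2.eventually (gt_mem_nhds hδ)))).exists
  exact ⟨r, h5, h6.le, h7.le, h8.le⟩

theorem abs_rhs_eq {γ μ : ℝ} (hγ : 0 < γ) (s : ℝ) : |μ * |s| ^ γ * s| = |μ| * |s| ^ (1 + γ) := by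
  rw [abs_mul, abs_mul, abs_of_nonneg (Real.rpow_nonneg (abs_nonneg s) γ), add_comm 1 γ,
    Real.rpow_add_one' (abs_nonneg s) (by linarith)]
  ring

/-- One scale of the iteration: decay `K' ‖x‖^{1+α}` on a ball, with `K'` not too small compared with
the radius, improves by the factor `ρ^{β-α}` on the ball shrunk by `ρ`. -/
theorem decay_step {n : ℕ} {lam Lam γ K₁ αb μ α β ρ δ κ R K' : ℝ}
    (hγ : 0 < γ) (hK₁ : 0 < K₁) (hαb : 0 < αb) (hα : 0 < α) (hα1 : α < 1)
    (hlam : 0 < lam) (hlamLam : lam ≤ Lam)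
    (hρ0 : 0 < ρ) (hρ1 : ρ < 1 / 4)
    (himp : ∀ G : Matrix (Fin n) (Fin n) ℝ → ℝ, IsUnifEllipticConst lam Lam G →
      ∀ v : En n → ℝ, ContinuousOn v (ball 0 1) →
      (∀ x ∈ ball (0 : En n) 1, |v x| ≤ ‖x‖ ^ (1 + α)) →
      HalfSol G δ γ v → HalfSol (dualOp G) δ γ (-v) →
      ∀ x ∈ closedBall (0 : En n) ρ, |v x| ≤ ρ ^ (1 + β))
    {F : En n → Matrix (Fin n) (Fin n) ℝ → ℝ} {u : En n → ℝ}
    (hF : IsUnifElliptic lam Lam F)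
    (hHolder : ∀ x ∈ ball (0 : En n) 1, ∀ y ∈ ball (0 : En n) 1,
        ∀ M : Matrix (Fin n) (Fin n) ℝ, M.IsSymm →
        |F x M - F y M| ≤ K₁ * ‖x - y‖ ^ αb * (‖M‖ + 1))
    (hu_cont : ContinuousOn u (ball (0 : En n) 1))
    (hu_sol : IsViscositySolutionOn (ball (0 : En n) 1)
        (fun x p M => ‖p‖ ^ γ * F x M) (fun x => μ * |u x| ^ γ * u x) u)
    (hK' : 0 < K') (hR0 : 0 < R) (hR1 : R ≤ 1) (hκ : 0 < κ)
    (hKR : κ * R ^ (1 - α) ≤ K')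
    (hδ1 : |μ| * R ^ 2 ≤ δ) (hδ2 : K₁ * R ^ αb * max 1 (1 / κ) ≤ δ)
    (hdecay : ∀ x : En n, ‖x‖ < R → |u x| ≤ K' * ‖x‖ ^ (1 + α))
    {x : En n} (hx : ‖x‖ < ρ * R) : |u x| ≤ K' * ρ ^ (β - α) * ‖x‖ ^ (1 + α) := by
  rcases eq_or_lt_of_le (norm_nonneg x) with hx0 | hx0
  · have := hdecay x (by rw [← hx0]; exact hR0)
    rw [← hx0, Real.zero_rpow (by linarith), mul_zero] at this ⊢
    exact this
  -- `x` is placed on the sphere of radius `ρ` after rescaling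
  set r := ‖x‖ / ρ with hr
  have hr0 : 0 < r := by positivity
  have hrR : r < R := by rw [hr, div_lt_iff₀ hρ0]; linarith
  have hr1 : r ≤ 1 := by linarith
  have hxr : ‖x‖ = ρ * r := by rw [hr]; field_simp
  set N := K' * r ^ (1 + α) with hN
  have hN0 : 0 < N := by positivity
  have hc : κ ≤ N / r ^ 2 := by
    have h1 : N / r ^ 2 * r ^ (1 - α) = K' := by
      have : r ^ (1 + α) * r ^ (1 - α) = r ^ 2 := by
        rw [← Real.rpow_add hr0, ← Real.rpow_natCast]; norm_num
      rw [hN, div_mul_eq_mul_div, mul_assoc, this]; field_simp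
    have h2 : r ^ (1 - α) ≤ R ^ (1 - α) := by gcongr
    have h3 : 0 < r ^ (1 - α) := by positivity
    have h4 : κ * r ^ (1 - α) ≤ N / r ^ 2 * r ^ (1 - α) := by
      rw [h1]; exact (by gcongr : κ * r ^ (1 - α) ≤ κ * R ^ (1 - α)).trans hKR
    exact le_of_mul_le_mul_right h4 h3
  have hc0 : 0 < N / r ^ 2 := by positivity
  have hnrm : ∀ y : En n, ‖r • y‖ = r * ‖y‖ := fun y => by
    rw [norm_smul, Real.norm_eq_abs, abs_of_pos hr0]
  have hin : ∀ y ∈ ball (0 : En n) 1, ‖r • y‖ < R := by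
    intro y hy
    rw [mem_ball_zero_iff] at hy
    rw [hnrm]; nlinarith
  have hub : ∀ y ∈ ball (0 : En n) 1, |u (r • y)| ≤ N * ‖y‖ ^ (1 + α) := by
    intro y hy
    refine (hdecay _ (hin y hy)).trans (le_of_eq ?_)
    rw [hnrm, Real.mul_rpow hr0.le (norm_nonneg _), hN]; ring
  have hubN : ∀ y ∈ ball (0 : En n) 1, |u (r • y)| ≤ N := by
    intro y hy
    refine (hub y hy).trans ?_
    rw [mem_ball_zero_iff] at hy
    exact mul_le_of_le_one_right hN0.le (Real.rpow_le_one (norm_nonneg _) hy.le (by linarith))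
  have hfb : ∀ y ∈ ball (0 : En n) 1,
      |μ * |u (r • y)| ^ γ * u (r • y)| ≤ |μ| * N ^ (1 + γ) := by
    intro y hy
    rw [abs_rhs_eq hγ]
    gcongr
    exact hubN y hy
  have hδ1' : |μ| * r ^ 2 ≤ δ := le_trans (by gcongr) hδ1
  have hδ2' : K₁ * r ^ αb * max 1 (1 / κ) ≤ δ := le_trans (by gcongr) hδ2
  have h0 : (0 : En n) ∈ ball (0 : En n) 1 := mem_ball_self one_pos
  have hF0 : IsUnifEllipticConst lam Lam (F 0) := ⟨hF.1 0 h0, hF.2 0 h0⟩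
  have hs1 : HalfSol (fun M => F 0 ((N / r ^ 2) • M) / (N / r ^ 2)) δ γ
      (fun y => u (r • y) / N) := by
    refine halfSol_rescale (f := fun x => μ * |u x| ^ γ * u x) hK₁ hαb hγ ?_ ?_ hr0 hr1 hN0 hκ hc ?_
      hδ1' hδ2'
    · intro z hz M hM
      have := (abs_le.mp (hHolder z hz 0 h0 M hM)).2
      rwa [sub_zero] at this
    · intro z hz p M hM hj
      exact (visc_jets hlam hlamLam hF hu_sol hz hM).1 hj
    · intro y hy
      exact (abs_le.mp (hfb y hy)).1
  have hs2 : HalfSol (dualOp (fun M => F 0 ((N / r ^ 2) • M) / (N / r ^ 2))) δ γ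
      (-(fun y => u (r • y) / N)) := by
    have h := halfSol_rescale (F := fun x => dualOp (F x)) (u := -u) (μ := μ) (r := r) (N := N)
      (δ := δ) (f := fun x => -(μ * |u x| ^ γ * u x)) hK₁ hαb hγ
      (by
        intro z hz M hM
        have := (abs_le.mp (hHolder z hz 0 h0 (-M) hM.neg)).1
        rw [sub_zero, norm_neg] at this
        simp only [dualOp]
        linarith)
      (fun z hz p M hM hj => (visc_jets hlam hlamLam hF hu_sol hz hM).2 hj) hr0 hr1 hN0 hκ hc
      (fun y hy => neg_le_neg (abs_le.mp (hfb y hy)).2) hδ1' hδ2'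
    have e1 : dualOp (fun M => F 0 ((N / r ^ 2) • M) / (N / r ^ 2)) =
        fun M => dualOp (F 0) ((N / r ^ 2) • M) / (N / r ^ 2) := by
      funext M
      simp only [dualOp, smul_neg, neg_div]
    have e2 : (-(fun y => u (r • y) / N) : En n → ℝ) = fun y => (-u) (r • y) / N := by
      funext y
      simp only [Pi.neg_apply, neg_div]
    rw [e1, e2]
    exact h
  have hcont : ContinuousOn (fun y => u (r • y) / N) (ball (0 : En n) 1) := by
    refine ContinuousOn.div_const ?_ _
    refine hu_cont.comp (by fun_prop) (fun y hy => ?_)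
    rw [mem_ball_zero_iff]
    exact (hin y hy).trans_le hR1
  have hgr : ∀ y ∈ ball (0 : En n) 1, |u (r • y) / N| ≤ ‖y‖ ^ (1 + α) := by
    intro y hy
    rw [abs_div, abs_of_pos hN0, div_le_iff₀ hN0, mul_comm]
    exact hub y hy
  have hres := himp _ (elliptic_rescale hc0 hF0) _ hcont hgr hs1 hs2 (r⁻¹ • x) (by
    rw [mem_closedBall_zero_iff, norm_smul, norm_inv, Real.norm_eq_abs, abs_of_pos hr0, hxr]
    field_simp
    exact le_rfl)
  rw [smul_inv_smul₀ hr0.ne', abs_div, abs_of_pos hN0, div_le_iff₀ hN0] at hres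
  refine hres.trans (le_of_eq ?_)
  have e : ρ ^ (1 + β) = ρ ^ (β - α) * ρ ^ (1 + α) := by
    rw [← Real.rpow_add hρ0]; ring_nf
  rw [hxr, Real.mul_rpow hρ0.le hr0.le, hN, e]
  ring

/-- A decay estimate near the origin extends to the ball of radius `1/4` for a bounded function. -/
theorem decay_extend {n : ℕ} {u : En n → ℝ} {K₀ r₁ C₁ β : ℝ} (hK₀ : 0 < K₀) (hr₁ : 0 < r₁)
    (hC₁ : 0 < C₁) (hβ : 0 < β) (hb : ∀ x ∈ ball (0 : En n) 1, |u x| ≤ K₀)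
    (hd : ∀ x : En n, ‖x‖ < r₁ → |u x| ≤ C₁ * ‖x‖ ^ (1 + β)) :
    ∃ C : ℝ, 0 < C ∧ ∀ x ∈ ball (0 : En n) (1/4), |u x| ≤ C * ‖x‖ ^ (1 + β) := by
  have hp : 0 < r₁ ^ (1 + β) := by positivity
  refine ⟨C₁ + K₀ / r₁ ^ (1 + β), by positivity, fun x hx => ?_⟩
  have h0 : 0 ≤ ‖x‖ ^ (1 + β) := by positivity
  rcases lt_or_ge ‖x‖ r₁ with h | h
  · refine (hd x h).trans ?_
    gcongr
    have : 0 ≤ K₀ / r₁ ^ (1 + β) := by positivity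
    linarith
  · have h1 : r₁ ^ (1 + β) ≤ ‖x‖ ^ (1 + β) := by gcongr
    have h2 : K₀ = K₀ / r₁ ^ (1 + β) * r₁ ^ (1 + β) := by field_simp
    have h3 : K₀ / r₁ ^ (1 + β) * r₁ ^ (1 + β) ≤ K₀ / r₁ ^ (1 + β) * ‖x‖ ^ (1 + β) := by gcongr
    have h4 := hb x (ball_subset_ball (by norm_num) hx)
    nlinarith [mul_nonneg hC₁.le h0]

/-- **Regularity at singular nodal points of eigenfunctions.** A bounded viscosity
solution of `|∇u|^γ F(x,D²u) = μ|u|^γ u` with a singular nodal point at the origin has a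
right-hand side vanishing at rate `(1+γ)(1+α*) ≥ 1+γ`, and is therefore `C^{1,α₀⁻}`
at the origin. -/
theorem eigenfunction_singular_point_regularity
    {n : ℕ} (lam Lam γ K₁ αb μ K K₀ αs α₀ C₀ r₀ : ℝ)
    (hlam : 0 < lam) (hlamLam : lam ≤ Lam)
    (hγ : γ ∈ Set.Ioo (0:ℝ) 1) (hK₁ : 0 < K₁) (hαb : αb ∈ Set.Ioo (0:ℝ) 1)
    (hK : 0 < K) (hK₀ : 0 < K₀) (hαs : αs ∈ Set.Ioo (0:ℝ) 1)
    (hα₀ : α₀ ∈ Set.Ioo (0:ℝ) 1) (hC₀ : 0 < C₀)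
    (hr₀ : 0 < r₀) (hr₀1 : r₀ ≤ 1)
    (hapriori : InteriorC1AlphaEstimate n lam Lam α₀ C₀)
    (F : En n → Matrix (Fin n) (Fin n) ℝ → ℝ) (u : En n → ℝ)
    (hF : IsUnifElliptic lam Lam F)
    (hHolder : ∀ x ∈ ball (0 : En n) 1, ∀ y ∈ ball (0 : En n) 1,
        ∀ M : Matrix (Fin n) (Fin n) ℝ, M.IsSymm →
        |F x M - F y M| ≤ K₁ * ‖x - y‖ ^ αb * (‖M‖ + 1))
    (hu_cont : ContinuousOn u (ball (0 : En n) 1))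
    (hu_bdd : ∀ x ∈ ball (0 : En n) 1, |u x| ≤ K₀)
    (hu_sol : IsViscositySolutionOn (ball (0 : En n) 1)
        (fun x p M => ‖p‖ ^ γ * F x M) (fun x => μ * |u x| ^ γ * u x) u)
    (hu0 : u 0 = 0) (hdiff : DifferentiableAt ℝ u 0) (hgrad : gradient u 0 = 0)
    (hgrowth : ∀ x ∈ ball (0 : En n) r₀, |u x| ≤ K * ‖x‖ ^ (1 + αs)) :
    (∀ x ∈ ball (0 : En n) r₀,
        |μ * |u x| ^ γ * u x| ≤ |μ| * K ^ (1 + γ) * ‖x‖ ^ ((1 + γ) * (1 + αs))) ∧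
    (∃ Ct : ℝ, 0 < Ct ∧
        ∀ x ∈ ball (0 : En n) r₀, |μ * |u x| ^ γ * u x| ≤ Ct * ‖x‖ ^ (1 + γ)) ∧
    ∀ β : ℝ, 0 < β → β < α₀ →
      ∃ C : ℝ, 0 < C ∧ ∀ x ∈ ball (0 : En n) (1/4), |u x| ≤ C * ‖x‖ ^ (1 + β) := by
  obtain ⟨hγ0, hγ1⟩ := hγ
  obtain ⟨hαb0, hαb1⟩ := hαb
  obtain ⟨hαs0, hαs1⟩ := hαs
  have hfirst : ∀ x ∈ ball (0 : En n) r₀,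
      |μ * |u x| ^ γ * u x| ≤ |μ| * K ^ (1 + γ) * ‖x‖ ^ ((1 + γ) * (1 + αs)) := by
    intro x hx
    rw [abs_rhs_eq hγ0, mul_assoc, mul_comm (1 + γ) (1 + αs), Real.rpow_mul (norm_nonneg x),
      ← Real.mul_rpow hK.le (by positivity)]
    gcongr
    exact hgrowth x hx
  refine ⟨hfirst, ⟨|μ| * K ^ (1 + γ) + 1, by positivity, fun x hx => ?_⟩, fun β hβ0 hβα₀ => ?_⟩
  · refine (hfirst x hx).trans ?_
    rw [mem_ball_zero_iff] at hx
    rcases eq_or_lt_of_le (norm_nonneg x) with hx0 | hx0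
    · rw [← hx0, Real.zero_rpow (by positivity), Real.zero_rpow (by positivity), mul_zero, mul_zero]
    have h1 : ‖x‖ ^ ((1 + γ) * (1 + αs)) ≤ ‖x‖ ^ (1 + γ) :=
      Real.rpow_le_rpow_of_exponent_ge hx0 (by linarith) (by nlinarith)
    gcongr
    linarith
  rcases le_or_gt β αs with hβαs | hβαs
  · refine decay_extend hK₀ hr₀ hK hβ0 hu_bdd fun x hx => ?_
    refine (hgrowth x (by rwa [mem_ball_zero_iff])).trans ?_
    rcases eq_or_lt_of_le (norm_nonneg x) with hx0 | hx0
    · rw [← hx0, Real.zero_rpow (by positivity), Real.zero_rpow (by positivity)]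
    gcongr K * ?_
    exact Real.rpow_le_rpow_of_exponent_ge hx0 (by linarith) (by linarith)
  obtain ⟨ρ, δ, hρ0, hρ4, hδ, himp⟩ := improvement_of_decay hlam hlamLam hγ0 hαs0 hβα₀ hapriori
  obtain ⟨r₁, hr₁0, hr₁r, hδ1, hδ2⟩ := exists_start_radius (K₁ := K₁) (αb := αb) (μ := μ)
    (κ := max 1 (1 / K)) hαb0 hr₀ hδ
  have hr₁1 : r₁ ≤ 1 := hr₁r.trans hr₀1
  set d := β - αs with hd
  have hd0 : 0 < d := by linarith
  have hiter : ∀ k : ℕ, ∀ x : En n, ‖x‖ < ρ ^ k * r₁ →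
      |u x| ≤ K * (ρ ^ k) ^ d * ‖x‖ ^ (1 + αs) := by
    intro k
    induction k with
    | zero =>
      intro x hx
      rw [pow_zero, one_mul] at hx
      rw [pow_zero, Real.one_rpow, mul_one]
      exact hgrowth x (by rw [mem_ball_zero_iff]; linarith)
    | succ k ih =>
      intro x hx
      have hρk0 : 0 < ρ ^ k := by positivity
      have hρk1 : ρ ^ k ≤ 1 := pow_le_one₀ hρ0.le (by linarith)
      have hRle : ρ ^ k * r₁ ≤ r₁ := mul_le_of_le_one_left hr₁0.le hρk1
      have hR0 : 0 < ρ ^ k * r₁ := by positivity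
      have hstep := decay_step (κ := K) (R := ρ ^ k * r₁) (K' := K * (ρ ^ k) ^ d) hγ0 hK₁ hαb0 hαs0
        hαs1 hlam hlamLam hρ0 hρ4 himp hF hHolder hu_cont hu_sol (by positivity) hR0 (by linarith)
        hK
        (by
          -- the constants shrink no faster than the radii, since `β - αs ≤ 1 - αs`
          have h1 : (ρ ^ k * r₁) ^ (1 - αs) ≤ (ρ ^ k) ^ (1 - αs) := by
            refine Real.rpow_le_rpow hR0.le ?_ (by linarith)
            exact mul_le_of_le_one_right hρk0.le hr₁1
          have h2 : (ρ ^ k) ^ (1 - αs) ≤ (ρ ^ k) ^ d :=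
            Real.rpow_le_rpow_of_exponent_ge hρk0 hρk1 (by linarith [hα₀.2])
          gcongr
          exact h1.trans h2)
        (le_trans (by gcongr) hδ1) (le_trans (by gcongr) hδ2) ih (x := x)
        (by rw [pow_succ] at hx; linarith)
      rw [← hd] at hstep
      rwa [pow_succ, Real.mul_rpow hρk0.le hρ0.le, ← mul_assoc]
  have hρr : 0 < ρ * r₁ := by positivity
  refine decay_extend (C₁ := K * ((ρ * r₁) ^ d)⁻¹) hK₀ hr₁0 (by positivity) hβ0 hu_bdd
    fun x hx => ?_
  rcases eq_or_lt_of_le (norm_nonneg x) with hx0 | hx0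
  · have hx' : x = 0 := norm_eq_zero.mp hx0.symm
    rw [hx', hu0, abs_zero]
    positivity
  -- the annulus `ρ ^ (k + 1) * r₁ ≤ ‖x‖ < ρ ^ k * r₁` containing `x`
  obtain ⟨k, hk1, hk2⟩ : ∃ k : ℕ, ρ ^ (k + 1) * r₁ ≤ ‖x‖ ∧ ‖x‖ < ρ ^ k * r₁ := by
    have hex : ∃ m : ℕ, ρ ^ m * r₁ ≤ ‖x‖ := by
      obtain ⟨m, hm⟩ := exists_pow_lt_of_lt_one (div_pos hx0 hr₁0) (show ρ < 1 by linarith)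
      exact ⟨m, ((lt_div_iff₀ hr₁0).mp hm).le⟩
    classical
    have hm := Nat.find_spec hex
    rcases hj : Nat.find hex with _ | k
    · rw [hj, pow_zero, one_mul] at hm
      linarith
    · rw [hj] at hm
      exact ⟨k, hm, not_le.mp (Nat.find_min hex (m := k) (by omega))⟩
  have h1 : ρ ^ k ≤ ‖x‖ / (ρ * r₁) := by
    rw [le_div_iff₀ hρr]
    rw [pow_succ] at hk1
    linarith
  have h2 : (ρ ^ k) ^ d ≤ ‖x‖ ^ d * ((ρ * r₁) ^ d)⁻¹ := by
    rw [← div_eq_mul_inv, ← Real.div_rpow hx0.le hρr.le]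
    exact Real.rpow_le_rpow (by positivity) h1 hd0.le
  have h3 : ‖x‖ ^ (1 + β) = ‖x‖ ^ d * ‖x‖ ^ (1 + αs) := by
    rw [← Real.rpow_add hx0]
    congr 1
    rw [hd]
    ring
  calc |u x| ≤ K * (ρ ^ k) ^ d * ‖x‖ ^ (1 + αs) := hiter k x hk2
    _ ≤ K * (‖x‖ ^ d * ((ρ * r₁) ^ d)⁻¹) * ‖x‖ ^ (1 + αs) := by gcongr
    _ = K * ((ρ * r₁) ^ d)⁻¹ * ‖x‖ ^ (1 + β) := by rw [h3]; ring

end
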